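/- arXiv:2508.13420 — 2 statements merged into one kernel-verified Lean document; each statement's English description precedes it below -/
import Mathlib

section
/- If x : ℕ → Fin 2 is recurrent and pattern Sturmian (p*_x(n) = 2n for all n ≥ 1), then x is uniformly recurrent and either x is a simple circle rotation coding sequence, or there exists a 1-hole Toeplitz sequence z such that x lies in the orbit closure of z. (This is Theorem A of the paper with the conclusion 'nearly simple Toeplitz subshift' weakened to '1-hole Toeplitz subshift'; every nearly simple Toeplitz subshift is a 1-hole Toeplitz subshift.) -/
open Set

abbrev Seq2 := ℕ → Fin 2

def patLang (x : Seq2) (τ : Finset ℕ) : Set ((s : τ) → Fin 2) :=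
  {w | ∃ m : ℕ, ∀ s : τ, w s = x (m + (s : ℕ))}

noncomputable def pstar (x : Seq2) (n : ℕ) : ℕ :=
  sSup {c : ℕ | ∃ τ : Finset ℕ, τ.card = n ∧ (patLang x τ).ncard = c}

def PatternSturmian (x : Seq2) : Prop := ∀ n : ℕ, 1 ≤ n → pstar x n = 2 * n

def Recurrent (x : Seq2) : Prop :=
  ∀ L : ℕ, ∃ M : ℕ, 1 ≤ M ∧ ∀ i < L, x i = x (M + i)

def Syndetic (S : Set ℕ) : Prop :=
  ∃ g : ℕ, ∀ n : ℕ, ∃ m ∈ S, n ≤ m ∧ m < n + g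

def UniformlyRecurrent (x : Seq2) : Prop :=
  ∀ L : ℕ, Syndetic {M : ℕ | 1 ≤ M ∧ ∀ i < L, x i = x (M + i)}

def orbitClosure (x : Seq2) : Set Seq2 :=
  closure {y : Seq2 | ∃ m : ℕ, y = fun n => x (m + n)}

abbrev T1 := AddCircle (1 : ℝ)

def IsArc (I : Set T1) : Prop :=
  ∃ a b : ℝ, b - a ≤ 1 ∧
    (I = (fun r : ℝ => (r : T1)) '' Set.Icc a b ∨
     I = (fun r : ℝ => (r : T1)) '' Set.Ico a b ∨
     I = (fun r : ℝ => (r : T1)) '' Set.Ioc a b ∨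
     I = (fun r : ℝ => (r : T1)) '' Set.Ioo a b)

/-- A simple circle rotation coding sequence: coding of an irrational rotation by a
partition of the circle into two disjoint nonempty intervals. -/
def SimpleCircleCoding (x : Seq2) : Prop :=
  ∃ (α : ℝ), Irrational α ∧ ∃ I : Fin 2 → Set T1,
    (∀ i, IsArc (I i)) ∧ (∀ i, (I i).Nonempty) ∧
    Disjoint (I 0) (I 1) ∧ I 0 ∪ I 1 = Set.univ ∧
    ∀ (n : ℕ) (i : Fin 2), x n = i ↔ (((n : ℝ) * α : ℝ) : T1) ∈ I i

def ToeplitzWith (nk : ℕ → ℕ) (z : Seq2) : Prop :=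
  (∀ k, 1 ≤ nk k ∧ nk k ∣ nk (k + 1) ∧ nk k < nk (k + 1)) ∧
  (∀ n : ℕ, ∃ k : ℕ, ∀ m : ℕ, m % nk k = n % nk k → z m = z n)

def MHoleToeplitz (m : ℕ) (z : Seq2) : Prop :=
  ∃ nk : ℕ → ℕ, ToeplitzWith nk z ∧
    ∀ k : ℕ,
      {j : ℕ | j < nk k ∧ ∃ m₁ m₂ : ℕ, m₁ % nk k = j ∧ m₂ % nk k = j ∧ z m₁ ≠ z m₂}.ncard = m

/-! ### Basic notions -/

def EE (x : Seq2) (V : Finset ℕ) (m n : ℕ) : Prop := ∀ s ∈ V, x (m + s) = x (n + s)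

def SepF (x : Seq2) (V T : Finset ℕ) : Prop := ∀ m ∈ T, ∀ n ∈ T, EE x V m n → m = n

def Bd (x : Seq2) : Prop :=
  ∀ V T : Finset ℕ, V.Nonempty → SepF x V T → T.card ≤ 2 * V.card

def Spl (x : Seq2) (V : Finset ℕ) (s m : ℕ) : Prop := ∃ m', EE x V m m' ∧ x (m + s) ≠ x (m' + s)

def Sat (x : Seq2) (V : Finset ℕ) : Prop :=
  ∀ s m1 m2 m3, Spl x V s m1 → Spl x V s m2 → Spl x V s m3 →
    EE x V m1 m2 ∨ EE x V m1 m3 ∨ EE x V m2 m3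

lemma EE.refl {x : Seq2} {V : Finset ℕ} (m : ℕ) : EE x V m m := fun _ _ => rfl
lemma EE.symm {x : Seq2} {V : Finset ℕ} {m n : ℕ} (h : EE x V m n) : EE x V n m :=
  fun s hs => (h s hs).symm
lemma EE.trans {x : Seq2} {V : Finset ℕ} {m n k : ℕ} (h : EE x V m n) (h' : EE x V n k) :
    EE x V m k := fun s hs => (h s hs).trans (h' s hs)
lemma EE.mono {x : Seq2} {V W : Finset ℕ} {m n : ℕ} (h : EE x V m n) (hW : W ⊆ V) :
    EE x W m n := fun s hs => h s (hW hs)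

lemma Spl.congr {x : Seq2} {V : Finset ℕ} {s m n : ℕ} (h : Spl x V s m) (e : EE x V m n) :
    Spl x V s n := by
  obtain ⟨m', h1, h2⟩ := h
  by_cases h3 : x (n + s) = x (m + s)
  · exact ⟨m', e.symm.trans h1, by rwa [h3]⟩
  · exact ⟨m, e.symm, h3⟩

lemma fin2_ne {a b c : Fin 2} (h : a ≠ b) (h' : c ≠ b) : a = c := by
  revert a b c; decide

lemma fin2_cases (a : Fin 2) : a = 0 ∨ a = 1 := by revert a; decide

lemma exists_sep_of_patLang (x : Seq2) (V : Finset ℕ) :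
    ∃ T, SepF x V T ∧ T.card = (patLang x V).ncard := by
  classical
  have hfin : (patLang x V).Finite := Set.toFinite _
  have : ∀ w : (V → Fin 2), ∃ m : ℕ, w ∈ patLang x V → ∀ s : V, w s = x (m + s) := by
    intro w
    by_cases h : w ∈ patLang x V
    · obtain ⟨m, hm⟩ := h
      exact ⟨m, fun _ => hm⟩
    · exact ⟨0, fun h' => absurd h' h⟩
  choose f hf using this
  have key : ∀ w ∈ patLang x V, ∀ w' ∈ patLang x V, EE x V (f w) (f w') → w = w' := by
    intro w hw w' hw' h
    funext s
    rw [hf w hw s, hf w' hw' s]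
    exact h s s.2
  refine ⟨hfin.toFinset.image f, ?_, ?_⟩
  · intro m hm n hn h
    simp only [Finset.mem_image, Set.Finite.mem_toFinset] at hm hn
    obtain ⟨w, hw, rfl⟩ := hm
    obtain ⟨w', hw', rfl⟩ := hn
    rw [key w hw w' hw' h]
  · rw [Finset.card_image_of_injOn, Set.ncard_eq_toFinset_card _ hfin]
    intro w hw w' hw' h
    simp only [Set.Finite.coe_toFinset] at hw hw'
    refine key w hw w' hw' ?_
    intro s _
    simp only [h]

lemma card_le_patLang (x : Seq2) (V T : Finset ℕ) (h : SepF x V T) :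
    T.card ≤ (patLang x V).ncard := by
  classical
  rw [← Set.ncard_coe_finset T]
  refine Set.ncard_le_ncard_of_injOn (fun m => (fun s : V => x (m + s))) ?_ ?_ (Set.toFinite _)
  · intro m _
    exact ⟨m, fun _ => rfl⟩
  · intro m hm n hn hmn
    refine h m hm n hn ?_
    intro s hs
    exact congrFun hmn ⟨s, hs⟩

lemma pstar_bdd (x : Seq2) (n : ℕ) :
    BddAbove {c : ℕ | ∃ τ : Finset ℕ, τ.card = n ∧ (patLang x τ).ncard = c} := by
  refine ⟨2 ^ n, ?_⟩
  rintro c ⟨τ, hτ, rfl⟩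
  calc (patLang x τ).ncard ≤ Nat.card (τ → Fin 2) := Set.ncard_le_card _
    _ = 2 ^ n := by simp [hτ]

lemma Bd_of_ps {x : Seq2} (h : PatternSturmian x) : Bd x := by
  intro V T hV hT
  refine (card_le_patLang x V T hT).trans ?_
  rw [← h V.card (Finset.card_pos.mpr hV)]
  exact le_csSup (pstar_bdd x _) ⟨V, rfl, rfl⟩

lemma opt_of_ps {x : Seq2} (h : PatternSturmian x) (n : ℕ) (hn : 1 ≤ n) :
    ∃ V T : Finset ℕ, V.card = n ∧ SepF x V T ∧ T.card = 2 * n := by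
  have := Nat.sSup_mem (s := {c : ℕ | ∃ τ : Finset ℕ, τ.card = n ∧ (patLang x τ).ncard = c})
    ⟨_, Finset.range n, by simp, rfl⟩ (pstar_bdd x n)
  obtain ⟨V, hV, hc⟩ := this
  obtain ⟨T, hT, hTc⟩ := exists_sep_of_patLang x V
  refine ⟨V, T, hV, hT, ?_⟩
  rw [hTc, hc]
  exact h n hn

/-- a finite upper bound for separated sets -/
lemma sep_card_le_pow (x : Seq2) (V T : Finset ℕ) (h : SepF x V T) : T.card ≤ 2 ^ V.card := by
  refine (card_le_patLang x V T h).trans ?_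
  calc (patLang x V).ncard ≤ Nat.card (V → Fin 2) := Set.ncard_le_card _
    _ = 2 ^ V.card := by simp

lemma nep_of_ps {x : Seq2} (h : PatternSturmian x) (g : ℕ) (hg : 1 ≤ g) (N : ℕ) :
    ∃ m ≥ N, x m ≠ x (m + g) := by
  by_contra hcon
  push Not at hcon
  have h2 : ∀ k m, N ≤ m → x (m + k * g) = x m := by
    intro k
    induction k with
    | zero => intro m _; simp
    | succ k ih =>
      intro m hm
      rw [show m + (k + 1) * g = m + k * g + g by ring, ← hcon (m + k * g) (by omega)]
      exact ih m hm
  obtain ⟨V, T, hV, hT, hc⟩ := opt_of_ps h (N + g) (by omega)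
  have : T.card ≤ N + g := by
    rw [← Finset.card_range (N + g)]
    refine Finset.card_le_card_of_injOn
      (fun m => if m < N then m else N + (m - N) % g) ?_ ?_
    · intro m _
      have := Nat.mod_lt (m - N) hg
      simp only [Finset.coe_range, Set.mem_Iio]
      split_ifs <;> omega
    · intro m hm n hn hmn
      refine hT m hm n hn ?_
      dsimp only at hmn
      split_ifs at hmn with h1 h3 h3
      · rw [hmn]; exact EE.refl _
      · omega
      · omega
      · intro s _
        have e1 := Nat.div_add_mod (m - N) g
        have e2 := Nat.div_add_mod (n - N) g
        have e3 : m + s = (N + (m - N) % g + s) + ((m - N) / g) * g := by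
          rw [mul_comm]; omega
        have e4 : n + s = (N + (m - N) % g + s) + ((n - N) / g) * g := by
          rw [mul_comm]; omega
        rw [e3, e4, h2 _ _ (by omega), h2 _ _ (by omega)]
  omega

lemma exists_complete (x : Seq2) (V T : Finset ℕ) (h : SepF x V T) :
    ∃ T', T ⊆ T' ∧ SepF x V T' ∧ ∀ m, ∃ r ∈ T', EE x V m r := by
  classical
  by_contra hcon
  push Not at hcon
  have : ∀ k, ∃ T', T ⊆ T' ∧ SepF x V T' ∧ T.card + k ≤ T'.card := by
    intro k
    induction k with
    | zero => exact ⟨T, le_rfl, h, by simp⟩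
    | succ k ih =>
      obtain ⟨T', h1, h2, h3⟩ := ih
      obtain ⟨m, hm⟩ := hcon T' h1 h2
      have hmT : m ∉ T' := fun hh => hm m hh (EE.refl _)
      refine ⟨insert m T', h1.trans (Finset.subset_insert _ _), ?_, ?_⟩
      · intro a ha b hb hab
        rcases Finset.mem_insert.mp ha with ha1 | ha1
        · rcases Finset.mem_insert.mp hb with hb1 | hb1
          · rw [ha1, hb1]
          · rw [ha1] at hab
            exact absurd hab (hm b hb1)
        · rcases Finset.mem_insert.mp hb with hb1 | hb1
          · rw [hb1] at hab
            exact absurd hab.symm (hm a ha1)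
          · exact h2 a ha1 b hb1 hab
      · rw [Finset.card_insert_of_notMem hmT]; omega
  obtain ⟨T', _, h2, h3⟩ := this (2 ^ V.card + 1)
  have := sep_card_le_pow x V T' h2
  omega

lemma ext_sep {x : Seq2} {V T D : Finset ℕ} {s : ℕ} (hT : SepF x V T)
    (hcomp : ∀ m, ∃ r ∈ T, EE x V m r) (hD : SepF x V D) (hs : ∀ d ∈ D, Spl x V s d) :
    ∃ T', SepF x (insert s V) T' ∧ T'.card = T.card + D.card := by
  classical
  choose r hr hrE using hcomp
  have h1 : ∀ d, ∃ n, d ∈ D → EE x V n d ∧ x (n + s) ≠ x (r d + s) := by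
    intro d
    by_cases hd : d ∈ D
    · obtain ⟨m', h1, h2⟩ := (hs d hd).congr (hrE d)
      refine ⟨m', fun _ => ⟨h1.symm.trans (hrE d).symm, fun h => h2 h.symm⟩⟩
    · exact ⟨0, fun h => absurd h hd⟩
  choose n hn using h1
  have hinj : Set.InjOn n D := by
    intro d hd d' hd' h
    refine hD d hd d' hd' ?_
    refine (hn d hd).1.symm.trans ?_
    rw [h]
    exact (hn d' hd').1
  have hcross : ∀ t ∈ T, ∀ d ∈ D, ¬ EE x (insert s V) t (n d) := by
    intro t ht d hd h
    have e1 : EE x V t (r d) :=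
      (h.mono (Finset.subset_insert _ _)).trans ((hn d hd).1.trans (hrE d))
    have e2 := hT t ht (r d) (hr d) e1
    have e3 := h s (Finset.mem_insert_self _ _)
    rw [e2] at e3
    exact (hn d hd).2 e3.symm
  refine ⟨T ∪ D.image n, ?_, ?_⟩
  · intro a ha b hb hab
    rcases Finset.mem_union.mp ha with ha | ha
    · rcases Finset.mem_union.mp hb with hb | hb
      · exact hT a ha b hb (hab.mono (Finset.subset_insert _ _))
      · obtain ⟨d, hd, rfl⟩ := Finset.mem_image.mp hb
        exact absurd hab (hcross a ha d hd)
    · obtain ⟨d, hd, rfl⟩ := Finset.mem_image.mp ha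
      rcases Finset.mem_union.mp hb with hb | hb
      · exact absurd hab.symm (hcross b hb d hd)
      · obtain ⟨d', hd', rfl⟩ := Finset.mem_image.mp hb
        have := hD d hd d' hd' ((hn d hd).1.symm.trans
          ((hab.mono (Finset.subset_insert _ _)).trans (hn d' hd').1))
        rw [this]
  · rw [Finset.card_union_of_disjoint, Finset.card_image_of_injOn hinj]
    rw [Finset.disjoint_left]
    intro a ha hb
    obtain ⟨d, hd, rfl⟩ := Finset.mem_image.mp hb
    exact hcross _ ha d hd (EE.refl _)

lemma Spl.notMem {x : Seq2} {V : Finset ℕ} {s m : ℕ} (h : Spl x V s m) : s ∉ V := by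
  obtain ⟨m', h1, h2⟩ := h
  exact fun hs => h2 (h1 s hs)

lemma not_sat_ext {x : Seq2} {V T : Finset ℕ} (hT : SepF x V T) (h : ¬ Sat x V) :
    ∃ s T', s ∉ V ∧ SepF x (insert s V) T' ∧ T.card + 3 ≤ T'.card := by
  classical
  unfold Sat at h
  push Not at h
  obtain ⟨s, m1, m2, m3, h1, h2, h3, e12, e13, e23⟩ := h
  obtain ⟨T1, hs1, hT1, hc1⟩ := exists_complete x V T hT
  have n12 : m1 ≠ m2 := fun h => e12 (h ▸ EE.refl _)
  have n13 : m1 ≠ m3 := fun h => e13 (h ▸ EE.refl _)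
  have n23 : m2 ≠ m3 := fun h => e23 (h ▸ EE.refl _)
  obtain ⟨T', hT', hcard⟩ := ext_sep (D := {m1, m2, m3}) (s := s) hT1 hc1 (by
    intro a ha b hb hab
    simp only [Finset.mem_insert, Finset.mem_singleton] at ha hb
    rcases ha with rfl | rfl | rfl <;> rcases hb with rfl | rfl | rfl <;>
      first
      | rfl
      | (exact absurd hab ‹_›)
      | (exact absurd hab.symm ‹_›)) (by
    intro d hd
    simp only [Finset.mem_insert, Finset.mem_singleton] at hd
    rcases hd with rfl | rfl | rfl <;> assumption)
  refine ⟨s, T', h1.notMem, hT', ?_⟩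
  have : ({m1, m2, m3} : Finset ℕ).card = 3 := Finset.card_eq_three.mpr ⟨_, _, _, n12, n13, n23, rfl⟩
  have := Finset.card_le_card hs1
  omega

lemma sat_of_opt {x : Seq2} (hB : Bd x) {V T : Finset ℕ} (hT : SepF x V T)
    (hc : 2 * V.card ≤ T.card) : Sat x V := by
  by_contra h
  obtain ⟨s, T', hs, hT', hc'⟩ := not_sat_ext hT h
  have := hB _ T' (Finset.insert_nonempty s V) hT'
  rw [Finset.card_insert_of_notMem hs] at this
  omega

lemma exists_sat {x : Seq2} (hB : Bd x) (V : Finset ℕ) : ∃ V', V ⊆ V' ∧ Sat x V' := by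
  by_contra hcon
  push Not at hcon
  have : ∀ k, ∃ V' T', V ⊆ V' ∧ V'.card = V.card + k ∧ SepF x V' T' ∧ 3 * k ≤ T'.card := by
    intro k
    induction k with
    | zero => exact ⟨V, ∅, le_rfl, rfl, by intro m hm; simp at hm, by simp⟩
    | succ k ih =>
      obtain ⟨V', T', h1, h2, h3, h4⟩ := ih
      obtain ⟨s, T2, hs, hT2, hc⟩ := not_sat_ext h3 (hcon V' h1)
      refine ⟨insert s V', T2, h1.trans (Finset.subset_insert _ _), ?_, hT2, by omega⟩
      rw [Finset.card_insert_of_notMem hs]; omega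
  obtain ⟨V', T', _, h2, h3, h4⟩ := this (2 * V.card + 1)
  have := hB V' T' (Finset.card_pos.mp (by omega)) h3
  omega

/-- word agreement -/
abbrev EW (x : Seq2) (L m n : ℕ) : Prop := EE x (Finset.range L) m n

lemma EW_iff {x : Seq2} {L m n : ℕ} : EW x L m n ↔ ∀ i < L, x (m + i) = x (n + i) := by
  simp [EE]

lemma EW.sub {x : Seq2} {L m n : ℕ} (h : EW x L m n) {L' k : ℕ} (hk : k + L' ≤ L) :
    EW x L' (m + k) (n + k) := by
  rw [EW_iff] at *
  intro i hi
  have := h (k + i) (by omega)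
  rwa [← add_assoc, ← add_assoc] at this

lemma EW.EE {x : Seq2} {L m n : ℕ} (h : EW x L m n) {V : Finset ℕ} {k : ℕ}
    (hk : ∀ s ∈ V, k + s < L) : EE x V (m + k) (n + k) := by
  rw [EW_iff] at h
  intro s hs
  have := h (k + s) (hk s hs)
  rwa [← add_assoc, ← add_assoc] at this

lemma exists_bound (V : Finset ℕ) : ∃ M, ∀ s ∈ V, s < M :=
  ⟨V.sup id + 1, fun _ hs => Nat.lt_succ_of_le (Finset.le_sup (f := id) hs)⟩

/-- Δ-lemma -/
lemma delta_returns {x : Seq2} (hrec : Recurrent x) (L : ℕ) :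
    ∃ n : ℕ → ℕ, StrictMono n ∧ ∀ i j, i < j → EW x L 0 (n j - n i) := by
  -- build increments: r (k+1) is a return of length ≥ L + sum of previous
  have hr : ∀ A : ℕ, ∃ M, 1 ≤ M ∧ ∀ i < L + A, x i = x (M + i) := fun A => hrec (L + A)
  choose R hR1 hR2 using hr
  let n : ℕ → ℕ := fun k => Nat.rec 0 (fun _ p => p + R p) k
  have hn : ∀ k, n (k + 1) = n k + R (n k) := fun k => rfl
  have hmono : StrictMono n := strictMono_nat_of_lt_succ (fun k => by
    rw [hn]; have := hR1 (n k); omega)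
  refine ⟨n, hmono, ?_⟩
  -- n j - n i = sum of increments; induct on i downward : claim EW (L + n i) 0 (n j - n i)
  have key : ∀ d i, EW x (L + n i) 0 (n (i + d + 1) - n i) := by
    intro d
    induction d with
    | zero =>
      intro i
      rw [EW_iff]
      intro k hk
      have : n (i + 0 + 1) - n i = R (n i) := by rw [add_zero, hn]; omega
      rw [this, zero_add]
      exact hR2 _ k hk
    | succ d ih =>
      intro i
      have h1 := ih (i + 1)
      rw [EW_iff] at h1 ⊢
      intro k hk
      have e1 := hR2 (n i) k hk
      have e2 := h1 (R (n i) + k) (by rw [hn]; omega)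
      have m1 := hmono.monotone (show i + 1 ≤ i + (d + 1) + 1 by omega)
      have hni := hn i
      rw [zero_add, e1]
      rw [zero_add] at e2
      rw [e2]
      congr 1
      rw [show i + 1 + d + 1 = i + (d + 1) + 1 by ring]
      omega
  intro i j hij
  obtain ⟨d, rfl⟩ := Nat.exists_eq_add_of_lt hij
  exact (key d i).mono (by intro a; simp; omega)

def NLP (x : Seq2) : Prop := ∀ g ≥ 1, ∃ G, ∀ a, ∃ i < G, x (a + i) ≠ x (a + i + g)

lemma strictMono_gap {n : ℕ → ℕ} (hn : StrictMono n) (i d : ℕ) : n i + d ≤ n (i + d) := by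
  induction d with
  | zero => simp
  | succ d ih =>
    have := hn (show i + d < i + (d + 1) by omega)
    omega

lemma ret_div {x : Seq2} (hrec : Recurrent x) (L B g : ℕ) (hg : 1 ≤ g) :
    ∃ t ≥ B, g ∣ t ∧ EW x L 0 t := by
  obtain ⟨n, hn, hr⟩ := delta_returns hrec L
  have : ∃ k l : ℕ, k < l ∧ n (k * (B + 1)) % g = n (l * (B + 1)) % g := by
    obtain ⟨k, l, hne, h⟩ := Finite.exists_ne_map_eq_of_infinite
      (fun k : ℕ => (⟨n (k * (B + 1)) % g, Nat.mod_lt _ hg⟩ : Fin g))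
    simp only [Fin.mk.injEq] at h
    rcases lt_or_gt_of_ne hne with h1 | h1
    · exact ⟨k, l, h1, h⟩
    · exact ⟨l, k, h1, h.symm⟩
  obtain ⟨k, l, hkl, h⟩ := this
  obtain ⟨d, rfl⟩ := Nat.exists_eq_add_of_lt hkl
  have e : (k + d + 1) * (B + 1) = k * (B + 1) + (d * (B + 1) + (B + 1)) := by ring
  have h3 := strictMono_gap hn (k * (B + 1)) (d * (B + 1) + (B + 1))
  rw [← e] at h3
  refine ⟨n ((k + d + 1) * (B + 1)) - n (k * (B + 1)), ?_, ?_, ?_⟩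
  · show B ≤ _
    have : 0 ≤ d * (B + 1) := Nat.zero_le _
    omega
  · exact (Nat.modEq_iff_dvd' (by omega)).mp h
  · exact hr _ _ (by nlinarith)

lemma invariant_iter {x : Seq2} {V : Finset ℕ} {m t : ℕ}
    (h : ∀ m', EE x V m m' → EE x V m (m' + t)) (j : ℕ) : EE x V m (m + j * t) := by
  induction j with
  | zero => simpa using EE.refl _
  | succ j ih =>
    have := h _ ih
    rwa [show m + j * t + t = m + (j + 1) * t by ring] at this

/-- an atom which is not split by `s + t` and returns under `t` is `t`-invariant -/
lemma atom_invariant {x : Seq2} {V : Finset ℕ} {m t : ℕ} (h0 : EE x V m (m + t))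
    (h : ∀ s ∈ V, ¬ Spl x V (s + t) m) (j : ℕ) : EE x V m (m + j * t) := by
  refine invariant_iter ?_ j
  intro m' hm' s hs
  have h1 := h s hs
  unfold Spl at h1
  push Not at h1
  have h2 := h1 m' hm'
  rw [h0 s hs, show m + t + s = m + (s + t) by ring, h2]
  congr 1
  ring

lemma nlp_of_ps {x : Seq2} (hrec : Recurrent x) (hps : PatternSturmian x) : NLP x := by
  classical
  intro g hg
  by_contra hcon
  push Not at hcon
  choose A hA using hcon
  obtain ⟨w, hw⟩ := Finite.exists_infinite_fiber (fun G : ℕ => (fun i : Fin g => x (A G + i)))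
  have hw' := Set.infinite_coe_iff.mp hw
  set y : ℕ → Fin 2 := fun i => w ⟨i % g, Nat.mod_lt _ hg⟩ with hy
  have hyp : ∀ i j, i % g = j % g → y i = y j := by
    intro i j hij
    simp only [hy, hij]
  have hyg : ∀ i, y (i + g) = y i := fun i => hyp _ _ (by simp)
  have hstr : ∀ G, ∃ a, ∀ i < G, x (a + i) = y i := by
    intro G
    obtain ⟨G', hG', hGG⟩ := hw'.exists_gt G
    refine ⟨A G', ?_⟩
    have hfg : ∀ i : Fin g, x (A G' + i) = w i := fun i => congrFun hG' i
    intro i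
    induction i using Nat.strong_induction_on with
    | _ i ih =>
      intro hi
      by_cases hig : i < g
      · have := hfg ⟨i, hig⟩
        simp only at this
        rw [this]
        simp only [hy, Nat.mod_eq_of_lt hig]
      · have h1 := ih (i - g) (by omega) (by omega)
        have h2 := hA G' (i - g) (by omega)
        rw [show i = i - g + g by omega, hyg, ← h1, h2]
        congr 1; omega
  have hB := Bd_of_ps hps
  obtain ⟨τ, T0, hτ, hT0, hc0⟩ := opt_of_ps hps (g + 1) (by omega)
  obtain ⟨T, hTT, hT, _⟩ := exists_complete x τ T0 hT0
  have hTc : 2 * (g + 1) ≤ T.card := hc0 ▸ Finset.card_le_card hTT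
  have hsat : Sat x τ := sat_of_opt hB hT (by rw [hτ]; exact hTc)
  obtain ⟨M, hM⟩ := exists_bound τ
  obtain ⟨K, hK⟩ := exists_bound T
  obtain ⟨t, htB, htg, htr⟩ := ret_div hrec (K + M) (M + 1) g hg
  let QA : ℕ → Prop := fun m => ∃ i < g, ∀ s ∈ τ, x (m + s) = y (i + s)
  have hQA : ∀ m i, (∀ s ∈ τ, x (m + s) = y (i + s)) → QA m := by
    intro m i h
    refine ⟨i % g, Nat.mod_lt _ hg, fun s hs => ?_⟩
    rw [h s hs]
    exact hyp _ _ (by simp)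
  have hQcongr : ∀ m m', EE x τ m m' → QA m → QA m' := by
    rintro m m' h ⟨i, hi, h'⟩
    exact ⟨i, hi, fun s hs => by rw [← h s hs]; exact h' s hs⟩
  have hsplit : ∀ s ∈ τ, ∃ m, QA m ∧ Spl x τ (s + t) m := by
    intro s hs
    have hsM := hM s hs
    obtain ⟨a, ha⟩ := hstr (s + t + 2 * g + 1)
    have hex : ∃ b, x (a + b) ≠ x (a + b + g) := by
      obtain ⟨m, hm, hne⟩ := nep_of_ps hps g hg a
      refine ⟨m - a, ?_⟩
      rwa [show a + (m - a) = m by omega]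
    let b := Nat.find hex
    have hb : x (a + b) ≠ x (a + b + g) := Nat.find_spec hex
    have hbmin : ∀ i < b, x (a + i) = x (a + i + g) := fun i hi => by
      have := Nat.find_min hex hi
      push Not at this
      exact this
    have hball : ∀ i < b + g, x (a + i) = y i := by
      intro i
      induction i using Nat.strong_induction_on with
      | _ i ih =>
        intro hi
        by_cases hig : i < g
        · exact ha i (by omega)
        · have h1 := ih (i - g) (by omega) (by omega)
          have h2 := hbmin (i - g) (by omega)
          rw [show i = i - g + g by omega, hyg, ← h1, h2]
          congr 1; omega
    have hbs : s + t ≤ b := by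
      by_contra hlt
      apply hb
      rw [ha b (by omega), add_assoc, ha (b + g) (by omega), hyg]
    obtain ⟨c, hc⟩ := Nat.exists_eq_add_of_le hbs
    refine ⟨a + c, hQA _ c ?_, a + c + g, ?_, ?_⟩
    · intro s' hs'
      have := hM s' hs'
      rw [add_assoc]
      exact hball _ (by omega)
    · intro s' hs'
      have := hM s' hs'
      rw [add_assoc, hball _ (by omega), show a + c + g + s' = a + (c + s' + g) by ring,
        hball _ (by omega), hyg]
    · rw [show a + c + (s + t) = a + b by omega, show a + c + g + (s + t) = a + b + g by omega]
      exact hb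
  have hnon : ∀ m ∈ T, ¬ QA m → ∃ s ∈ τ, Spl x τ (s + t) m := by
    intro m hm hq
    by_contra hno
    push Not at hno
    have hmt : EE x τ m (m + t) := by
      have := htr.EE (V := τ) (k := m) (fun s hs => by
        have := hM s hs; have := hK m hm; omega)
      rwa [zero_add, add_comm t m] at this
    have hinv := atom_invariant hmt hno
    obtain ⟨a, ha⟩ := hstr (m + t + M)
    have h1 := Nat.div_add_mod a t
    have h2 := Nat.mod_lt a (show 0 < t by omega)
    have h3 := hinv (a / t + 1)
    apply hq
    refine hQcongr _ _ h3.symm (hQA _ (m + t - a % t) ?_)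
    intro s hs
    have := hM s hs
    rw [show m + (a / t + 1) * t + s = a + (m + t - a % t + s) by
      rw [add_mul, mul_comm (a / t) t]; omega]
    exact ha _ (by omega)
  have c1 : (T.filter QA).card ≤ g := by
    have : ∀ m, ∃ i, QA m → i < g ∧ ∀ s ∈ τ, x (m + s) = y (i + s) := by
      intro m
      by_cases h : QA m
      · obtain ⟨i, hi⟩ := h
        exact ⟨i, fun _ => hi⟩
      · exact ⟨0, fun h' => absurd h' h⟩
    choose f hf using this
    refine (Finset.card_le_card_of_injOn f (t := Finset.range g) ?_ ?_).trans (by simp)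
    · intro m hm
      have := (Finset.mem_filter.mp hm).2
      simpa using (hf m this).1
    · intro m hm m' hm' he
      have h1 := (Finset.mem_filter.mp hm)
      have h2 := (Finset.mem_filter.mp hm')
      refine hT m h1.1 m' h2.1 ?_
      intro s hs
      rw [(hf m h1.2).2 s hs, (hf m' h2.2).2 s hs, he]
  have c2 : (T.filter (fun m => ¬ QA m)).card ≤ g + 1 := by
    have : ∀ m, ∃ s, m ∈ T ∧ ¬ QA m → s ∈ τ ∧ Spl x τ (s + t) m := by
      intro m
      by_cases h : m ∈ T ∧ ¬ QA m
      · obtain ⟨s, hs⟩ := hnon m h.1 h.2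
        exact ⟨s, fun _ => hs⟩
      · exact ⟨0, fun h' => absurd h' h⟩
    choose f hf using this
    rw [← hτ]
    refine Finset.card_le_card_of_injOn f ?_ ?_
    · intro m hm
      exact (hf m (Finset.mem_filter.mp hm)).1
    · intro m hm m' hm' he
      have h1 := (Finset.mem_filter.mp hm)
      have h2 := (Finset.mem_filter.mp hm')
      obtain ⟨q, hq1, hq2⟩ := hsplit (f m) (hf m h1).1
      rcases hsat _ m m' q (hf m h1).2 (he ▸ (hf m' h2).2) hq2 with h | h | h
      · exact hT m h1.1 m' h2.1 h
      · exact absurd (hQcongr _ _ h.symm hq1) h1.2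
      · exact absurd (hQcongr _ _ h.symm hq1) h2.2
  have := Finset.card_filter_add_card_filter_not (s := T) QA
  omega

lemma ud_of_nlp {x : Seq2} (h : NLP x) (t : ℕ) (ht : 1 ≤ t) (v : Fin 2) :
    ∃ G, ∀ a, ∃ i < G, x (a + i) = v ∧ x (a + i + t) ≠ v := by
  obtain ⟨G0, hG0⟩ := h t ht
  refine ⟨(t + 1) * G0, fun a => ?_⟩
  by_contra hcon
  push Not at hcon
  have hb : ∀ k : Fin (t + 1), ∃ i < G0, x (a + k * G0 + i) ≠ x (a + k * G0 + i + t) :=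
    fun k => hG0 _
  choose f hf1 hf2 using hb
  have hpos : ∀ k : Fin (t + 1), (k : ℕ) * G0 + f k < (t + 1) * G0 := by
    intro k
    have h1 := hf1 k
    have h2 : ((k : ℕ) + 1) * G0 ≤ (t + 1) * G0 := Nat.mul_le_mul_right _ (by omega)
    rw [add_mul, one_mul] at h2
    omega
  have hstay : ∀ k p, p + k * t < (t + 1) * G0 → x (a + p) = v → x (a + p + k * t) = v := by
    intro k
    induction k with
    | zero => intro p _ h; simpa using h
    | succ k ih =>
      intro p hp hx
      have e1 : p + (k + 1) * t = p + k * t + t := by ring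
      have h1 := ih p (by omega) hx
      have h2 := hcon (p + k * t) (by omega) (by rw [← add_assoc]; exact h1)
      rw [← h2]
      congr 1
      ring
  obtain ⟨k, l, hne, hkl⟩ := Fintype.exists_ne_map_eq_of_card_lt
    (fun k : Fin (t + 1) => (⟨((k : ℕ) * G0 + f k) % t, Nat.mod_lt _ ht⟩ : Fin t)) (by simp)
  wlog hlt : k < l generalizing k l
  · exact this l k hne.symm hkl.symm (lt_of_le_of_ne (not_lt.mp hlt) hne.symm)
  simp only [Fin.mk.injEq] at hkl
  have hlt' : (k : ℕ) + 1 ≤ l := hlt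
  have hpq : (k : ℕ) * G0 + f k < l * G0 + f l := by
    have h1 := hf1 k
    have h2 : ((k : ℕ) + 1) * G0 ≤ l * G0 := Nat.mul_le_mul_right _ hlt'
    rw [add_mul, one_mul] at h2
    omega
  have hp := hf2 k
  have hq := hf2 l
  have hpp := hpos k
  have hqq := hpos l
  rw [add_assoc] at hp hq
  generalize (k : ℕ) * G0 + f k = p at *
  generalize (l : ℕ) * G0 + f l = q at *
  have hpv : x (a + p + t) = v := by
    by_contra hh
    by_cases h1 : x (a + p) = v
    · exact hh (hcon p hpp h1)
    · exact hp (fin2_ne h1 (fun h => hh h))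
  obtain ⟨d, hd⟩ := (Nat.modEq_iff_dvd' hpq.le).mp hkl
  have hd1 : 1 ≤ d := by
    rcases Nat.eq_zero_or_pos d with h0 | h0
    · rw [h0] at hd; omega
    · exact h0
  have hqp : q = (p + t) + (d - 1) * t := by
    obtain ⟨e, rfl⟩ : ∃ e, d = e + 1 := ⟨d - 1, by omega⟩
    have : q = p + t * (e + 1) := by omega
    rw [this]
    simp
    ring
  have hqv : x (a + q) = v := by
    have := hstay (d - 1) (p + t) (by omega) (by rw [← add_assoc]; exact hpv)
    rw [hqp, ← add_assoc]
    exact this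
  exact hq (by rw [hqv, hcon q hqq hqv])

lemma ur_of_ps {x : Seq2} (hrec : Recurrent x) (hps : PatternSturmian x) :
    UniformlyRecurrent x := by
  classical
  have hnlp := nlp_of_ps hrec hps
  have hB := Bd_of_ps hps
  intro L
  by_contra hns
  unfold Syndetic at hns
  push Not at hns
  obtain ⟨V, hLV, hsat⟩ := exists_sat hB (Finset.range L)
  have hfree : ∀ G, ∃ a, ∀ i < G, ¬ EE x V 0 (a + i) := by
    intro G
    obtain ⟨n, hn⟩ := hns (G + 1)
    refine ⟨n + 1, fun i hi he => ?_⟩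
    have h2 := hn (n + 1 + i) ⟨by omega, ?_⟩ (by omega)
    · omega
    · intro j hj
      have := he j (hLV (Finset.mem_range.mpr hj))
      rwa [zero_add] at this
  obtain ⟨T, _, hT, hcomp⟩ := exists_complete x V ∅ (by intro m hm; simp at hm)
  let Pr : Finset ℕ → Prop := fun Q =>
    (∀ q ∈ Q, ¬ EE x V 0 q) ∧ ∀ G, ∃ a, ∀ i < G, ∃ q ∈ Q, EE x V (a + i) q
  have hPr0 : Pr (T.filter (fun q => ¬ EE x V 0 q)) := by
    refine ⟨fun q hq => (Finset.mem_filter.mp hq).2, fun G => ?_⟩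
    obtain ⟨a, ha⟩ := hfree G
    refine ⟨a, fun i hi => ?_⟩
    obtain ⟨r, hr, hre⟩ := hcomp (a + i)
    exact ⟨r, Finset.mem_filter.mpr ⟨hr, fun h => ha i hi (h.trans hre.symm)⟩, hre⟩
  have hexc : ∃ c, ∃ Q, Pr Q ∧ Q.card = c := ⟨_, _, hPr0, rfl⟩
  obtain ⟨Q, hQ, hQc⟩ := Nat.find_spec hexc
  have hmin : ∀ q ∈ Q, ∃ G, ∀ a, ∃ i < G, ∀ q' ∈ Q.erase q, ¬ EE x V (a + i) q' := by
    intro q hq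
    by_contra hcon
    push Not at hcon
    refine Nat.find_min hexc (m := (Q.erase q).card) ?_ ⟨Q.erase q, ⟨?_, hcon⟩, rfl⟩
    · rw [← hQc]; exact Finset.card_erase_lt_of_mem hq
    · exact fun q' hq' => hQ.1 q' (Finset.mem_of_mem_erase hq')
  have : ∀ q, ∃ G, q ∈ Q → ∀ a, ∃ i < G, ∀ q' ∈ Q.erase q, ¬ EE x V (a + i) q' := by
    intro q
    by_cases hq : q ∈ Q
    · obtain ⟨G, hG⟩ := hmin q hq
      exact ⟨G, fun _ => hG⟩
    · exact ⟨0, fun h => absurd h hq⟩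
  choose Gq hGq using this
  obtain ⟨M, hM⟩ := exists_bound V
  obtain ⟨i0, hi0⟩ := hQ.2 (Q.sup Gq)
  have hall : ∀ q ∈ Q, ∃ i < Q.sup Gq, EE x V (i0 + i) q := by
    intro q hq
    obtain ⟨i, hi, hi'⟩ := hGq q hq i0
    have hi2 : i < Q.sup Gq := lt_of_lt_of_le hi (Finset.le_sup hq)
    obtain ⟨q', hq', he⟩ := hi0 i hi2
    by_cases hqq : q' = q
    · exact ⟨i, hi2, hqq ▸ he⟩
    · exact absurd he (hi' q' (Finset.mem_erase.mpr ⟨hqq, hq'⟩))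
  obtain ⟨t, ht1, ht⟩ := hrec (i0 + Q.sup Gq + M)
  have h0t : EE x V 0 (0 + t) := by
    intro s hs
    have := ht s (by have := hM s hs; omega)
    rwa [zero_add, zero_add]
  have hns : ∀ s ∈ V, ¬ Spl x V (s + t) 0 := by
    intro s hs hspl
    have hfl : ∀ v : Fin 2, ∃ m, (∃ q ∈ Q, EE x V m q) ∧ x (m + s) = v ∧ Spl x V (s + t) m := by
      intro v
      obtain ⟨G, hG⟩ := ud_of_nlp hnlp t ht1 v
      obtain ⟨a, ha⟩ := hQ.2 G
      obtain ⟨i, hi, hi1, hi2⟩ := hG (a + s)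
      obtain ⟨q, hq, hqe⟩ := ha i hi
      have hv : x (a + i + s) = v := by rw [← hi1]; congr 1; ring
      refine ⟨a + i, ⟨q, hq, hqe⟩, hv, ?_⟩
      obtain ⟨j, hj, hje⟩ := hall q hq
      refine ⟨i0 + j, hqe.trans hje.symm, ?_⟩
      have e1 := hqe.trans hje.symm s hs
      have e2 := ht (i0 + j + s) (by have := hM s hs; omega)
      have e3 : x (i0 + j + (s + t)) = v := by
        rw [← hv, e1, e2]; congr 1; ring
      rw [e3, show a + i + (s + t) = a + s + i + t by ring]
      exact hi2
    obtain ⟨m0, ⟨q0, hq0, he0⟩, hv0, hs0⟩ := hfl 0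
    obtain ⟨m1, ⟨q1, hq1, he1⟩, hv1, hs1⟩ := hfl 1
    rcases hsat _ 0 m0 m1 hspl hs0 hs1 with h | h | h
    · exact hQ.1 _ hq0 (h.trans he0)
    · exact hQ.1 _ hq1 (h.trans he1)
    · have := h s hs
      rw [hv0, hv1] at this
      exact absurd this (by decide)
  have hinv := atom_invariant h0t hns
  obtain ⟨a, ha⟩ := hfree (t + 1)
  have h1 := Nat.div_add_mod a t
  have h2 := Nat.mod_lt a (show 0 < t by omega)
  refine ha (t - a % t) (by omega) ?_
  have := hinv (a / t + 1)
  rw [add_mul, mul_comm (a / t) t] at this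
  convert this using 1
  omega

structure Good (x : Seq2) : Prop where
  ur : UniformlyRecurrent x
  nper : ∀ g ≥ 1, ∃ m, x m ≠ x (m + g)
  bd : Bd x

lemma UniformlyRecurrent.rec {x : Seq2} (h : UniformlyRecurrent x) : Recurrent x := by
  intro L
  obtain ⟨g, hg⟩ := h L
  obtain ⟨m, hm, _⟩ := hg 0
  exact ⟨m, hm.1, hm.2⟩

lemma UniformlyRecurrent.word {x : Seq2} (h : UniformlyRecurrent x) (V : Finset ℕ) :
    ∃ K, ∀ m a, ∃ i < K, EE x V (a + i) m := by
  obtain ⟨M, hM⟩ := exists_bound V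
  obtain ⟨T, _, hT, hcomp⟩ := exists_complete x V ∅ (by intro m hm; simp at hm)
  have : ∀ r, ∃ K, ∀ a, ∃ i < K, EE x V (a + i) r := by
    intro r
    obtain ⟨g, hg⟩ := h (r + M)
    refine ⟨g + r, fun a => ?_⟩
    obtain ⟨m, hm, h1, h2⟩ := hg a
    refine ⟨m + r - a, by omega, ?_⟩
    intro s hs
    have := hm.2 (r + s) (by have := hM s hs; omega)
    rw [this]
    congr 1
    omega
  choose K hK using this
  refine ⟨T.sup K, fun m a => ?_⟩
  obtain ⟨r, hr, hre⟩ := hcomp m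
  obtain ⟨i, hi, hi2⟩ := hK r a
  exact ⟨i, lt_of_lt_of_le hi (Finset.le_sup hr), hi2.trans hre.symm⟩

lemma Good.nlp {x : Seq2} (h : Good x) : NLP x := by
  intro g hg
  obtain ⟨m, hm⟩ := h.nper g hg
  obtain ⟨K, hK⟩ := h.ur.word {0, g}
  refine ⟨K, fun a => ?_⟩
  obtain ⟨i, hi, he⟩ := hK m a
  refine ⟨i, hi, ?_⟩
  have h1 := he 0 (by simp)
  have h2 := he g (by simp)
  rw [add_zero, add_zero] at h1
  rw [h1, h2]
  exact hm

lemma Good.flip {x : Seq2} (h : Good x) {t : ℕ} (ht : 1 ≤ t) (v : Fin 2) (s a : ℕ) :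
    ∃ m ≥ a, x (m + s) = v ∧ x (m + s + t) ≠ v := by
  obtain ⟨G, hG⟩ := ud_of_nlp h.nlp t ht v
  obtain ⟨i, _, h1, h2⟩ := hG (a + s)
  refine ⟨a + i, by simp, ?_⟩
  rw [show a + i + s = a + s + i by ring]
  exact ⟨h1, h2⟩

def Ret (x : Seq2) (V : Finset ℕ) (t : ℕ) : Prop :=
  ∀ m, ∃ m', EE x V m' m ∧ ∀ s ∈ V, x (m' + s + t) = x (m' + s)

lemma Good.flow {x : Seq2} (h : Good x) {V : Finset ℕ} (hV : Sat x V) {t : ℕ} (ht : 1 ≤ t)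
    (hr : Ret x V t) {s : ℕ} (hs : s ∈ V) {v : Fin 2} {m m' : ℕ}
    (h1 : x (m + s) = v) (h2 : x (m + s + t) ≠ v) (h3 : x (m' + s) = v)
    (h4 : x (m' + s + t) ≠ v) : EE x V m m' := by
  have key : ∀ n, x (n + s) ≠ x (n + s + t) → Spl x V (s + t) n := by
    intro n hn
    obtain ⟨k, hk, hk2⟩ := hr n
    refine ⟨k, hk.symm, ?_⟩
    rw [← add_assoc, ← add_assoc, hk2 s hs, hk s hs]
    exact hn.symm
  obtain ⟨w, hw⟩ : ∃ w : Fin 2, w ≠ v := by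
    rcases fin2_cases v with h | h
    · exact ⟨1, by rw [h]; decide⟩
    · exact ⟨0, by rw [h]; decide⟩
  obtain ⟨n, _, hn1, hn2⟩ := h.flip ht w s 0
  rcases hV (s + t) m m' n (key m (by rw [h1]; exact h2.symm)) (key m' (by rw [h3]; exact h4.symm))
    (key n (by rw [hn1]; exact hn2.symm)) with e | e | e
  · exact e
  · exact absurd (e s hs) (by rw [h1, hn1]; exact hw.symm)
  · exact absurd (e s hs) (by rw [h3, hn1]; exact hw.symm)

lemma Good.ret_of_word {x : Seq2} (h : Good x) (V : Finset ℕ) :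
    ∃ K, ∀ t m, EW x K m (m + t) → Ret x V t := by
  obtain ⟨M, hM⟩ := exists_bound V
  obtain ⟨K, hK⟩ := h.ur.word V
  refine ⟨K + M, fun t m hm n => ?_⟩
  obtain ⟨i, hi, hi2⟩ := hK n m
  refine ⟨m + i, hi2, fun s hs => ?_⟩
  rw [EW_iff] at hm
  have := hm (i + s) (by have := hM s hs; omega)
  rw [show m + i + s = m + (i + s) by ring, this]
  congr 1
  ring

lemma Good.exists_ret {x : Seq2} (h : Good x) (V : Finset ℕ) (L B g : ℕ) (hg : 1 ≤ g) :
    ∃ t ≥ B, g ∣ t ∧ Ret x V t ∧ EW x L 0 t := by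
  obtain ⟨K, hK⟩ := h.ret_of_word V
  obtain ⟨t, h1, h2, h3⟩ := ret_div h.ur.rec (K + L) B g hg
  refine ⟨t, h1, h2, hK t 0 ?_, h3.mono (by intro a; simp; omega)⟩
  rw [zero_add]
  exact h3.mono (by intro a; simp; omega)

def Loc (x : Seq2) (b : ℕ → Prop) : Prop := ∃ N, ∀ m m', EW x N m m' → (b m ↔ b m')

def TM (x : Seq2) : Prop :=
  ∀ b : ℕ → Prop, Loc x b → ∀ t ≥ 1, (∀ m, b m → b (m + t)) → (∀ m, b m) ∨ (∀ m, ¬ b m)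

def RecL (x : Seq2) (q N : ℕ) : Prop := ∀ m m', EW x N m m' → m % q = m' % q

lemma per_mul {b : ℕ → Prop} {q : ℕ} (h : ∀ m, b (m + q) ↔ b m) (k m : ℕ) :
    b (m + k * q) ↔ b m := by
  induction k with
  | zero => simp
  | succ k ih => rw [← ih, ← h (m + k * q)]; ring_nf

lemma rec_of_not_tm {x : Seq2} (hr : Recurrent x) (h : ¬ TM x) : ∃ q N, 2 ≤ q ∧ RecL x q N := by
  classical
  unfold TM at h
  push Not at h
  obtain ⟨b, ⟨N0, hN0⟩, t, ht, hb, ⟨m0, hm0⟩, ⟨m1, hm1⟩⟩ := h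
  have hbk : ∀ k m, b m → b (m + k * t) := by
    intro k
    induction k with
    | zero => intro m h; simpa using h
    | succ k ih =>
      intro m h
      have := hb _ (ih m h)
      rwa [show m + k * t + t = m + (k + 1) * t by ring] at this
  have hper : ∀ m, b (m + t) ↔ b m := by
    intro m
    refine ⟨fun h => ?_, hb m⟩
    obtain ⟨r, hr1, ⟨k, hk⟩, hr3⟩ := ret_div hr (m + N0) t t ht
    have hk1 : 1 ≤ k := by
      rcases Nat.eq_zero_or_pos k with h0 | h0
      · rw [h0] at hk; omega
      · exact h0
    have h1 := hbk (k - 1) _ h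
    have e : m + t + (k - 1) * t = r + m := by
      obtain ⟨e, rfl⟩ : ∃ e, k = e + 1 := ⟨k - 1, by omega⟩
      rw [hk]; simp; ring
    rw [e] at h1
    have h2 := hr3.sub (L' := N0) (k := m) le_rfl
    rw [zero_add] at h2
    exact (hN0 _ _ h2).mpr h1
  have hex : ∃ q, 1 ≤ q ∧ ∀ m, b (m + q) ↔ b m := ⟨t, ht, hper⟩
  obtain ⟨hq1, hq⟩ := Nat.find_spec hex
  have hqmin : ∀ q', 1 ≤ q' → (∀ m, b (m + q') ↔ b m) → Nat.find hex ≤ q' := by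
    intro q' h1 h2
    exact Nat.find_min' hex ⟨h1, h2⟩
  generalize Nat.find hex = q at *
  refine ⟨q, N0 + q, ?_, ?_⟩
  · by_contra hlt
    have h1 : q = 1 := by omega
    subst h1
    have h2 := per_mul hq
    have e0 := h2 m0 0
    have e1 := h2 m1 0
    simp only [mul_one, zero_add] at e0 e1
    exact hm0 (e0.mpr (e1.mp hm1))
  · have main : ∀ m d, EW x (N0 + q) m (m + d) → d % q = 0 := by
      intro m d he
      have h1 : ∀ i < q, (b (m + i) ↔ b (m + d + i)) := fun i hi =>
        hN0 _ _ (he.sub (by omega))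
      have h2 : ∀ i, (b (m + i) ↔ b (m + i + d)) := by
        intro i
        have e := h1 (i % q) (Nat.mod_lt _ hq1)
        have e2 := per_mul hq (i / q) (m + i % q)
        have e3 := per_mul hq (i / q) (m + d + i % q)
        have e4 := Nat.div_add_mod i q
        rw [mul_comm] at e4
        rw [show m + i % q + i / q * q = m + i by omega] at e2
        rw [show m + d + i % q + i / q * q = m + i + d by omega] at e3
        rw [e2, e, ← e3]
      have h3 : ∀ k, b (k + d) ↔ b k := by
        intro k
        have hmq : m ≤ m * q := Nat.le_mul_of_pos_right m hq1
        have e := h2 (k + m * q - m)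
        rw [show m + (k + m * q - m) = k + m * q by omega, per_mul hq] at e
        rw [e, ← per_mul hq m (k + d)]
        ring_nf
      by_contra hne
      have h4 : ∀ k, b (k + d % q) ↔ b k := by
        intro k
        rw [← h3 k, ← per_mul hq (d / q) (k + d % q)]
        have e4 := Nat.div_add_mod d q
        rw [mul_comm] at e4
        rw [show k + d % q + d / q * q = k + d by omega]
      have := hqmin _ (by omega) h4
      have := Nat.mod_lt d hq1
      omega
    intro m m' he
    rcases le_total m m' with h | h
    · obtain ⟨d, rfl⟩ := Nat.exists_eq_add_of_le h
      have := main m d he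
      rw [Nat.add_mod, this]; simp
    · obtain ⟨d, rfl⟩ := Nat.exists_eq_add_of_le h
      have := main m' d he.symm
      rw [Nat.add_mod, this]; simp

lemma exists_mean : ∃ μ : Set ℕ → ℝ, (∀ S, 0 ≤ μ S) ∧ μ univ = 1 ∧
    (∀ S T, Disjoint S T → μ (S ∪ T) = μ S + μ T) ∧
    (∀ S, μ {m | m + 1 ∈ S} = μ S) := by
  classical
  let d : Set ℕ → ℕ → ℝ := fun S N =>
    (((Finset.range (N + 1)).filter (· ∈ S)).card : ℝ) / (N + 1)
  have hd0 : ∀ S N, 0 ≤ d S N := fun S N => by positivity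
  have hd1 : ∀ S N, d S N ≤ 1 := fun S N => by
    have : ((Finset.range (N + 1)).filter (· ∈ S)).card ≤ N + 1 := by
      simpa using Finset.card_filter_le (Finset.range (N + 1)) (· ∈ S)
    rw [div_le_one (by positivity)]
    exact_mod_cast this
  have hlim : ∀ S, ∃ l : ℝ, l ∈ Icc (0 : ℝ) 1 ∧
      Filter.Tendsto (d S) (Filter.hyperfilter ℕ) (nhds l) := by
    intro S
    have := isCompact_Icc.ultrafilter_le_nhds (s := Icc (0 : ℝ) 1)
      ((Filter.hyperfilter ℕ).map (d S)) (by
        rw [Filter.le_principal_iff]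
        refine Filter.mem_map.mpr (Filter.mem_of_superset Filter.univ_mem ?_)
        intro N _
        exact ⟨hd0 S N, hd1 S N⟩)
    obtain ⟨l, hl, h⟩ := this
    exact ⟨l, hl, h⟩
  choose μ hμ1 hμ2 using hlim
  refine ⟨μ, fun S => (hμ1 S).1, ?_, ?_, ?_⟩
  · refine tendsto_nhds_unique (hμ2 univ) ?_
    have : d univ = fun _ => (1 : ℝ) := by
      funext N
      simp only [d, mem_univ, Finset.filter_true, Finset.card_range]
      push_cast
      exact div_self (by positivity)
    rw [this]
    exact tendsto_const_nhds
  · intro S T hST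
    refine tendsto_nhds_unique (hμ2 (S ∪ T)) ?_
    have : d (S ∪ T) = fun N => d S N + d T N := by
      funext N
      simp only [d, ← add_div]
      congr 1
      rw [← Nat.cast_add, ← Finset.card_union_of_disjoint]
      · congr 2
        ext m
        simp only [Finset.mem_filter, Finset.mem_union, mem_union]
        tauto
      · rw [Finset.disjoint_left]
        intro m h1 h2
        exact (Set.disjoint_left.mp hST) (Finset.mem_filter.mp h1).2 (Finset.mem_filter.mp h2).2
    rw [this]
    exact (hμ2 S).add (hμ2 T)
  · intro S
    refine tendsto_nhds_unique (hμ2 _) ?_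
    have h1 : Filter.Tendsto (fun N => d {m | m + 1 ∈ S} N - d S N) (Filter.hyperfilter ℕ)
        (nhds 0) := by
      have h2 : Filter.Tendsto (fun N => d {m | m + 1 ∈ S} N - d S N) Filter.atTop (nhds 0) := by
        refine squeeze_zero_norm (a := fun N : ℕ => 1 / ((N : ℝ) + 1)) ?_
          tendsto_one_div_add_atTop_nhds_zero_nat
        intro N
        simp only [d, ← sub_div, Real.norm_eq_abs]
        rw [abs_div, abs_of_pos (show (0 : ℝ) < N + 1 by positivity)]
        gcongr
        have e1 : ((Finset.range (N + 1)).filter (· ∈ {m | m + 1 ∈ S})).card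
            = ((Finset.Ico 1 (N + 2)).filter (· ∈ S)).card := by
          refine Finset.card_bij (fun m _ => m + 1) ?_ ?_ ?_
          · intro m hm
            simp only [Finset.mem_filter, Finset.mem_range, mem_setOf_eq, Finset.mem_Ico] at *
            exact ⟨by omega, hm.2⟩
          · intro a _ b _ h; omega
          · intro b hb
            simp only [Finset.mem_filter, Finset.mem_range, mem_setOf_eq, Finset.mem_Ico] at *
            refine ⟨b - 1, ⟨by omega, ?_⟩, by omega⟩
            rw [show b - 1 + 1 = b by omega]; exact hb.2
        have e2 : ((Finset.range (N + 1)).filter (· ∈ S)).card ≤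
            ((Finset.Ico 1 (N + 2)).filter (· ∈ S)).card + 1 := by
          refine (Finset.card_le_card (t := insert 0 ((Finset.Ico 1 (N + 2)).filter (· ∈ S))) ?_).trans
            (Finset.card_insert_le _ _)
          intro m hm
          simp only [Finset.mem_filter, Finset.mem_range, Finset.mem_Ico, Finset.mem_insert] at *
          rcases Nat.eq_zero_or_pos m with h | h
          · left; exact h
          · right; exact ⟨by omega, hm.2⟩
        have e3 : ((Finset.Ico 1 (N + 2)).filter (· ∈ S)).card ≤
            ((Finset.range (N + 1)).filter (· ∈ S)).card + 1 := by
          refine (Finset.card_le_card (t := insert (N + 1) ((Finset.range (N + 1)).filter (· ∈ S))) ?_).trans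
            (Finset.card_insert_le _ _)
          intro m hm
          simp only [Finset.mem_filter, Finset.mem_range, Finset.mem_Ico, Finset.mem_insert] at *
          rcases Nat.lt_or_ge m (N + 1) with h | h
          · right; exact ⟨by omega, hm.2⟩
          · left; omega
        rw [e1, abs_le]
        constructor
        · have : (((Finset.range (N + 1)).filter (· ∈ S)).card : ℝ) ≤
            ((Finset.Ico 1 (N + 2)).filter (· ∈ S)).card + 1 := by exact_mod_cast e2
          linarith
        · have : (((Finset.Ico 1 (N + 2)).filter (· ∈ S)).card : ℝ) ≤
            ((Finset.range (N + 1)).filter (· ∈ S)).card + 1 := by exact_mod_cast e3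
          linarith
      exact h2.mono_left Nat.hyperfilter_le_atTop
    have h3 := h1.add (hμ2 S)
    simpa using h3

noncomputable def mu : Set ℕ → ℝ := exists_mean.choose
lemma mu_nonneg (S : Set ℕ) : 0 ≤ mu S := exists_mean.choose_spec.1 S
lemma mu_univ : mu univ = 1 := exists_mean.choose_spec.2.1
lemma mu_union {S T : Set ℕ} (h : Disjoint S T) : mu (S ∪ T) = mu S + mu T :=
  exists_mean.choose_spec.2.2.1 S T h
lemma mu_shift1 (S : Set ℕ) : mu {m | m + 1 ∈ S} = mu S := exists_mean.choose_spec.2.2.2 S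

lemma mu_shift (S : Set ℕ) (k : ℕ) : mu {m | m + k ∈ S} = mu S := by
  induction k with
  | zero => simp
  | succ k ih =>
    rw [← ih, ← mu_shift1 {m | m + k ∈ S}]
    congr 1
    ext m
    simp only [mem_setOf_eq]
    rw [show m + 1 + k = m + (k + 1) by ring]

lemma mu_mono {S T : Set ℕ} (h : S ⊆ T) : mu S ≤ mu T := by
  have := mu_union (S := S) (T := T \ S) disjoint_sdiff_right
  rw [union_sdiff_self, union_eq_right.mpr h] at this
  have := mu_nonneg (T \ S)
  linarith

lemma mu_empty : mu ∅ = 0 := by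
  have := mu_union (S := (∅ : Set ℕ)) (T := ∅) (by simp)
  simp at this
  exact this

lemma mu_union_inter (S T : Set ℕ) : mu (S ∪ T) + mu (S ∩ T) = mu S + mu T := by
  have h1 := mu_union (S := S) (T := T \ S) disjoint_sdiff_right
  rw [union_sdiff_self] at h1
  have h2 := mu_union (S := T ∩ S) (T := T \ S) (disjoint_sdiff_right.mono_left inter_subset_right)
  rw [inter_union_sdiff, inter_comm] at h2
  linarith

lemma mu_union_le (S T : Set ℕ) : mu (S ∪ T) ≤ mu S + mu T := by
  have := mu_union_inter S T
  have := mu_nonneg (S ∩ T)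
  linarith

lemma mu_syndetic {S : Set ℕ} {K : ℕ} (h : ∀ a, ∃ i < K, a + i ∈ S) : 0 < mu S := by
  have h1 : ∀ k, mu {m | ∃ i < k, m + i ∈ S} ≤ k * mu S := by
    intro k
    induction k with
    | zero => simp [mu_empty]
    | succ k ih =>
      have : {m | ∃ i < k + 1, m + i ∈ S} ⊆ {m | ∃ i < k, m + i ∈ S} ∪ {m | m + k ∈ S} := by
        rintro m ⟨i, hi, hm⟩
        rcases Nat.lt_succ_iff_lt_or_eq.mp hi with h | h
        · left; exact ⟨i, h, hm⟩
        · right; rw [h] at hm; exact hm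
      have h2 := (mu_mono this).trans (mu_union_le _ _)
      rw [mu_shift] at h2
      push_cast
      linarith
  have h2 := h1 K
  have h3 : {m | ∃ i < K, m + i ∈ S} = univ := by
    ext m; simp only [mem_setOf_eq, mem_univ, iff_true]; exact h m
  rw [h3, mu_univ] at h2
  by_contra hcon
  have := mu_nonneg S
  have : mu S = 0 := by linarith
  rw [this] at h2
  linarith

lemma mu_spaced {S : Set ℕ} {R : ℕ} (h : ∀ m ∈ S, ∀ n ∈ S, m < n → R ≤ n - m) :
    R * mu S ≤ 1 := by
  have h1 : ∀ k ≤ R, mu {m | ∃ i < k, m + i ∈ S} = k * mu S := by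
    intro k
    induction k with
    | zero => intro _; simp [mu_empty]
    | succ k ih =>
      intro hk
      have : {m | ∃ i < k + 1, m + i ∈ S} = {m | ∃ i < k, m + i ∈ S} ∪ {m | m + k ∈ S} := by
        ext m
        constructor
        · rintro ⟨i, hi, hm⟩
          rcases Nat.lt_succ_iff_lt_or_eq.mp hi with h | h
          · left; exact ⟨i, h, hm⟩
          · right; rw [h] at hm; exact hm
        · rintro (⟨i, hi, hm⟩ | hm)
          · exact ⟨i, by omega, hm⟩
          · exact ⟨k, by omega, hm⟩
      rw [this, mu_union, mu_shift, ih (by omega)]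
      · push_cast; ring
      · rw [Set.disjoint_left]
        rintro m ⟨i, hi, hm⟩ hm2
        have := h _ hm _ hm2 (by omega)
        omega
  rw [← h1 R le_rfl, ← mu_univ]
  exact mu_mono (subset_univ _)

lemma Good.mu_pos {x : Seq2} (h : Good x) {b : ℕ → Prop} (hb : Loc x b) {m : ℕ} (hm : b m) :
    0 < mu {m | b m} := by
  obtain ⟨N, hN⟩ := hb
  obtain ⟨K, hK⟩ := h.ur.word (Finset.range N)
  refine mu_syndetic (K := K) ?_
  intro a
  obtain ⟨i, hi, he⟩ := hK m a
  exact ⟨i, hi, (hN _ _ he).mpr hm⟩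

lemma loc_of_EE {x : Seq2} (V : Finset ℕ) {b : ℕ → Prop}
    (h : ∀ m m', EE x V m m' → (b m → b m')) : Loc x b := by
  obtain ⟨M, hM⟩ := exists_bound V
  have key : ∀ m m', EW x M m m' → EE x V m m' := fun m m' he =>
    he.mono (fun s hs => Finset.mem_range.mpr (hM s hs))
  exact ⟨M, fun m m' he => ⟨h _ _ (key _ _ he), h _ _ (key _ _ he).symm⟩⟩

noncomputable def rho (x : Seq2) (a b : ℕ) : ℝ := mu {m | x (m + a) ≠ x (m + b)}

lemma rho_nonneg (x : Seq2) (a b : ℕ) : 0 ≤ rho x a b := mu_nonneg _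

lemma rho_self (x : Seq2) (a : ℕ) : rho x a a = 0 := by
  simp [rho, mu_empty]

lemma rho_comm (x : Seq2) (a b : ℕ) : rho x a b = rho x b a := by
  unfold rho
  congr 1
  ext m
  exact ne_comm

lemma rho_tri (x : Seq2) (a b c : ℕ) : rho x a c ≤ rho x a b + rho x b c := by
  refine (mu_mono ?_).trans (mu_union_le _ _)
  intro m hm
  by_contra h
  simp only [mem_union, mem_setOf_eq, not_or, not_not] at h
  exact hm (h.1.trans h.2)

lemma rho_shift (x : Seq2) (a b k : ℕ) : rho x (a + k) (b + k) = rho x a b := by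
  unfold rho
  rw [← mu_shift {m | x (m + a) ≠ x (m + b)} k]
  congr 1
  ext m
  simp only [mem_setOf_eq]
  rw [show m + (a + k) = m + k + a by ring, show m + (b + k) = m + k + b by ring]

lemma Good.rho_pos {x : Seq2} (h : Good x) {a b : ℕ} (hab : a ≠ b) : 0 < rho x a b := by
  wlog hlt : a < b generalizing a b
  · rw [rho_comm]
    exact this hab.symm (lt_of_le_of_ne (not_lt.mp hlt) hab.symm)
  obtain ⟨d, rfl⟩ := Nat.exists_eq_add_of_lt hlt
  obtain ⟨m, _, h1, h2⟩ := h.flip (t := d + 1) (by omega) 0 a 0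
  refine h.mu_pos (b := fun m => x (m + a) ≠ x (m + (a + d + 1))) (m := m) ?_ ?_
  · refine loc_of_EE {a, a + d + 1} ?_
    intro m m' he hm
    rw [← he a (by simp), ← he (a + d + 1) (by simp)]
    exact hm
  · rw [h1]
    rw [show m + (a + d + 1) = m + a + (d + 1) by ring]
    exact h2.symm

/-- betweenness -/
lemma rho_add_of_none {x : Seq2} {a b c : ℕ}
    (h : ∀ m, ¬ (x (m + a) = x (m + c) ∧ x (m + b) ≠ x (m + a))) :
    rho x a c = rho x a b + rho x b c := by
  unfold rho
  rw [← mu_union]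
  · congr 1
    ext m
    have := h m
    simp only [mem_union, mem_setOf_eq]
    generalize x (m + a) = p at *
    generalize x (m + b) = q at *
    generalize x (m + c) = r at *
    revert p q r; decide
  · rw [Set.disjoint_left]
    intro m h1 h2
    have := h m
    simp only [mem_setOf_eq] at h1 h2
    generalize x (m + a) = p at *
    generalize x (m + b) = q at *
    generalize x (m + c) = r at *
    revert p q r; decide

lemma Good.none_of_rho_add {x : Seq2} (hG : Good x) {a b c : ℕ}
    (h : rho x a c = rho x a b + rho x b c) (m : ℕ) :
    ¬ (x (m + a) = x (m + c) ∧ x (m + b) ≠ x (m + a)) := by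
  intro hm
  have h1 := mu_union_inter {m | x (m + a) ≠ x (m + b)} {m | x (m + b) ≠ x (m + c)}
  have h2 : {m | x (m + a) ≠ x (m + b)} ∪ {m | x (m + b) ≠ x (m + c)} =
      {m | x (m + a) ≠ x (m + c)} ∪
        ({m | x (m + a) ≠ x (m + b)} ∩ {m | x (m + b) ≠ x (m + c)}) := by
    ext m
    simp only [mem_union, mem_inter_iff, mem_setOf_eq]
    generalize x (m + a) = p
    generalize x (m + b) = q
    generalize x (m + c) = r
    revert p q r; decide
  rw [h2, mu_union] at h1
  · have h3 : 0 < mu ({m | x (m + a) ≠ x (m + b)} ∩ {m | x (m + b) ≠ x (m + c)}) := by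
      refine hG.mu_pos (b := fun m => x (m + a) ≠ x (m + b) ∧ x (m + b) ≠ x (m + c))
        (m := m) ?_ ?_
      · refine loc_of_EE {a, b, c} ?_
        intro m m' he hm
        rw [← he a (by simp), ← he b (by simp), ← he c (by simp)]
        exact hm
      · exact ⟨hm.2.symm, by rw [← hm.1]; exact hm.2⟩
    unfold rho at h
    linarith
  · rw [Set.disjoint_left]
    intro m
    simp only [mem_inter_iff, mem_setOf_eq]
    generalize x (m + a) = p
    generalize x (m + b) = q
    generalize x (m + c) = r
    revert p q r; decide

/-- lead relation -/
def Lead (x : Seq2) (t a b : ℕ) : Prop :=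
  ∀ m, (x (m + a) ≠ x (m + a + t) → x (m + b) = x (m + a)) ∧
    (x (m + b) ≠ x (m + b + t) → x (m + a) ≠ x (m + b))

/-- pattern sets that are stuck are trivial -/
lemma Good.stuck {x : Seq2} (_h : Good x) (hTM : TM x) {t : ℕ} (ht : 1 ≤ t)
    {b : ℕ → Prop} (V : Finset ℕ)
    (hloc : ∀ m m', EE x V m m' → (b m → b m'))
    (hst : ∀ m, b m → ∀ s ∈ V, x (m + s) = x (m + s + t)) {m0 : ℕ} (h0 : ¬ b m0) (m : ℕ) :
    ¬ b m := by
  have := hTM b (loc_of_EE V hloc) t ht (by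
    intro m hm
    refine hloc m (m + t) ?_ hm
    intro s hs
    rw [hst m hm s hs]
    congr 1; ring)
  rcases this with h1 | h1
  · exact absurd (h1 m0) h0
  · exact h1 m

lemma Good.lead_or {x : Seq2} (h : Good x) (hTM : TM x) {V : Finset ℕ} (hV : Sat x V) {t : ℕ}
    (ht : 1 ≤ t) (hr : Ret x V t) {a b : ℕ} (ha : a ∈ V) (hb : b ∈ V) (hab : a ≠ b)
    (h00 : ∃ m, x (m + a) = 0 ∧ x (m + b) = 0) (h11 : ∃ m, x (m + a) = 1 ∧ x (m + b) = 1) :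
    Lead x t a b ∨ Lead x t b a := by
  have hdiff : ∀ v : Fin 2, ∃ m, x (m + a) = v ∧ x (m + b) ≠ v := by
    intro v
    rcases lt_or_gt_of_ne hab with hlt | hlt
    · obtain ⟨d, rfl⟩ := Nat.exists_eq_add_of_lt hlt
      obtain ⟨m, _, h1, h2⟩ := h.flip (t := d + 1) (by omega) v a 0
      exact ⟨m, h1, by rwa [show m + (a + d + 1) = m + a + (d + 1) by ring]⟩
    · obtain ⟨d, rfl⟩ := Nat.exists_eq_add_of_lt hlt
      obtain ⟨w, hw⟩ : ∃ w : Fin 2, w ≠ v := by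
        rcases fin2_cases v with h | h
        · exact ⟨1, by rw [h]; decide⟩
        · exact ⟨0, by rw [h]; decide⟩
      obtain ⟨m, _, h1, h2⟩ := h.flip (t := d + 1) (by omega) w b 0
      refine ⟨m, ?_, by rw [h1]; exact hw⟩
      rw [show m + (b + d + 1) = m + b + (d + 1) by ring]
      exact fin2_ne h2 hw.symm
  have hpat : ∀ v w : Fin 2, ∃ m, x (m + a) = v ∧ x (m + b) = w := by
    intro v w
    by_cases hvw : v = w
    · subst hvw
      rcases fin2_cases v with rfl | rfl
      · exact h00
      · exact h11
    · obtain ⟨m, h1, h2⟩ := hdiff v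
      exact ⟨m, h1, fin2_ne h2 (fun h => hvw h.symm)⟩
  -- flip data
  have hfl : ∀ s ∈ V, ∀ v : Fin 2, ∃ m, x (m + s) = v ∧ x (m + s + t) ≠ v := by
    intro s _ v
    obtain ⟨m, _, h1⟩ := h.flip ht v s 0
    exact ⟨m, h1⟩
  choose fa hfa1 hfa2 using hfl a ha
  choose fb hfb1 hfb2 using hfl b hb
  have ua : ∀ v m, x (m + a) = v → x (m + a + t) ≠ v → x (m + b) = x (fa v + b) :=
    fun v m h1 h2 => h.flow hV ht hr ha h1 h2 (hfa1 v) (hfa2 v) b hb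
  have ub : ∀ v m, x (m + b) = v → x (m + b + t) ≠ v → x (m + a) = x (fb v + a) :=
    fun v m h1 h2 => h.flow hV ht hr hb h1 h2 (hfb1 v) (hfb2 v) a ha
  -- not stuck: pattern (v,w)
  have hns : ∀ v w : Fin 2, x (fa v + b) = w ∨ x (fb w + a) = v := by
    intro v w
    by_contra hcon
    push Not at hcon
    obtain ⟨m, hm1, hm2⟩ := hpat v w
    obtain ⟨v', hv'⟩ : ∃ v' : Fin 2, v' ≠ v := by
      rcases fin2_cases v with h | h
      · exact ⟨1, by rw [h]; decide⟩
      · exact ⟨0, by rw [h]; decide⟩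
    obtain ⟨m', hm1', hm2'⟩ := hpat v' w
    refine h.stuck hTM ht (b := fun m => x (m + a) = v ∧ x (m + b) = w) {a, b} ?_ ?_
      (m0 := m') ?_ m ⟨hm1, hm2⟩
    · intro m m' he hm
      rw [← he a (by simp), ← he b (by simp)]
      exact hm
    · intro m hm s hs
      by_contra hne
      simp only [Finset.mem_insert, Finset.mem_singleton] at hs
      rcases hs with rfl | rfl
      · exact hcon.1 (by rw [← hm.2]; exact (ua v m hm.1 (by rw [← hm.1]; exact Ne.symm hne)).symm)
      · exact hcon.2 (by rw [← hm.1]; exact (ub w m hm.2 (by rw [← hm.2]; exact Ne.symm hne)).symm)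
    · rintro ⟨h1, _⟩
      exact hv' (hm1'.symm.trans h1)
  have hx : (∀ v, x (fa v + b) = v ∧ x (fb v + a) ≠ v) ∨
      (∀ v, x (fa v + b) ≠ v ∧ x (fb v + a) = v) := by
    have e00 := hns 0 0
    have e01 := hns 0 1
    have e10 := hns 1 0
    have e11 := hns 1 1
    have : ∀ P : Fin 2 → Prop, (∀ v, P v) ↔ P 0 ∧ P 1 := by
      intro P
      constructor
      · intro h; exact ⟨h 0, h 1⟩
      · rintro ⟨h0, h1⟩ v
        rcases fin2_cases v with rfl | rfl <;> assumption
    rw [this, this]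
    generalize x (fa 0 + b) = p at *
    generalize x (fa 1 + b) = q at *
    generalize x (fb 0 + a) = r at *
    generalize x (fb 1 + a) = s at *
    clear hns ua ub hfa1 hfa2 hfb1 hfb2
    revert p q r s; decide
  rcases hx with hx | hx
  · left
    intro m
    constructor
    · intro hm
      rw [ua _ m rfl (Ne.symm hm)]
      exact (hx _).1
    · intro hm
      rw [ub _ m rfl (Ne.symm hm)]
      exact (hx _).2
  · right
    intro m
    constructor
    · intro hm
      rw [ub _ m rfl (Ne.symm hm)]
      exact (hx _).2
    · intro hm
      rw [ua _ m rfl (Ne.symm hm)]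
      exact (hx _).1

lemma Good.lead_trans {x : Seq2} (h : Good x) (hTM : TM x) {t : ℕ} (ht : 1 ≤ t) {a b c : ℕ}
    (hac : a ≠ c) (h1 : Lead x t a b) (h2 : Lead x t b c) (h3 : Lead x t a c) :
    rho x a c = rho x a b + rho x b c := by
  apply rho_add_of_none
  have hpos := h.rho_pos hac
  have : ∃ m0, x (m0 + a) ≠ x (m0 + c) := by
    by_contra hcon
    push Not at hcon
    unfold rho at hpos
    simp only [hcon] at hpos
    simp [mu_empty] at hpos
  obtain ⟨m0, hm0⟩ := this
  intro m
  refine h.stuck hTM ht (b := fun m => x (m + a) = x (m + c) ∧ x (m + b) ≠ x (m + a)) {a, b, c}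
    ?_ ?_ (m0 := m0) (fun h => hm0 h.1) m
  · intro m m' he hm
    rw [← he a (by simp), ← he b (by simp), ← he c (by simp)]
    exact hm
  · intro m hm s hs
    by_contra hne
    simp only [Finset.mem_insert, Finset.mem_singleton] at hs
    rcases hs with rfl | rfl | rfl
    · exact hm.2 ((h1 m).1 hne)
    · exact hm.2 (hm.1.trans ((h2 m).1 hne)).symm
    · exact (h3 m).2 hne hm.1

lemma Good.lead_no_cycle {x : Seq2} (h : Good x) (hTM : TM x) {t : ℕ} (ht : 1 ≤ t) {a b c : ℕ}
    (hac : a ≠ c) (h1 : Lead x t a b) (h2 : Lead x t b c) (h3 : Lead x t c a)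
    (h0 : ∃ m, x (m + a) = x (m + b) ∧ x (m + b) = x (m + c)) : False := by
  have hpos := h.rho_pos hac
  have : ∃ m0, x (m0 + a) ≠ x (m0 + c) := by
    by_contra hcon
    push Not at hcon
    unfold rho at hpos
    simp only [hcon] at hpos
    simp [mu_empty] at hpos
  obtain ⟨m0, hm0⟩ := this
  obtain ⟨m, hm⟩ := h0
  refine h.stuck hTM ht (b := fun m => x (m + a) = x (m + b) ∧ x (m + b) = x (m + c)) {a, b, c}
    ?_ ?_ (m0 := m0) (fun h => hm0 (h.1.trans h.2)) m hm
  · intro m m' he hm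
    rw [← he a (by simp), ← he b (by simp), ← he c (by simp)]
    exact hm
  · intro m hm s hs
    by_contra hne
    simp only [Finset.mem_insert, Finset.mem_singleton] at hs
    rcases hs with rfl | rfl | rfl
    · exact (h3 m).2 hne (hm.1.trans hm.2).symm
    · exact (h1 m).2 hne hm.1
    · exact (h2 m).2 hne hm.2

lemma Good.letter_pos {x : Seq2} (h : Good x) (v : Fin 2) : 0 < mu {m | x m = v} := by
  obtain ⟨m, _, h1, _⟩ := h.flip (t := 1) le_rfl v 0 0
  refine h.mu_pos (b := fun m => x m = v) (m := m) ?_ h1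
  refine loc_of_EE {0} ?_
  intro m m' he hm
  have := he 0 (by simp)
  simp only [add_zero] at this
  rw [← this]; exact hm

lemma Good.kappa {x : Seq2} (h : Good x) : ∃ κ > 0, ∀ a b c, rho x a b < κ → rho x a c < κ →
    ∀ v, ∃ m, x (m + a) = v ∧ x (m + b) = v ∧ x (m + c) = v := by
  refine ⟨min (mu {m | x m = 0}) (mu {m | x m = 1}) / 2, ?_, ?_⟩
  · have := h.letter_pos 0
    have := h.letter_pos 1
    positivity
  · intro a b c hab hac v
    by_contra hcon
    push Not at hcon
    have h1 : {m | m + a ∈ {m | x m = v}} ⊆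
        {m | x (m + a) ≠ x (m + b)} ∪ {m | x (m + a) ≠ x (m + c)} := by
      intro m hm
      simp only [mem_setOf_eq] at hm
      by_cases hb : x (m + b) = v
      · right
        have := hcon m hm hb
        simp only [mem_setOf_eq]
        rw [hm]; exact this.symm
      · left
        simp only [mem_setOf_eq]
        rw [hm]; exact fun h => hb h.symm
    have h2 := (mu_mono h1).trans (mu_union_le _ _)
    rw [mu_shift] at h2
    have h3 : min (mu {m | x m = 0}) (mu {m | x m = 1}) ≤ mu {m | x m = v} := by
      rcases fin2_cases v with rfl | rfl
      · exact min_le_left _ _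
      · exact min_le_right _ _
    unfold rho at hab hac
    linarith

lemma Good.lin {x : Seq2} (h : Good x) (hTM : TM x) : ∃ κ > 0, ∀ W : Finset ℕ,
    (∀ a ∈ W, ∀ b ∈ W, rho x a b < κ) →
    ∃ f : ℕ → ℝ, ∀ a ∈ W, ∀ b ∈ W, |f a - f b| = rho x a b := by
  classical
  obtain ⟨κ, hκ, hk⟩ := h.kappa
  refine ⟨κ, hκ, fun W hW => ?_⟩
  rcases W.eq_empty_or_nonempty with rfl | hne
  · exact ⟨fun _ => 0, by simp⟩
  obtain ⟨V, hWV, hV⟩ := exists_sat h.bd W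
  obtain ⟨t, ht, _, hr, _⟩ := h.exists_ret V 0 1 1 le_rfl
  have hlead : ∀ a ∈ W, ∀ b ∈ W, a ≠ b → Lead x t a b ∨ Lead x t b a := by
    intro a ha b hb hab
    refine h.lead_or hTM hV ht hr (hWV ha) (hWV hb) hab ?_ ?_
    · obtain ⟨m, h1, h2, _⟩ := hk a b b (hW a ha b hb) (hW a ha b hb) 0
      exact ⟨m, h1, h2⟩
    · obtain ⟨m, h1, h2, _⟩ := hk a b b (hW a ha b hb) (hW a ha b hb) 1
      exact ⟨m, h1, h2⟩
  have hcyc : ∀ a ∈ W, ∀ b ∈ W, ∀ c ∈ W, a ≠ c → Lead x t a b → Lead x t b c → Lead x t a c := by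
    intro a ha b hb c hc hac h1 h2
    rcases hlead a ha c hc hac with h3 | h3
    · exact h3
    · obtain ⟨m, e1, e2, e3⟩ := hk a b c (hW a ha b hb) (hW a ha c hc) 0
      exact (h.lead_no_cycle hTM ht hac h1 h2 h3 ⟨m, by rw [e1, e2], by rw [e2, e3]⟩).elim
  have hmax : ∀ U : Finset ℕ, U ⊆ W → U.Nonempty → ∃ e ∈ U, ∀ a ∈ U, a ≠ e → Lead x t e a := by
    intro U
    induction U using Finset.induction_on with
    | empty => intro _ h; exact absurd h (by simp)
    | insert w U hw ih =>
      intro hUW _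
      rcases U.eq_empty_or_nonempty with rfl | hU
      · exact ⟨w, by simp, by simp⟩
      obtain ⟨e, he, hea⟩ := ih ((Finset.subset_insert _ _).trans hUW) hU
      have heW : e ∈ W := hUW (Finset.mem_insert_of_mem he)
      have hwW : w ∈ W := hUW (Finset.mem_insert_self _ _)
      have hew : e ≠ w := fun h => hw (h ▸ he)
      rcases hlead e heW w hwW hew with h1 | h1
      · refine ⟨e, Finset.mem_insert_of_mem he, ?_⟩
        intro a ha hae
        rcases Finset.mem_insert.mp ha with h2 | h2
        · rw [h2]; exact h1
        · exact hea a h2 hae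
      · refine ⟨w, Finset.mem_insert_self _ _, ?_⟩
        intro a ha haw
        rcases Finset.mem_insert.mp ha with h2 | h2
        · exact absurd h2 haw
        · by_cases hae : a = e
          · rw [hae]; exact h1
          · exact hcyc w hwW e heW a (hUW ha) (Ne.symm haw) h1 (hea a h2 hae)
  obtain ⟨e, he, hea⟩ := hmax W le_rfl hne
  refine ⟨fun a => rho x e a, ?_⟩
  have key : ∀ a ∈ W, ∀ b ∈ W, a ≠ e → b ≠ e → Lead x t a b →
      |rho x e a - rho x e b| = rho x a b := by
    intro a ha b hb hae hbe hl
    rw [h.lead_trans hTM ht hbe.symm (hea a ha hae) hl (hea b hb hbe)]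
    rw [sub_add_cancel_left, abs_neg, abs_of_nonneg (rho_nonneg _ _ _)]
  intro a ha b hb
  show |rho x e a - rho x e b| = rho x a b
  by_cases hab : a = b
  · subst hab; simp [rho_self]
  by_cases hae : a = e
  · subst hae
    rw [rho_self, zero_sub, abs_neg, abs_of_nonneg (rho_nonneg _ _ _)]
  by_cases hbe : b = e
  · subst hbe
    rw [rho_self, sub_zero, abs_of_nonneg (rho_nonneg _ _ _), rho_comm]
  rcases hlead a ha b hb hab with h1 | h1
  · exact key a ha b hb hae hbe h1
  · rw [abs_sub_comm, rho_comm x a b]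
    exact key b hb a ha hbe hae h1

lemma Good.spaced {x : Seq2} (h : Good x) (R : ℕ) : ∃ N, ∀ m m', EW x N m m' → m < m' →
    R < m' - m := by
  have hn := h.nlp
  have : ∀ g, ∃ G, 1 ≤ g → ∀ a, ∃ i < G, x (a + i) ≠ x (a + i + g) := by
    intro g
    by_cases hg : 1 ≤ g
    · obtain ⟨G, hG⟩ := hn g hg
      exact ⟨G, fun _ => hG⟩
    · exact ⟨0, fun h => absurd h hg⟩
  choose G hG using this
  refine ⟨(Finset.range (R + 1)).sup G, fun m m' he hlt => ?_⟩
  by_contra hcon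
  obtain ⟨d, rfl⟩ := Nat.exists_eq_add_of_lt hlt
  obtain ⟨i, hi, hne⟩ := hG (d + 1) (by omega) m
  rw [EW_iff] at he
  have h1 : G (d + 1) ≤ (Finset.range (R + 1)).sup G :=
    Finset.le_sup (Finset.mem_range.mpr (by omega))
  apply hne
  rw [he i (by omega)]
  congr 1; ring

lemma Good.small_atom {x : Seq2} (h : Good x) {ε : ℝ} (hε : 0 < ε) : ∃ N, ∀ m,
    mu {m' | EW x N m m'} < ε := by
  obtain ⟨R, hR⟩ := exists_nat_gt (1 / ε)
  obtain ⟨N, hN⟩ := h.spaced R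
  refine ⟨N, fun m => ?_⟩
  have := mu_spaced (S := {m' | EW x N m m'}) (R := R) (by
    intro a ha b hb hab
    exact (hN a b (EE.trans (EE.symm ha) hb) hab).le)
  have hRpos : (0 : ℝ) < R := lt_trans (by positivity) hR
  have h2 : 1 < R * ε := by
    rw [div_lt_iff₀ hε] at hR
    linarith
  by_contra hcon
  push Not at hcon
  nlinarith

lemma Good.small {x : Seq2} (h : Good x) {ε : ℝ} (hε : 0 < ε) : ∃ K, ∀ t m,
    EW x K m (m + t) → rho x 0 t < ε := by
  obtain ⟨N, hN⟩ := h.small_atom (half_pos hε)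
  obtain ⟨V, hNV, hV⟩ := exists_sat h.bd (insert 0 (Finset.range N))
  obtain ⟨K, hK⟩ := h.ret_of_word V
  refine ⟨K, fun t m he => ?_⟩
  rcases Nat.eq_zero_or_pos t with rfl | ht
  · rw [rho_self]; exact hε
  have hr := hK t m he
  have h0 : 0 ∈ V := hNV (by simp)
  obtain ⟨m0, _, hm0, hm0'⟩ := h.flip ht 0 0 0
  obtain ⟨m1, _, hm1, hm1'⟩ := h.flip ht 1 0 0
  have hsub : {n | x (n + 0) ≠ x (n + t)} ⊆ {n | EW x N m0 n} ∪ {n | EW x N m1 n} := by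
    intro n hn
    have hsubN : Finset.range N ⊆ V := (Finset.subset_insert _ _).trans hNV
    rcases fin2_cases (x n) with hx | hx
    · left
      exact (h.flow hV ht hr h0 hm0 hm0' (m' := n) hx
        (by rw [← hx]; exact hn.symm)).mono hsubN
    · right
      exact (h.flow hV ht hr h0 hm1 hm1' (m' := n) hx
        (by rw [← hx]; exact hn.symm)).mono hsubN
  have := (mu_mono hsub).trans (mu_union_le _ _)
  have := hN m0
  have := hN m1
  unfold rho
  linarith

lemma TM.no_rec {x : Seq2} (hTM : TM x) {q N : ℕ} (hq : 2 ≤ q) (h : RecL x q N) : False := by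
  have := hTM (fun m => m % q = 0) ⟨N, fun m m' he => by simp only [h m m' he]⟩ q (by omega)
    (fun m hm => by simpa using hm)
  rcases this with h1 | h1
  · have := h1 1
    rw [Nat.mod_eq_of_lt (by omega)] at this
    omega
  · exact h1 0 (by simp)

noncomputable def rz (x : Seq2) (t : ℤ) : ℝ := rho x t.toNat (-t).toNat

lemma rho_eq_of {x : Seq2} {a b a' b' : ℕ} (h : (a : ℤ) - b = a' - b') :
    rho x a b = rho x a' b' := by
  rw [← rho_shift x a b b', ← rho_shift x a' b' b]
  rw [show a + b' = a' + b by omega, add_comm b b']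

lemma rho_eq_rz (x : Seq2) (a b : ℕ) : rho x a b = rz x ((a : ℤ) - b) := by
  unfold rz
  apply rho_eq_of
  omega

lemma rz_nonneg (x : Seq2) (t : ℤ) : 0 ≤ rz x t := rho_nonneg _ _ _
lemma rz_zero (x : Seq2) : rz x 0 = 0 := by simp [rz, rho_self]
lemma rz_neg (x : Seq2) (t : ℤ) : rz x (-t) = rz x t := by
  unfold rz
  rw [rho_comm, neg_neg]
lemma Good.rz_pos {x : Seq2} (h : Good x) {t : ℤ} (ht : t ≠ 0) : 0 < rz x t :=
  h.rho_pos (by omega)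

lemma rz_add (x : Seq2) (s t : ℤ) : rz x (s + t) ≤ rz x s + rz x t := by
  have h1 := rho_tri x (s.toNat + t.toNat) ((-s).toNat + t.toNat) ((-s).toNat + (-t).toNat)
  rw [rho_eq_rz, rho_eq_rz, rho_eq_rz] at h1
  rw [show ((s.toNat + t.toNat : ℕ) : ℤ) - ((-s).toNat + (-t).toNat : ℕ) = s + t by
      push_cast; omega,
    show ((s.toNat + t.toNat : ℕ) : ℤ) - ((-s).toNat + t.toNat : ℕ) = s by push_cast; omega,
    show (((-s).toNat + t.toNat : ℕ) : ℤ) - ((-s).toNat + (-t).toNat : ℕ) = t by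
      push_cast; omega] at h1
  exact h1

lemma Good.zlin {x : Seq2} (h : Good x) (hTM : TM x) : ∃ κ > 0, ∀ W : Finset ℤ,
    (∀ a ∈ W, ∀ b ∈ W, rz x (a - b) < κ) →
    ∃ f : ℤ → ℝ, ∀ a ∈ W, ∀ b ∈ W, |f a - f b| = rz x (a - b) := by
  classical
  obtain ⟨κ, hκ, hl⟩ := h.lin hTM
  refine ⟨κ, hκ, fun W hW => ?_⟩
  let k : ℕ := W.sup (fun a => a.natAbs)
  have hk : ∀ a ∈ W, 0 ≤ a + k := by
    intro a ha
    have : a.natAbs ≤ k := Finset.le_sup (f := fun a : ℤ => a.natAbs) ha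
    omega
  have hrz : ∀ a ∈ W, ∀ b ∈ W, rho x (a + k).toNat (b + k).toNat = rz x (a - b) := by
    intro a ha b hb
    rw [rho_eq_rz]
    congr 1
    have := hk a ha
    have := hk b hb
    omega
  obtain ⟨f, hf⟩ := hl (W.image (fun a : ℤ => (a + k).toNat)) (by
    intro a ha b hb
    obtain ⟨a', ha', rfl⟩ := Finset.mem_image.mp ha
    obtain ⟨b', hb', rfl⟩ := Finset.mem_image.mp hb
    rw [hrz a' ha' b' hb']
    exact hW a' ha' b' hb')
  refine ⟨fun a => f (a + k).toNat, fun a ha b hb => ?_⟩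
  rw [← hrz a ha b hb]
  exact hf _ (Finset.mem_image_of_mem _ ha) _ (Finset.mem_image_of_mem _ hb)

lemma Good.zsmall {x : Seq2} (h : Good x) {ε : ℝ} (hε : 0 < ε) : ∃ t : ℤ, t ≠ 0 ∧ rz x t < ε := by
  obtain ⟨K, hK⟩ := h.small hε
  obtain ⟨t, ht, _, he⟩ := ret_div h.ur.rec K 1 1 le_rfl
  refine ⟨t, by omega, ?_⟩
  have := hK t 0 (by rwa [zero_add])
  rw [rho_comm, rho_eq_rz] at this
  simpa using this

lemma Good.zgen {x : Seq2} (h : Good x) (hTM : TM x) {ε : ℝ} (hε : 0 < ε) :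
    AddSubgroup.closure {t : ℤ | rz x t < ε} = ⊤ := by
  obtain ⟨g, hg⟩ := Int.subgroup_cyclic (AddSubgroup.closure {t : ℤ | rz x t < ε})
  obtain ⟨K, hK⟩ := h.small hε
  have hdvd : ∀ t : ℤ, rz x t < ε → g ∣ t := by
    intro t ht
    have : t ∈ AddSubgroup.closure {t : ℤ | rz x t < ε} := AddSubgroup.subset_closure ht
    rw [hg] at this
    obtain ⟨k, hk⟩ := AddSubgroup.mem_closure_singleton.mp this
    exact ⟨k, by rw [← hk]; simp [mul_comm]⟩
  have hg0 : g ≠ 0 := by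
    rintro rfl
    obtain ⟨t, ht, ht2⟩ := h.zsmall hε
    exact ht (by simpa using hdvd t ht2)
  by_cases hg1 : g.natAbs = 1
  · rw [hg, AddSubgroup.eq_top_iff']
    intro t
    rw [AddSubgroup.mem_closure_singleton]
    rcases Int.natAbs_eq g with e | e
    · exact ⟨t, by rw [e, hg1]; simp⟩
    · exact ⟨-t, by rw [e, hg1]; simp⟩
  · exfalso
    have main : ∀ m d, EW x K m (m + d) → d % g.natAbs = 0 := by
      intro m d he
      have h1 := hK d m he
      rw [rho_comm, rho_eq_rz] at h1
      have h2 := hdvd _ h1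
      simp only [Nat.cast_zero, sub_zero] at h2
      have := Int.natAbs_dvd_natAbs.mpr h2
      simp only [Int.natAbs_natCast] at this
      exact Nat.mod_eq_zero_of_dvd this
    refine hTM.no_rec (q := g.natAbs) (N := K) (by omega) ?_
    intro m m' he
    rcases le_total m m' with h | h
    · obtain ⟨d, rfl⟩ := Nat.exists_eq_add_of_le h
      have := main m d he
      rw [Nat.add_mod, this]; simp
    · obtain ⟨d, rfl⟩ := Nat.exists_eq_add_of_le h
      have := main m' d he.symm
      rw [Nat.add_mod, this]; simp

section Abstract
variable (ρ : ℤ → ℝ)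

open Classical in
noncomputable def posn (t0 t : ℤ) : ℝ := if ρ (t - t0) = ρ t + ρ t0 then - ρ t else ρ t

theorem abstract_circle
    (hnn : ∀ t, 0 ≤ ρ t) (h0 : ρ 0 = 0) (hneg : ∀ t, ρ (-t) = ρ t)
    (htri : ∀ s t, ρ (s + t) ≤ ρ s + ρ t) (hpos : ∀ t, t ≠ 0 → 0 < ρ t)
    (κ : ℝ) (hκ : 0 < κ)
    (hlin : ∀ W : Finset ℤ, (∀ a ∈ W, ∀ b ∈ W, ρ (a - b) < κ) →
      ∃ f : ℤ → ℝ, ∀ a ∈ W, ∀ b ∈ W, |f a - f b| = ρ (a - b))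
    (hsmall : ∀ ε > 0, ∃ t, t ≠ 0 ∧ ρ t < ε)
    (hgen : ∀ ε > 0, AddSubgroup.closure {t : ℤ | ρ t < ε} = ⊤) :
    ∃ p α η : ℝ, 0 < p ∧ Irrational α ∧ 0 < η ∧
      (∀ t k : ℤ, |t * α - k| < η → ρ t = p * |t * α - k|) ∧
      (∀ t : ℤ, ρ t < η → ∃ k : ℤ, ρ t = p * |t * α - k|) := by
  classical
  obtain ⟨η0, hη0, hη4⟩ : ∃ η0 : ℝ, 0 < η0 ∧ 4 * η0 = κ := ⟨κ / 4, by positivity, by ring⟩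
  obtain ⟨t0, ht0, ht0s⟩ := hsmall η0 hη0
  set pos : ℤ → ℝ := posn ρ t0 with hposdef
  have habs : ∀ t, |pos t| = ρ t := by
    intro t
    simp only [hposdef, posn]
    split_ifs
    · rw [abs_neg, abs_of_nonneg (hnn t)]
    · rw [abs_of_nonneg (hnn t)]
  have hρsub : ∀ s t, ρ (s - t) ≤ ρ s + ρ t := by
    intro s t
    rw [sub_eq_add_neg]
    exact (htri _ _).trans (by rw [hneg])
  have hiso : ∀ s t, ρ s < 2 * η0 → ρ t < 2 * η0 → |pos s - pos t| = ρ (s - t) := by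
    intro s t hs ht
    obtain ⟨f, hf⟩ := hlin {0, t0, s, t} (by
      have key : ∀ a ∈ ({0, t0, s, t} : Finset ℤ), ρ a < 2 * η0 := by
        intro a ha
        simp only [Finset.mem_insert, Finset.mem_singleton] at ha
        rcases ha with rfl | rfl | rfl | rfl <;> linarith
      intro a ha b hb
      have := key a ha
      have := key b hb
      have := hρsub a b
      linarith)
    -- normalise
    obtain ⟨g, hg0, hg1, hg⟩ : ∃ g : ℤ → ℝ, g 0 = 0 ∧ g t0 = ρ t0 ∧
        ∀ a ∈ ({0, t0, s, t} : Finset ℤ), ∀ b ∈ ({0, t0, s, t} : Finset ℤ),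
          |g a - g b| = ρ (a - b) := by
      have h1 := hf t0 (by simp) 0 (by simp)
      rw [sub_zero] at h1
      rcases abs_choice (f t0 - f 0) with h2 | h2
      · refine ⟨fun a => f a - f 0, by simp, by linarith, ?_⟩
        intro a ha b hb
        rw [← hf a ha b hb]
        congr 1; ring
      · refine ⟨fun a => f 0 - f a, by simp, by linarith, ?_⟩
        intro a ha b hb
        rw [← hf a ha b hb, abs_sub_comm]
        congr 1; ring
    have hgp : ∀ a ∈ ({0, t0, s, t} : Finset ℤ), g a = pos a := by
      intro a ha
      have h1 := hg a ha 0 (by simp)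
      have h2 := hg a ha t0 (by simp)
      rw [hg0, sub_zero, sub_zero] at h1
      rw [hg1] at h2
      have h3 := hpos t0 ht0
      have h4 := hnn a
      simp only [hposdef, posn]
      split_ifs with hc
      · rw [hc] at h2
        rcases abs_cases (g a) with ⟨e1, e2⟩ | ⟨e1, e2⟩ <;>
          rcases abs_cases (g a - ρ t0) with ⟨e3, e4⟩ | ⟨e3, e4⟩ <;> linarith
      · rcases abs_cases (g a) with ⟨e1, e2⟩ | ⟨e1, e2⟩
        · linarith
        · exfalso
          apply hc
          rcases abs_cases (g a - ρ t0) with ⟨e3, e4⟩ | ⟨e3, e4⟩ <;> linarith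
    rw [← hgp s (by simp), ← hgp t (by simp)]
    exact hg s (by simp) t (by simp)
  have hzero : ∀ t, pos t = 0 → t = 0 := by
    intro t ht
    by_contra hne
    have := hpos t hne
    rw [← habs, ht] at this
    simp at this
  have hpos0 : pos 0 = 0 := by
    have := habs 0
    rw [h0] at this
    exact abs_eq_zero.mp this
  have hadd : ∀ s t, ρ s < η0 → ρ t < η0 → pos (s + t) = pos s + pos t := by
    intro s t hs ht
    have hst : ρ (s + t) < 2 * η0 := by have := htri s t; linarith
    have h1 := hiso (s + t) s hst (by linarith)
    have h2 := hiso (s + t) t hst (by linarith)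
    rw [add_sub_cancel_left, ← habs] at h1
    rw [add_sub_cancel_right, ← habs] at h2
    rcases abs_eq_abs.mp h1 with e1 | e1
    · linarith
    rcases abs_eq_abs.mp h2 with e2 | e2
    · linarith
    have e3 : pos s = pos t := by linarith
    have e4 : s + t = 0 := hzero _ (by linarith)
    have e5 : t = - s := by linarith
    have h3 := hiso s t (by linarith) (by linarith)
    rw [e3, sub_self, abs_zero] at h3
    have e6 : s - t = 0 := by
      by_contra hne
      have := hpos _ hne
      linarith
    have e7 : s = 0 := by omega
    have e8 : t = 0 := by omega
    rw [e7, e8]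
    simp [hpos0]
  have hposneg : ∀ s, ρ s < η0 → pos (-s) = - pos s := by
    intro s hs
    have := hadd s (-s) hs (by rwa [hneg])
    rw [add_neg_cancel, hpos0] at this
    linarith
  -- small step
  obtain ⟨t1, h, hh, hhη, ht1⟩ : ∃ (t1 : ℤ) (h : ℝ), 0 < h ∧ h < η0 / 6 ∧ pos t1 = h := by
    obtain ⟨t1, h1, h2⟩ := hsmall (η0 / 6) (by positivity)
    have h3 := hpos t1 h1
    rw [← habs] at h2 h3
    rcases abs_cases (pos t1) with ⟨e1, e2⟩ | ⟨e1, e2⟩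
    · exact ⟨t1, _, by linarith, by linarith, rfl⟩
    · refine ⟨-t1, _, ?_, ?_, rfl⟩ <;> rw [hposneg t1 (by rw [← habs]; linarith)] <;> linarith
  have hρt1 : ρ t1 = h := by rw [← habs, ht1, abs_of_pos hh]
  have hmulN : ∀ n : ℕ, n * h < η0 → pos (n * t1) = n * h := by
    intro n
    induction n with
    | zero => intro _; simp [hpos0]
    | succ n ih =>
      intro hn
      push_cast at hn ⊢
      have e := ih (by linarith)
      have e2 : ρ (n * t1) < η0 := by
        rw [← habs, e, abs_of_nonneg (by positivity)]; linarith
      rw [add_mul, one_mul, hadd _ _ e2 (by rw [hρt1]; linarith), e, ht1]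
      ring
  have hmul : ∀ j : ℤ, |j * h| < η0 → pos (j * t1) = j * h ∧ ρ (j * t1) < η0 := by
    intro j hj
    have main : pos (j * t1) = j * h := by
      obtain ⟨n, rfl | rfl⟩ := j.eq_nat_or_neg
      · rw [Int.cast_natCast, abs_of_nonneg (by positivity)] at hj
        rw [Int.cast_natCast]
        exact hmulN n hj
      · rw [Int.cast_neg, Int.cast_natCast, neg_mul, abs_neg, abs_of_nonneg (by positivity)] at hj
        have h2 := hmulN n hj
        have h3 : ρ (n * t1) < η0 := by
          rw [← habs, h2, abs_of_nonneg (by positivity)]; exact hj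
        rw [neg_mul, hposneg _ h3, h2]
        push_cast
        ring
    refine ⟨main, ?_⟩
    rw [← habs, main]; exact hj
  let H : AddSubgroup (ℤ × ℝ) := AddSubgroup.closure {w | ρ w.1 < η0 / 3 ∧ w.2 = pos w.1}
  have hform : ∀ w ∈ H, ∃ (j r : ℤ), ρ r < h ∧ w.1 = j * t1 + r ∧ w.2 = j * h + pos r := by
    have step : ∀ (t : ℤ), ρ t < η0 / 3 → ∀ w : ℤ × ℝ,
        (∃ (j r : ℤ), ρ r < h ∧ w.1 = j * t1 + r ∧ w.2 = j * h + pos r) →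
        ∃ (j r : ℤ), ρ r < h ∧ t + w.1 = j * t1 + r ∧ pos t + w.2 = j * h + pos r := by
      rintro t ht w ⟨j, r, hr, e1, e2⟩
      have hpt : |pos t| < η0 / 3 := by rw [habs]; exact ht
      have hpr : |pos r| < h := by rw [habs]; exact hr
      rw [abs_lt] at hpt hpr
      let i : ℤ := ⌊(pos t + pos r) / h⌋
      have hi1 : (i : ℝ) * h ≤ pos t + pos r := by
        rw [← le_div_iff₀ hh]; exact Int.floor_le _
      have hi2 : pos t + pos r < i * h + h := by
        have := Int.lt_floor_add_one ((pos t + pos r) / h)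
        rw [div_lt_iff₀ hh] at this
        calc _ < _ := this
          _ = _ := by simp only [i]; ring
      have hih : |((-i : ℤ) : ℝ) * h| < η0 := by
        push_cast
        rw [neg_mul, abs_neg, abs_lt]; constructor <;> linarith
      obtain ⟨m1, m2⟩ := hmul (-i) hih
      have hptr : pos (t + r) = pos t + pos r := hadd _ _ (by linarith) (by linarith)
      have hρtr : ρ (t + r) < η0 := by rw [← habs, hptr, abs_lt]; constructor <;> linarith
      have hfin : pos (t + r + (-i) * t1) = pos t + pos r - i * h := by
        rw [hadd _ _ hρtr m2, m1, hptr]; push_cast; ring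
      refine ⟨j + i, t + r + (-i) * t1, ?_, ?_, ?_⟩
      · rw [← habs, hfin, abs_lt]; constructor <;> linarith
      · rw [e1]; ring
      · rw [e2, hfin]; push_cast; ring
    intro w hw
    induction hw using AddSubgroup.closure_induction_left with
    | zero => exact ⟨0, 0, by rw [h0]; exact hh, by simp, by simp [hpos0]⟩
    | add_left a ha y hy ih =>
      obtain ⟨j, r, q1, q2, q3⟩ := step a.1 ha.1 y ih
      refine ⟨j, r, q1, by simpa using q2, ?_⟩
      rw [← q3, ← ha.2]; simp
    | neg_add_cancel a ha y hy ih =>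
      obtain ⟨j, r, q1, q2, q3⟩ := step (-a.1) (by rw [hneg]; exact ha.1) y ih
      refine ⟨j, r, q1, by simpa using q2, ?_⟩
      rw [← q3, hposneg _ (by have := ha.1; linarith), ← ha.2]; simp
  have hkey : ∀ w ∈ H, |w.2| < η0 / 3 → pos w.1 = w.2 := by
    intro w hw hw2
    obtain ⟨j, r, hr, e1, e2⟩ := hform w hw
    have hpr : |pos r| < h := by rw [habs]; exact hr
    rw [e2] at hw2
    have hjh : |(j : ℝ) * h| < η0 := by
      rw [abs_lt] at *; constructor <;> linarith
    obtain ⟨m1, m2⟩ := hmul j hjh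
    rw [e1, e2, hadd _ _ m2 (by linarith), m1]
  have hgenH : ∀ t : ℤ, ∃ v, (t, v) ∈ H := by
    intro t
    have ht : t ∈ AddSubgroup.closure {t : ℤ | ρ t < η0 / 3} := by
      rw [hgen _ (by positivity)]; trivial
    induction ht using AddSubgroup.closure_induction with
    | mem t ht => exact ⟨pos t, AddSubgroup.subset_closure ⟨ht, rfl⟩⟩
    | zero => exact ⟨0, H.zero_mem⟩
    | add a b _ _ iha ihb =>
      obtain ⟨v, hv⟩ := iha
      obtain ⟨w, hw⟩ := ihb
      exact ⟨v + w, H.add_mem hv hw⟩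
    | neg a _ iha =>
      obtain ⟨v, hv⟩ := iha
      exact ⟨-v, H.neg_mem hv⟩
  let Λ : AddSubgroup ℝ := H.comap (AddMonoidHom.inr ℤ ℝ)
  have hΛ : ∀ v, v ∈ Λ ↔ ((0 : ℤ), v) ∈ H := fun v => Iff.rfl
  obtain ⟨c, hc⟩ := hgenH 1
  have hcz : ∀ t : ℤ, (t, (t : ℝ) * c) ∈ H := by
    intro t
    have := H.zsmul_mem hc t
    simpa using this
  have hsm : ∀ t, ρ t < η0 / 3 → pos t - t * c ∈ Λ := by
    intro t ht
    rw [hΛ]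
    have h1 : (t, pos t) ∈ H := AddSubgroup.subset_closure ⟨ht, rfl⟩
    have := H.sub_mem h1 (hcz t)
    simpa using this
  obtain ⟨p0, hp0⟩ := AddSubgroup.cyclic_of_isolated_zero (H := Λ) (a := η0 / 3)
    (by positivity) (by
      rw [Set.disjoint_left]
      intro v hv hv2
      have := hkey (0, v) hv (by rw [abs_of_pos hv2.1]; exact hv2.2)
      simp only [hpos0] at this
      have := hv2.1
      linarith)
  have hmemΛ : ∀ v, v ∈ Λ ↔ ∃ k : ℤ, v = k * p0 := by
    intro v
    rw [hp0, AddSubgroup.mem_closure_singleton]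
    constructor
    · rintro ⟨k, hk⟩; exact ⟨k, by rw [← hk]; simp⟩
    · rintro ⟨k, hk⟩; exact ⟨k, by rw [hk]; simp⟩
  have hp0ne : p0 ≠ 0 := by
    rintro rfl
    have h1 : ∀ t, ρ t < η0 / 3 → ρ t = |(t : ℝ)| * |c| := by
      intro t ht
      obtain ⟨k, hk⟩ := (hmemΛ _).mp (hsm t ht)
      rw [mul_zero] at hk
      rw [← habs, show pos t = t * c by linarith, abs_mul]
    obtain ⟨t, ht, hts⟩ := hsmall (η0 / 3) (by positivity)
    have h2 := hpos t ht
    rw [h1 t hts] at h2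
    have hcpos : 0 < |c| := by
      by_contra hcon
      have : |c| = 0 := le_antisymm (not_lt.mp hcon) (abs_nonneg c)
      rw [this] at h2; simp at h2
    obtain ⟨t', ht', hts'⟩ := hsmall (min (η0 / 3) |c|) (by positivity)
    have h3 := h1 t' (lt_of_lt_of_le hts' (min_le_left _ _))
    have h4 := lt_of_lt_of_le hts' (min_le_right _ _)
    rw [h3] at h4
    have h5 : (1 : ℝ) ≤ |(t' : ℝ)| := by
      have := Int.one_le_abs ht'
      exact_mod_cast this
    nlinarith
  obtain ⟨p, hp, hmemp⟩ : ∃ p : ℝ, 0 < p ∧ ∀ v, v ∈ Λ ↔ ∃ k : ℤ, v = k * p := by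
    refine ⟨|p0|, abs_pos.mpr hp0ne, ?_⟩
    intro v
    rw [hmemΛ]
    rcases abs_choice p0 with e | e
    · rw [e]
    · rw [e]
      constructor
      · rintro ⟨k, hk⟩; exact ⟨-k, by push_cast; linarith⟩
      · rintro ⟨k, hk⟩; exact ⟨-k, by push_cast; linarith⟩
  have hA : ∀ t k : ℤ, |(t : ℝ) * (c / p) - k| < η0 / 3 / p →
      ρ t = p * |(t : ℝ) * (c / p) - k| := by
    intro t k htk
    have e1 : p * |(t : ℝ) * (c / p) - k| = |(t : ℝ) * c - k * p| := by
      rw [← abs_of_pos hp, ← abs_mul, abs_of_pos hp]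
      congr 1
      field_simp
    have h1 : ((0 : ℤ), (k : ℝ) * p) ∈ H := (hΛ _).mp ((hmemp _).mpr ⟨k, rfl⟩)
    have h2 := H.sub_mem (hcz t) h1
    simp only [Prod.mk_sub_mk, sub_zero] at h2
    rw [lt_div_iff₀ hp, mul_comm, e1] at htk
    have h3 : pos t = t * c - k * p := hkey _ h2 htk
    rw [e1, ← h3, habs]
  refine ⟨p, c / p, min (η0 / 3) (η0 / 3 / p), hp, ?_, by positivity, ?_, ?_⟩
  · intro ⟨q, hq⟩
    have hd : (q.den : ℤ) ≠ 0 := by exact_mod_cast q.den_nz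
    have e : ((q.den : ℤ) : ℝ) * (c / p) - (q.num : ℤ) = 0 := by
      rw [← hq]
      have : (q.den : ℝ) ≠ 0 := by exact_mod_cast q.den_nz
      rw [sub_eq_zero]
      push_cast
      have h1 := Rat.den_mul_eq_num q
      exact_mod_cast h1
    have := hA q.den q.num (by rw [e, abs_zero]; positivity)
    rw [e, abs_zero, mul_zero] at this
    have := hpos _ hd
    linarith
  · intro t k htk
    exact hA t k (lt_of_lt_of_le htk (min_le_right _ _))
  · intro t ht
    obtain ⟨k, hk⟩ := (hmemp _).mp (hsm t (lt_of_lt_of_le ht (min_le_left _ _)))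
    refine ⟨-k, ?_⟩
    rw [← habs, ← abs_of_pos hp, ← abs_mul, abs_of_pos hp]
    congr 1
    rw [show pos t = t * c + k * p by linarith]
    push_cast
    field_simp
    ring

end Abstract

lemma Good.circle {x : Seq2} (h : Good x) (hTM : TM x) :
    ∃ p α η : ℝ, 0 < p ∧ Irrational α ∧ 0 < η ∧
      (∀ t k : ℤ, |t * α - k| < η → rz x t = p * |t * α - k|) ∧
      (∀ t : ℤ, rz x t < η → ∃ k : ℤ, rz x t = p * |t * α - k|) := by
  obtain ⟨κ, hκ, hl⟩ := h.zlin hTM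
  exact abstract_circle (rz x) (rz_nonneg x) (rz_zero x) (rz_neg x) (rz_add x)
    (fun t ht => h.rz_pos ht) κ hκ hl (fun ε hε => h.zsmall hε) (fun ε hε => h.zgen hTM hε)

structure Circ (x : Seq2) (α p η : ℝ) : Prop where
  hp : 0 < p
  irr : Irrational α
  hη : 0 < η
  h1 : ∀ t k : ℤ, |t * α - k| < η → rz x t = p * |t * α - k|
  h2 : ∀ t : ℤ, rz x t < η → ∃ k : ℤ, rz x t = p * |t * α - k|

section
variable {x : Seq2} {α p η : ℝ}

lemma irr_ne {α : ℝ} (h : Irrational α) {t k : ℤ} (ht : t ≠ 0) : (t : ℝ) * α ≠ k := by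
  intro he
  have := h.intCast_mul ht
  rw [he] at this
  exact this ⟨k, by simp⟩

lemma Circ.near (C : Circ x α p η) (h : Good x) {δ : ℝ} (hδ : 0 < δ) :
    ∃ K, ∀ m m', EW x K m m' → ∃ k : ℤ, |((m' : ℝ) - m) * α - k| < δ := by
  have hε : 0 < min (p * δ) η := lt_min (mul_pos C.hp hδ) C.hη
  obtain ⟨K, hK⟩ := h.small hε
  refine ⟨K, ?_⟩
  have main : ∀ m t, EW x K m (m + t) → ∃ k : ℤ, |(t : ℝ) * α - k| < δ := by
    intro m t he
    have h1 := hK t m he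
    rw [rho_comm, rho_eq_rz] at h1
    simp only [Nat.cast_zero, sub_zero] at h1
    obtain ⟨k, hk⟩ := C.h2 t (lt_of_lt_of_le h1 (min_le_right _ _))
    refine ⟨k, ?_⟩
    have h3 := lt_of_lt_of_le h1 (min_le_left _ _)
    rw [hk, Int.cast_natCast] at h3
    exact lt_of_mul_lt_mul_left h3 C.hp.le
  intro m m' he
  rcases le_total m m' with hle | hle
  · obtain ⟨t, rfl⟩ := Nat.exists_eq_add_of_le hle
    obtain ⟨k, hk⟩ := main m t he
    refine ⟨k, ?_⟩
    push_cast
    rwa [add_sub_cancel_left]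
  · obtain ⟨t, rfl⟩ := Nat.exists_eq_add_of_le hle
    obtain ⟨k, hk⟩ := main m' t he.symm
    refine ⟨-k, ?_⟩
    rw [← abs_neg]
    push_cast
    convert hk using 2
    ring

lemma Circ.pos_ret (C : Circ x α p η) (h : Good x) (V : Finset ℕ) {ε : ℝ} (hε : 0 < ε) :
    ∃ t ≥ 1, ∃ k : ℤ, Ret x V t ∧ 0 < (t : ℝ) * α - k ∧ (t : ℝ) * α - k < ε := by
  obtain ⟨K1, hK1⟩ := h.ret_of_word V
  obtain ⟨K2, hK2⟩ := C.near h (half_pos hε)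
  obtain ⟨t, ht, _, he⟩ := ret_div h.ur.rec (max K1 K2) 1 1 le_rfl
  have e1 : EW x K1 0 (0 + t) := by
    rw [zero_add]; exact he.mono (Finset.range_mono (le_max_left _ _))
  obtain ⟨k, hk⟩ := hK2 0 t (he.mono (Finset.range_mono (le_max_right _ _)))
  simp only [Nat.cast_zero, sub_zero] at hk
  have hne : (t : ℝ) * α - k ≠ 0 := by
    have := irr_ne C.irr (t := t) (k := k) (by omega)
    rw [Int.cast_natCast] at this
    exact sub_ne_zero.mpr this
  rcases lt_or_gt_of_ne hne with hneg | hpos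
  · obtain ⟨K3, hK3⟩ := C.near h (neg_pos.mpr hneg)
    obtain ⟨T, hT, _, he2⟩ := ret_div h.ur.rec (max (max K1 K2) K3) (t + 1) 1 le_rfl
    obtain ⟨k', hk'⟩ := hK3 0 T (he2.mono (Finset.range_mono (le_max_right _ _)))
    simp only [Nat.cast_zero, sub_zero] at hk'
    obtain ⟨d, rfl⟩ := Nat.exists_eq_add_of_le (show t ≤ T by omega)
    refine ⟨d, by omega, k' - k, ?_, ?_, ?_⟩
    · refine hK1 d t ?_
      have e3 : EW x K1 0 (t + d) :=
        he2.mono (Finset.range_mono ((le_max_left _ _).trans (le_max_left _ _)))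
      have e4 : EW x K1 0 t := he.mono (Finset.range_mono (le_max_left _ _))
      exact e4.symm.trans e3
    · push_cast at hk' ⊢
      rw [abs_lt] at hk'
      linarith
    · push_cast at hk' ⊢
      rw [abs_lt] at hk hk'
      linarith
  · refine ⟨t, ht, k, hK1 t 0 e1, hpos, ?_⟩
    rw [abs_lt] at hk
    linarith

lemma Circ.rho_eq (C : Circ x α p η) {a b : ℕ} {k : ℤ} (h : |((a : ℝ) - b) * α - k| < η) :
    rho x a b = p * |((a : ℝ) - b) * α - k| := by
  rw [rho_eq_rz]
  have := C.h1 ((a : ℤ) - b) k (by push_cast; exact h)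
  rw [this]
  push_cast
  rfl

lemma Circ.walk (C : Circ x α p η) (h : Good x) {t : ℕ} {k : ℤ} (hk0 : 0 < (t : ℝ) * α - k)
    (hk1 : (t : ℝ) * α - k < η) {m' : ℕ} {v : Fin 2} (hm' : x m' ≠ v) (k' : ℤ) (N : ℕ) :
    ∀ (m : ℕ) (j : ℤ), x m = v → (m : ℝ) * α - j < m' * α - k' →
      (m' : ℝ) * α - k' ≤ m * α - j + N * ((t : ℝ) * α - k) →
      ∃ (M : ℕ) (j' : ℤ), x M = v ∧ x (M + t) ≠ v ∧ (m : ℝ) * α - j ≤ M * α - j' ∧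
        (M : ℝ) * α - j' < m' * α - k' := by
  induction N with
  | zero =>
    intro m j _ h1 h2
    simp at h2
    linarith
  | succ N ih =>
    intro m j hm h1 h2
    by_cases hx : x (m + t) = v
    · by_cases hlast : (m' : ℝ) * α - k' ≤ m * α - j + (t * α - k)
      · exfalso
        have r1 : rho x m (m + t) = p * (t * α - k) := by
          have e : ((m : ℝ) - (m + t : ℕ)) * α - (-k : ℤ) = -(t * α - k) := by push_cast; ring
          rw [C.rho_eq (k := -k) (by rw [e, abs_neg, abs_of_pos hk0]; exact hk1), e, abs_neg,
            abs_of_pos hk0]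
        have e2 : ((m : ℝ) - m') * α - (j - k' : ℤ) = -((m' * α - k') - (m * α - j)) := by
          push_cast; ring
        have r2 : rho x m m' = p * ((m' * α - k') - (m * α - j)) := by
          have a1 : |((m : ℝ) - m') * α - (j - k' : ℤ)| = (m' * α - k') - (m * α - j) := by
            rw [e2, abs_neg, abs_of_pos (by linarith)]
          rw [C.rho_eq (k := j - k') (by rw [a1]; linarith), a1]
        have r3 : rho x m' (m + t) = p * (t * α - k - ((m' * α - k') - (m * α - j))) := by
          have a1 : |((m' : ℝ) - (m + t : ℕ)) * α - (k' - j - k : ℤ)|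
              = (t * α - k - ((m' * α - k') - (m * α - j))) := by
            rw [← abs_neg, ← abs_of_nonneg
              (show 0 ≤ (t * α - k - ((m' * α - k') - (m * α - j))) by linarith)]
            congr 1
            push_cast
            ring
          rw [C.rho_eq (k := k' - j - k) (by rw [a1]; linarith), a1]
        have := h.none_of_rho_add (a := m) (b := m') (c := m + t) (by rw [r1, r2, r3]; ring) 0
        simp only [zero_add] at this
        exact this ⟨by rw [hm, hx], by rw [hm]; exact hm'⟩
      · push Not at hlast
        obtain ⟨M, j', q1, q2, q3, q4⟩ := ih (m + t) (j + k) hx (by push_cast; linarith)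
          (by push_cast at h2 ⊢; linarith)
        refine ⟨M, j', q1, q2, ?_, q4⟩
        push_cast at q3
        linarith
    · exact ⟨m, j, hm, hx, le_rfl, h1⟩

lemma Circ.nc (C : Circ x α p η) (h : Good x) {v : Fin 2} {m a z b : ℕ} {k ka kz kb : ℤ}
    (hm : x m = v) (ha : x a ≠ v) (hz : x z = v) (hb : x b ≠ v)
    (h1 : (m : ℝ) * α - k < a * α - ka) (h2 : (a : ℝ) * α - ka < z * α - kz)
    (h3 : (z : ℝ) * α - kz < b * α - kb) (h4 : (b : ℝ) * α - kb < m * α - k + 1) : False := by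
  obtain ⟨δ, hδ, hδ1, hδ2⟩ : ∃ δ > 0, δ ≤ (z * α - kz) - (a * α - ka) ∧
      δ ≤ m * α - k + 1 - (b * α - kb) :=
    ⟨min ((z * α - kz) - (a * α - ka)) (m * α - k + 1 - (b * α - kb)),
      lt_min (by linarith) (by linarith), min_le_left _ _, min_le_right _ _⟩
  obtain ⟨K, hK⟩ := C.near h hδ
  obtain ⟨V, hKV, hV⟩ := exists_sat h.bd (insert 0 (Finset.range K))
  obtain ⟨t, ht, q, hret, hq0, hq1⟩ := C.pos_ret h V C.hη
  have hN : ∀ y : ℝ, ∃ N : ℕ, y ≤ N * ((t : ℝ) * α - q) := by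
    intro y
    obtain ⟨N, hN⟩ := exists_nat_ge (y / ((t : ℝ) * α - q))
    exact ⟨N, by rwa [div_le_iff₀ hq0] at hN⟩
  obtain ⟨N1, hN1⟩ := hN ((a * α - ka) - (m * α - k))
  obtain ⟨N2, hN2⟩ := hN ((b * α - kb) - (z * α - kz))
  obtain ⟨M1, j1, p1, p2, p3, p4⟩ := C.walk h hq0 hq1 ha ka N1 m k hm h1 (by linarith)
  obtain ⟨M2, j2, r1, r2, r3, r4⟩ := C.walk h hq0 hq1 hb kb N2 z kz hz h3 (by linarith)
  have he := h.flow hV ht hret (s := 0) (hKV (by simp)) (v := v) (m := M1) (m' := M2) p1 p2 r1 r2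
  obtain ⟨i, hi⟩ := hK M1 M2 (he.mono ((Finset.subset_insert _ _).trans hKV))
  rw [abs_lt] at hi
  have hlow : (j2 - j1 - i : ℤ) < 1 := by
    by_contra hc
    push Not at hc
    have : (1 : ℝ) ≤ ((j2 - j1 - i : ℤ) : ℝ) := by exact_mod_cast hc
    push_cast at this
    linarith
  have hhigh : (-1 : ℤ) < (j2 - j1 - i : ℤ) := by
    by_contra hc
    push Not at hc
    have : ((j2 - j1 - i : ℤ) : ℝ) ≤ -1 := by exact_mod_cast hc
    push_cast at this
    linarith
  have : (j2 - j1 - i : ℤ) = 0 := by omega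
  have : ((j2 - j1 - i : ℤ) : ℝ) = 0 := by rw [this]; simp
  push_cast at this
  linarith

end

lemma T1_eq {r s : ℝ} : ((r : T1) = (s : T1)) ↔ ∃ k : ℤ, r - s = k := by
  rw [← sub_eq_zero, ← AddCircle.coe_sub, AddCircle.coe_eq_zero_iff]
  constructor
  · rintro ⟨n, hn⟩; exact ⟨n, by rw [← hn]; simp⟩
  · rintro ⟨n, hn⟩; exact ⟨n, by rw [hn]; simp⟩

lemma int_zero_of {k : ℤ} (h1 : (-1 : ℝ) < k) (h2 : (k : ℝ) < 1) : k = 0 := by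
  have a : (-1 : ℤ) < k := by exact_mod_cast h1
  have b : k < 1 := by exact_mod_cast h2
  omega

lemma arc_compl_image {J J' : Set ℝ} (hd : ∀ u ∈ J, ∀ w ∈ J', 0 < w - u ∧ w - u < 1)
    (hc : ∀ r : ℝ, ∃ k : ℤ, r + k ∈ J ∪ J') :
    ((fun r : ℝ => (r : T1)) '' J)ᶜ = (fun r : ℝ => (r : T1)) '' J' := by
  ext q
  induction q using QuotientAddGroup.induction_on with
  | H r =>
    constructor
    · intro hr
      obtain ⟨k, hk | hk⟩ := hc r
      · exact absurd ⟨r + k, hk, T1_eq.mpr ⟨k, by ring⟩⟩ hr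
      · exact ⟨r + k, hk, T1_eq.mpr ⟨k, by ring⟩⟩
    · rintro ⟨w, hw, hwr⟩ ⟨u, hu, hur⟩
      have : ((w : ℝ) : T1) = (u : T1) := by
        rw [show ((w : ℝ) : T1) = _ from hwr, show ((u : ℝ) : T1) = _ from hur]
      obtain ⟨k, hk⟩ := T1_eq.mp this
      have h1 := hd u hu w hw
      have : k = 0 := int_zero_of (by linarith) (by linarith)
      rw [this] at hk
      simp at hk
      linarith

lemma rep_Ico (a r : ℝ) : ∃ k : ℤ, a ≤ r + k ∧ r + k < a + 1 := by
  refine ⟨-⌊r - a⌋, ?_, ?_⟩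
  · have := Int.floor_le (r - a); push_cast; linarith
  · have := Int.lt_floor_add_one (r - a); push_cast; linarith

lemma rep_Ioc (a r : ℝ) : ∃ k : ℤ, a < r + k ∧ r + k ≤ a + 1 := by
  obtain ⟨k, h1, h2⟩ := rep_Ico (-a - 1) (-r)
  exact ⟨-k, by push_cast; linarith, by push_cast; linarith⟩

lemma arcs_of_ordConnected {J : Set ℝ} {y : ℝ} (hJ : J.OrdConnected) (hne : J.Nonempty)
    (hsub : J ⊆ Ioo y (y + 1)) :
    IsArc ((fun r : ℝ => (r : T1)) '' J) ∧ IsArc ((fun r : ℝ => (r : T1)) '' J)ᶜ := by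
  have hbb : BddBelow J := ⟨y, fun r hr => (hsub hr).1.le⟩
  have hba : BddAbove J := ⟨y + 1, fun r hr => (hsub hr).2.le⟩
  obtain ⟨r0, hr0⟩ := hne
  have ha : y ≤ sInf J := le_csInf ⟨r0, hr0⟩ (fun r hr => (hsub hr).1.le)
  have hb : sSup J ≤ y + 1 := csSup_le ⟨r0, hr0⟩ (fun r hr => (hsub hr).2.le)
  have hab : sInf J ≤ sSup J := (csInf_le hbb hr0).trans (le_csSup hba hr0)
  have hmem := (isPreconnected_iff_ordConnected.mpr hJ).mem_intervals
  generalize sInf J = a at *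
  generalize sSup J = b at *
  simp only [mem_insert_iff, mem_singleton_iff] at hmem
  have nb : ∀ c : ℝ, ¬ Ici c ⊆ J := fun c hc => by
    have := (hsub (hc (show max c (y + 1) ∈ Ici c from mem_Ici.mpr (le_max_left _ _)))).2
    exact absurd (le_max_right c (y + 1)) (not_le.mpr this)
  have nb2 : ∀ c : ℝ, ¬ Iic c ⊆ J := fun c hc => by
    have := (hsub (hc (show min c y ∈ Iic c from mem_Iic.mpr (min_le_left _ _)))).1
    exact absurd (min_le_right c y) (not_le.mpr this)
  rcases hmem with e | e | e | e | e | e | e | e | e | e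
  · refine ⟨⟨a, b, by linarith, Or.inl (by rw [e])⟩, ⟨b, a + 1, by linarith, ?_⟩⟩
    right; right; right
    apply arc_compl_image
    · rw [e]
      rintro u ⟨h1, h2⟩ w ⟨h3, h4⟩
      constructor <;> linarith
    · intro r
      obtain ⟨k, h1, h2⟩ := rep_Ico a r
      refine ⟨k, ?_⟩
      rw [e]
      by_cases hk : r + k ≤ b
      · exact Or.inl ⟨h1, hk⟩
      · exact Or.inr ⟨not_le.mp hk, h2⟩
  · refine ⟨⟨a, b, by linarith, Or.inr (Or.inl (by rw [e]))⟩, ⟨b, a + 1, by linarith, ?_⟩⟩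
    right; left
    apply arc_compl_image
    · rw [e]
      rintro u ⟨h1, h2⟩ w ⟨h3, h4⟩
      constructor <;> linarith
    · intro r
      obtain ⟨k, h1, h2⟩ := rep_Ico a r
      refine ⟨k, ?_⟩
      rw [e]
      by_cases hk : r + k < b
      · exact Or.inl ⟨h1, hk⟩
      · exact Or.inr ⟨not_lt.mp hk, h2⟩
  · refine ⟨⟨a, b, by linarith, Or.inr (Or.inr (Or.inl (by rw [e])))⟩, ⟨b, a + 1, by linarith, ?_⟩⟩
    right; right; left
    apply arc_compl_image
    · rw [e]
      rintro u ⟨h1, h2⟩ w ⟨h3, h4⟩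
      constructor <;> linarith
    · intro r
      obtain ⟨k, h1, h2⟩ := rep_Ioc a r
      refine ⟨k, ?_⟩
      rw [e]
      by_cases hk : r + k ≤ b
      · exact Or.inl ⟨h1, hk⟩
      · exact Or.inr ⟨not_le.mp hk, h2⟩
  · refine ⟨⟨a, b, by linarith, Or.inr (Or.inr (Or.inr (by rw [e])))⟩, ⟨b, a + 1, by linarith, ?_⟩⟩
    left
    apply arc_compl_image
    · rw [e]
      rintro u ⟨h1, h2⟩ w ⟨h3, h4⟩
      constructor <;> linarith
    · intro r
      obtain ⟨k, h1, h2⟩ := rep_Ioc a r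
      refine ⟨k, ?_⟩
      rw [e]
      by_cases hk : r + k < b
      · exact Or.inl ⟨h1, hk⟩
      · exact Or.inr ⟨not_lt.mp hk, h2⟩
  · exact absurd (by rw [e]) (nb a)
  · exact absurd (by rw [e]; intro r hr; exact lt_of_lt_of_le (lt_add_one a) hr) (nb (a + 1))
  · exact absurd (by rw [e]) (nb2 b)
  · exact absurd (by rw [e]; intro r hr; exact lt_of_le_of_lt hr (sub_one_lt b)) (nb2 (b - 1))
  · exact absurd (by rw [e]; exact subset_univ _) (nb 0)
  · rw [e] at hr0; exact absurd hr0 (notMem_empty _)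

lemma lift_inj {α : ℝ} (h : Irrational α) {m n : ℕ} {j k : ℤ}
    (he : (m : ℝ) * α - j = n * α - k) : m = n ∧ j = k := by
  have hmn : m = n := by
    by_contra hne
    have := irr_ne h (t := (m : ℤ) - n) (k := j - k) (by omega)
    push_cast at this
    apply this
    linarith
  refine ⟨hmn, ?_⟩
  subst hmn
  have : (j : ℝ) = k := by linarith
  exact_mod_cast this

lemma Circ.coding {x : Seq2} {α p η : ℝ} (C : Circ x α p η) (h : Good x) :
    SimpleCircleCoding x := by
  obtain ⟨m0, _, hm0, _⟩ := h.flip (t := 1) le_rfl 0 0 0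
  obtain ⟨m1, _, hm1, _⟩ := h.flip (t := 1) le_rfl 1 0 0
  rw [add_zero] at hm0 hm1
  let y : ℝ := m0 * α
  have hlift : ∀ n : ℕ, x n = 1 → ∃ k : ℤ, y < n * α - k ∧ n * α - k < y + 1 := by
    intro n hn
    obtain ⟨k, h1, h2⟩ := rep_Ico y (n * α)
    refine ⟨-k, ?_, by push_cast; linarith⟩
    push_cast
    rw [sub_neg_eq_add]
    refine lt_of_le_of_ne h1 ?_
    intro he
    have := (lift_inj C.irr (m := m0) (n := n) (j := 0) (k := -k) (by
      push_cast; simp only [y] at he; linarith)).1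
    rw [this, hn] at hm0
    exact absurd hm0 (by decide)
  let S : Set ℝ := {r | ∃ (n : ℕ) (k : ℤ), x n = 1 ∧ r = n * α - k ∧ y < r ∧ r < y + 1}
  let J : Set ℝ := {r | ∃ s ∈ S, ∃ s' ∈ S, s ≤ r ∧ r ≤ s'}
  have hSJ : S ⊆ J := fun s hs => ⟨s, hs, s, hs, le_rfl, le_rfl⟩
  have hJo : J.OrdConnected := by
    refine ⟨?_⟩
    rintro r ⟨s, hs, _, _, h1, _⟩ r' ⟨_, _, s', hs', _, h2⟩ w hw
    exact ⟨s, hs, s', hs', h1.trans hw.1, hw.2.trans h2⟩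
  have hJsub : J ⊆ Ioo y (y + 1) := by
    rintro r ⟨s, ⟨_, _, _, _, hs, _⟩, s', ⟨_, _, _, _, _, hs'⟩, h1, h2⟩
    exact ⟨by linarith, by linarith⟩
  have hJne : J.Nonempty := by
    obtain ⟨k, h1, h2⟩ := hlift m1 hm1
    exact ⟨_, hSJ ⟨m1, k, hm1, rfl, h1, h2⟩⟩
  have key : ∀ n, x n = 1 ↔ (((n : ℝ) * α : ℝ) : T1) ∈ (fun r : ℝ => (r : T1)) '' J := by
    intro n
    constructor
    · intro hn
      obtain ⟨k, h1, h2⟩ := hlift n hn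
      exact ⟨n * α - k, hSJ ⟨n, k, hn, rfl, h1, h2⟩, T1_eq.mpr ⟨-k, by push_cast; ring⟩⟩
    · rintro ⟨r, ⟨s, ⟨a, ka, ha, rfl, ha1, ha2⟩, s', ⟨b, kb, hb, rfl, hb1, hb2⟩, h1, h2⟩, hr⟩
      obtain ⟨k, hk⟩ := T1_eq.mp hr
      have hr' : r = n * α - (-k : ℤ) := by push_cast; linarith
      subst hr'
      rcases h1.eq_or_lt with e | e
      · rw [← (lift_inj C.irr e).1]; exact ha
      rcases h2.eq_or_lt with e' | e'
      · rw [(lift_inj C.irr e').1]; exact hb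
      by_contra hn
      have hn0 : x n = 0 := by
        rcases fin2_cases (x n) with q | q
        · exact q
        · exact absurd q hn
      refine C.nc h (v := 0) (k := 0) hm0 (a := a) (b := b) (z := n) (by rw [ha]; decide) hn0
        (by rw [hb]; decide) (ka := ka) (kz := -k) (kb := kb) ?_ e e' ?_
      · push_cast; simp only [y] at ha1; linarith
      · push_cast; simp only [y] at hb2; linarith
  obtain ⟨A1, A0⟩ := arcs_of_ordConnected hJo hJne hJsub
  refine ⟨α, C.irr, ![((fun r : ℝ => (r : T1)) '' J)ᶜ, (fun r : ℝ => (r : T1)) '' J], ?_, ?_, ?_,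
    ?_, ?_⟩
  · intro i
    fin_cases i
    · exact A0
    · exact A1
  · intro i
    fin_cases i
    · refine ⟨((m0 : ℝ) * α : ℝ), ?_⟩
      intro hc
      have := (key m0).mpr hc
      rw [hm0] at this
      exact absurd this (by decide)
    · exact hJne.image _
  · exact disjoint_compl_left
  · exact compl_union_self _
  · intro n i
    fin_cases i
    · show x n = 0 ↔ _ ∈ (_ : Set T1)ᶜ
      rw [mem_compl_iff, ← key n]
      rcases fin2_cases (x n) with q | q <;> rw [q] <;> decide
    · exact key n

/-- Each letter is forced near some point of the circle. -/
lemma Circ.ball {x : Seq2} {α p η : ℝ} (C : Circ x α p η) (h : Good x) (v : Fin 2) :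
    ∃ r ε : ℝ, 0 < ε ∧ ∀ (n : ℕ) (k : ℤ), |(n : ℝ) * α - k - r| < ε → x n = v := by
  obtain ⟨w, hw⟩ : ∃ w : Fin 2, w ≠ v := by
    rcases fin2_cases v with h | h
    · exact ⟨1, by rw [h]; decide⟩
    · exact ⟨0, by rw [h]; decide⟩
  obtain ⟨m0, _, hm0, _⟩ := h.flip (t := 1) le_rfl w 0 0
  obtain ⟨a, _, ha, _⟩ := h.flip (t := 1) le_rfl v 0 0
  obtain ⟨b, hba, hb, _⟩ := h.flip (t := 1) le_rfl v 0 (a + 1)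
  rw [add_zero] at hm0 ha hb
  have hlift : ∀ n : ℕ, x n = v → ∃ k : ℤ, (m0 : ℝ) * α < n * α - k ∧ n * α - k < m0 * α + 1 := by
    intro n hn
    obtain ⟨k, h1, h2⟩ := rep_Ico (m0 * α) (n * α)
    refine ⟨-k, ?_, by push_cast; linarith⟩
    push_cast
    rw [sub_neg_eq_add]
    refine lt_of_le_of_ne h1 ?_
    intro he
    have := (lift_inj C.irr (m := m0) (n := n) (j := 0) (k := -k) (by
      push_cast; linarith)).1
    rw [this, hn] at hm0
    exact hw hm0.symm
  obtain ⟨ka, a1, a2⟩ := hlift a ha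
  obtain ⟨kb, b1, b2⟩ := hlift b hb
  have main : ∀ (c d : ℕ) (kc kd : ℤ), x c = v → x d = v → (m0 : ℝ) * α < c * α - kc →
      (c : ℝ) * α - kc < d * α - kd → d * α - kd < m0 * α + 1 →
      ∃ r ε : ℝ, 0 < ε ∧ ∀ (n : ℕ) (k : ℤ), |(n : ℝ) * α - k - r| < ε → x n = v := by
    intro c d kc kd hc hd q1 q2 q3
    refine ⟨((c * α - kc) + (d * α - kd)) / 2, ((d * α - kd) - (c * α - kc)) / 2, by linarith, ?_⟩
    intro n k hn
    by_contra hnv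
    rw [abs_lt] at hn
    refine C.nc h (v := w) (k := 0) hm0 (a := c) (b := d) (z := n) (by rw [hc]; exact hw.symm)
      (fin2_ne hnv hw.symm.symm) (by rw [hd]; exact hw.symm) (ka := kc) (kz := k) (kb := kd)
      ?_ ?_ ?_ ?_
    · push_cast; linarith
    · linarith
    · linarith
    · push_cast; linarith
  rcases lt_trichotomy ((a : ℝ) * α - ka) (b * α - kb) with q | q | q
  · exact main a b ka kb ha hb a1 q b2
  · have := (lift_inj C.irr q).1
    omega
  · exact main b a kb ka hb ha b1 q a2

def OneHole (x : Seq2) (Q a : ℕ) : Prop :=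
  a < Q ∧ ∀ m m', m % Q = m' % Q → m % Q ≠ a → x m = x m'

def PerCl (x : Seq2) (q b : ℕ) : Prop := ∃ g ≥ 1, q ∣ g ∧ ∀ m, m % q = b → x (m + g) = x m

lemma fin2_other (v : Fin 2) : ∃ w : Fin 2, w ≠ v := by
  rcases fin2_cases v with h | h
  · exact ⟨1, by rw [h]; decide⟩
  · exact ⟨0, by rw [h]; decide⟩

lemma mod_add_dvd {q g : ℕ} (hg : q ∣ g) (m : ℕ) : (m + g) % q = m % q := by
  obtain ⟨k, rfl⟩ := hg
  exact Nat.add_mul_mod_self_left m q k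

/-- in a non-periodic class, flips of both letters occur -/
lemma class_flip {x : Seq2} (hr : Recurrent x) {q b t : ℕ} (ht : 1 ≤ t) (hqt : q ∣ t)
    (hb : ¬ PerCl x q b) (v : Fin 2) : ∃ m, m % q = b ∧ x m = v ∧ x (m + t) ≠ v := by
  by_contra hcon
  push Not at hcon
  apply hb
  refine ⟨t, ht, hqt, fun m hm => ?_⟩
  by_cases hv : x m = v
  · rw [hv]; exact hcon m hm hv
  · have hv2 : x (m + t) ≠ v := by
      intro hc
      obtain ⟨T, hT, hd, he⟩ := ret_div hr (m + 1) 1 t ht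
      obtain ⟨k, rfl⟩ := hd
      have hall : ∀ j, x (m + t + t * j) = v := by
        intro j
        induction j with
        | zero => simpa using hc
        | succ j ih =>
          have := hcon (m + t + t * j)
            (by rw [add_assoc, mod_add_dvd (dvd_add hqt (hqt.mul_right j)), hm]) ih
          rw [← this]; congr 1; ring
      have h1 := he m (by simp)
      rw [zero_add] at h1
      apply hv
      rw [h1]
      have hk : k ≠ 0 := by rintro rfl; simp at hT
      obtain ⟨j, rfl⟩ := Nat.exists_eq_succ_of_ne_zero hk
      rw [← hall j]; congr 1; simp only [Nat.succ_eq_add_one]; ring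
    exact fin2_ne hv2 (Ne.symm hv).symm

lemma Good.classA {x : Seq2} (h : Good x) {q N : ℕ} (hq : 1 ≤ q) (hR : RecL x q N) :
    ∃ a < q, ∀ b < q, b ≠ a → PerCl x q b := by
  by_cases hall : ∃ a < q, ¬ PerCl x q a
  · obtain ⟨a, ha, hna⟩ := hall
    refine ⟨a, ha, fun b hb hne => ?_⟩
    by_contra hnb
    obtain ⟨V, hNV, hV⟩ := exists_sat h.bd (insert 0 (Finset.range N))
    obtain ⟨t, ht, hqt, hret, _⟩ := h.exists_ret V 0 1 q hq
    obtain ⟨m, m1, m2, m3⟩ := class_flip h.ur.rec ht hqt hna 0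
    obtain ⟨n, n1, n2, n3⟩ := class_flip h.ur.rec ht hqt hnb 0
    have he := h.flow hV ht hret (s := 0) (hNV (by simp)) (v := 0) (m := m) (m' := n) m2 m3 n2 n3
    have := hR m n (he.mono ((Finset.subset_insert _ _).trans hNV))
    omega
  · push Not at hall
    exact ⟨0, by omega, fun b hb _ => hall b hb⟩

lemma Good.common {x : Seq2} (h : Good x) {q N : ℕ} (hq : 1 ≤ q) (hR : RecL x q N) :
    ∃ a < q, ∃ P ≥ 1, q ∣ P ∧ ∀ m, m % q ≠ a → x (m + P) = x m := by
  obtain ⟨a, ha, hper⟩ := h.classA hq hR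
  have : ∀ b, ∃ g ≥ 1, b < q → b ≠ a → q ∣ g ∧ ∀ m, m % q = b → x (m + g) = x m := by
    intro b
    by_cases hb : b < q ∧ b ≠ a
    · obtain ⟨g, h1, h2⟩ := hper b hb.1 hb.2
      exact ⟨g, h1, fun _ _ => h2⟩
    · exact ⟨1, le_rfl, fun h1 h2 => absurd ⟨h1, h2⟩ hb⟩
  choose g hg1 hg2 using this
  have hmul : ∀ b k m, b < q → b ≠ a → m % q = b → x (m + g b * k) = x m := by
    intro b k m hb hne hm
    induction k with
    | zero => simp
    | succ k ih =>
      rw [← ih]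
      have := (hg2 b hb hne).2 (m + g b * k)
        (by rw [mod_add_dvd ((hg2 b hb hne).1.mul_right k), hm])
      rw [← this]; congr 1; ring
  refine ⟨a, ha, q * ∏ b ∈ Finset.range q, g b, ?_, dvd_mul_right _ _, ?_⟩
  · have : 0 < ∏ b ∈ Finset.range q, g b := Finset.prod_pos (fun b _ => hg1 b)
    exact Nat.mul_pos hq this
  · intro m hm
    have hb : m % q < q := Nat.mod_lt _ hq
    have hd : g (m % q) ∣ q * ∏ b ∈ Finset.range q, g b :=
      (Finset.dvd_prod_of_mem g (Finset.mem_range.mpr hb)).mul_left q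
    obtain ⟨k, hk⟩ := hd
    rw [hk]
    exact hmul _ k m hb hm rfl

lemma Good.refine_rec {x : Seq2} (h : Good x) {q N : ℕ} (hq : 1 ≤ q) (hR : RecL x q N) :
    (∃ a, OneHole x q a) ∨ ∃ q', q ∣ q' ∧ q < q' ∧ RecL x q' (max N q') := by
  classical
  obtain ⟨a, ha, P, hP1, hqP, hP⟩ := h.common hq hR
  have hex : ∃ d, 1 ≤ d ∧ q ∣ d ∧ ∀ m, m % q ≠ a → x (m + d) = x m := ⟨P, hP1, hqP, hP⟩
  obtain ⟨h1, h2, h3⟩ := Nat.find_spec hex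
  have hmin := fun d => Nat.find_min' hex (m := d)
  generalize Nat.find hex = q' at *
  have hmul : ∀ k m, m % q ≠ a → x (m + q' * k) = x m := by
    intro k m hm
    induction k with
    | zero => simp
    | succ k ih =>
      rw [← ih, ← h3 (m + q' * k) (by rw [mod_add_dvd (h2.mul_right k)]; exact hm)]
      congr 1; ring
  have hcong : ∀ m m', m % q' = m' % q' → m % q ≠ a → x m = x m' := by
    intro m m' he hm
    have key : ∀ m, m % q ≠ a → x m = x (m % q') := by
      intro m hm
      have e := Nat.mod_add_div m q'
      have : m % q' % q = m % q := Nat.mod_mod_of_dvd m h2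
      conv_lhs => rw [← e]
      exact hmul _ _ (by rw [this]; exact hm)
    have hm' : m' % q ≠ a := by
      rw [← Nat.mod_mod_of_dvd m' h2, ← he, Nat.mod_mod_of_dvd m h2]; exact hm
    rw [key m hm, key m' hm', he]
  rcases (Nat.le_of_dvd h1 h2).eq_or_lt with e | e
  · left
    subst e
    exact ⟨a, ha, hcong⟩
  · right
    refine ⟨q', h2, e, ?_⟩
    have main : ∀ m d, EW x (max N q') m (m + d) → q' ∣ d := by
      intro m d he
      have hqd : q ∣ d := by
        have := hR m (m + d) (he.mono (Finset.range_mono (le_max_left _ _)))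
        have h5 : m ≡ m + d [MOD q] := this
        have := (Nat.modEq_iff_dvd' (by omega)).mp h5
        rwa [Nat.add_sub_cancel_left] at this
      have hper : ∀ n, n % q ≠ a → x (n + d) = x n := by
        intro n hn
        obtain ⟨i, hi, hin⟩ : ∃ i < q', (m + i) % q' = n % q' := by
          refine ⟨(n + (q' - m % q')) % q', Nat.mod_lt _ h1, ?_⟩
          rw [Nat.add_mod_mod]
          have hm := Nat.mod_add_div m q'
          have hl := Nat.mod_lt m h1
          have : m + (n + (q' - m % q')) = n + q' * (m / q' + 1) := by
            rw [mul_add, mul_one]; omega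
          rw [this, Nat.add_mul_mod_self_left]
        have hiq : (m + i) % q ≠ a := by
          rw [← Nat.mod_mod_of_dvd _ h2, hin, Nat.mod_mod_of_dvd _ h2]; exact hn
        have e1 := hcong (m + i) n hin hiq
        have e2 := hcong (m + i + d) (n + d) (by rw [Nat.add_mod, hin, ← Nat.add_mod])
          (by rw [mod_add_dvd hqd]; exact hiq)
        have e3 := he i (by simp; right; exact hi)
        rw [← e1, ← e2, e3]; congr 1; ring
      -- minimality
      by_contra hnd
      have hr0 : 1 ≤ d % q' := Nat.pos_of_ne_zero (fun h0 => hnd (Nat.dvd_of_mod_eq_zero h0))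
      have hqr : q ∣ d % q' := (Nat.dvd_mod_iff h2).mpr hqd
      have := hmin (d % q') ⟨hr0, hqr, fun m hm => by
        have e1 := hmul (d / q') (m + d % q') (by rw [mod_add_dvd hqr]; exact hm)
        rw [← e1, add_assoc, Nat.mod_add_div]
        exact hper m hm⟩
      exact absurd (Nat.mod_lt d h1) (by omega)
    intro m m' he
    rcases le_total m m' with hle | hle
    · obtain ⟨d, rfl⟩ := Nat.exists_eq_add_of_le hle
      rw [mod_add_dvd (main m d he)]
    · obtain ⟨d, rfl⟩ := Nat.exists_eq_add_of_le hle
      rw [mod_add_dvd (main m' d he.symm)]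

/-- If every residue carries two patterns, each residue carries only two. -/
lemma Good.two_pats {x : Seq2} (h : Good x) {q : ℕ} (hq : 1 ≤ q) (hR : RecL x q q)
    (h2 : ∀ r < q, ∃ m m', m % q = r ∧ m' % q = r ∧ ¬ EW x q m m') {r m1 m2 m3 : ℕ} (hr : r < q)
    (e1 : m1 % q = r) (e2 : m2 % q = r) (e3 : m3 % q = r) (h12 : ¬ EW x q m1 m2)
    (h13 : ¬ EW x q m1 m3) (h23 : ¬ EW x q m2 m3) : False := by
  classical
  have : ∀ r, ∃ m m', r < q → m % q = r ∧ m' % q = r ∧ ¬ EW x q m m' := by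
    intro r
    by_cases hr : r < q
    · obtain ⟨m, m', hh⟩ := h2 r hr
      exact ⟨m, m', fun _ => hh⟩
    · exact ⟨0, 0, fun hc => absurd hc hr⟩
  choose f g hfg using this
  obtain ⟨m, hm, hmf, hmg⟩ : ∃ m, m % q = r ∧ ¬ EW x q m (f r) ∧ ¬ EW x q m (g r) := by
    by_contra hcon
    push Not at hcon
    have c1 := hcon m1 e1
    have c2 := hcon m2 e2
    have c3 := hcon m3 e3
    have tr : ∀ {a b c : ℕ}, EW x q a c → EW x q b c → EW x q a b :=
      fun p1 p2 => EE.trans p1 (EE.symm p2)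
    by_cases q1 : EW x q m1 (f r)
    · have q2 : ¬ EW x q m2 (f r) := fun hc => h12 (tr q1 hc)
      have q3 : ¬ EW x q m3 (f r) := fun hc => h13 (tr q1 hc)
      exact h23 (tr (c2 q2) (c3 q3))
    · by_cases q2 : EW x q m2 (f r)
      · have q3 : ¬ EW x q m3 (f r) := fun hc => h23 (tr q2 hc)
        exact h13 (tr (c1 q1) (c3 q3))
      · exact h12 (tr (c1 q1) (c2 q2))
  have finj : Set.InjOn f (Finset.range q : Set ℕ) := by
    intro a ha b hb hab
    simp at ha hb
    rw [← (hfg a ha).1, ← (hfg b hb).1, hab]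
  have ginj : Set.InjOn g (Finset.range q : Set ℕ) := by
    intro a ha b hb hab
    simp at ha hb
    rw [← (hfg a ha).2.1, ← (hfg b hb).2.1, hab]
  have hdisj : Disjoint ((Finset.range q).image f) ((Finset.range q).image g) := by
    rw [Finset.disjoint_left]
    intro w hw hw2
    obtain ⟨a, ha, rfl⟩ := Finset.mem_image.mp hw
    obtain ⟨b, hb, hab⟩ := Finset.mem_image.mp hw2
    simp at ha hb
    have : a = b := by rw [← (hfg a ha).1, ← (hfg b hb).2.1, hab]
    subst this
    exact (hfg a ha).2.2 (by rw [hab]; exact EE.refl _)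
  have hnm : m ∉ (Finset.range q).image f ∪ (Finset.range q).image g := by
    intro hc
    rcases Finset.mem_union.mp hc with hc | hc
    · obtain ⟨a, ha, hab⟩ := Finset.mem_image.mp hc
      simp at ha
      have : a = r := by rw [← (hfg a ha).1, hab, hm]
      subst this
      exact hmf (by rw [hab]; exact EE.refl _)
    · obtain ⟨a, ha, hab⟩ := Finset.mem_image.mp hc
      simp at ha
      have : a = r := by rw [← (hfg a ha).2.1, hab, hm]
      subst this
      exact hmg (by rw [hab]; exact EE.refl _)
  have hsep : SepF x (Finset.range q)
      (insert m ((Finset.range q).image f ∪ (Finset.range q).image g)) := by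
    have key : ∀ w ∈ (insert m ((Finset.range q).image f ∪ (Finset.range q).image g)),
        (w = m) ∨ (w % q < q ∧ w = f (w % q)) ∨ (w % q < q ∧ w = g (w % q)) := by
      intro w hw
      rcases Finset.mem_insert.mp hw with hw | hw
      · exact Or.inl hw
      rcases Finset.mem_union.mp hw with hw | hw
      · obtain ⟨a, ha, rfl⟩ := Finset.mem_image.mp hw
        simp at ha
        right; left
        rw [(hfg a ha).1]; exact ⟨ha, rfl⟩
      · obtain ⟨a, ha, rfl⟩ := Finset.mem_image.mp hw
        simp at ha
        right; right
        rw [(hfg a ha).2.1]; exact ⟨ha, rfl⟩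
    intro w hw w' hw' he
    have hmod := hR w w' he
    rcases key w hw with k1 | ⟨l1, k1⟩ | ⟨l1, k1⟩ <;>
      rcases key w' hw' with k2 | ⟨l2, k2⟩ | ⟨l2, k2⟩
    · rw [k1, k2]
    · exfalso; rw [← hmod, k1, hm] at k2; rw [k1, k2] at he; exact hmf he
    · exfalso; rw [← hmod, k1, hm] at k2; rw [k1, k2] at he; exact hmg he
    · exfalso; rw [hmod, k2, hm] at k1; rw [k1, k2] at he; exact hmf he.symm
    · rw [k1, k2, hmod]
    · exfalso; rw [hmod] at k1; generalize w' % q = c at *; subst k1; subst k2; exact (hfg _ l2).2.2 he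
    · exfalso; rw [hmod, k2, hm] at k1; rw [k1, k2] at he; exact hmg he.symm
    · exfalso; rw [hmod] at k1; generalize w' % q = c at *; subst k1; subst k2; exact (hfg _ l2).2.2 he.symm
    · rw [k1, k2, hmod]
  have hb := h.bd (Finset.range q) _ ⟨0, Finset.mem_range.mpr hq⟩ hsep
  rw [Finset.card_insert_of_notMem hnm, Finset.card_union_of_disjoint hdisj,
    Finset.card_image_of_injOn finj, Finset.card_image_of_injOn ginj, Finset.card_range] at hb
  omega

lemma per_iter {x : Seq2} {q g : ℕ} (hqg : q ∣ g) {C : ℕ → Prop}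
    (hC : ∀ m, C (m % q) → x (m + g) = x m) (k m : ℕ) (hm : C (m % q)) : x (m + g * k) = x m := by
  induction k with
  | zero => simp
  | succ k ih =>
    rw [← ih, ← hC (m + g * k) (by rw [mod_add_dvd (hqg.mul_right k)]; exact hm)]
    congr 1; ring

lemma class_letter {x : Seq2} (hr : Recurrent x) {q a : ℕ} (hq : 1 ≤ q) (ha : ¬ PerCl x q a)
    (v : Fin 2) (B : ℕ) : ∃ n ≥ B, n % q = a ∧ x n = v := by
  obtain ⟨m, m1, m2, _⟩ := class_flip hr hq dvd_rfl ha v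
  obtain ⟨t, ht, hd, he⟩ := ret_div hr (m + 1) B q hq
  refine ⟨m + t, by omega, by rw [mod_add_dvd hd, m1], ?_⟩
  have := he m (by simp)
  rw [zero_add, m2] at this
  rw [this, add_comm]

lemma mod_solve {q : ℕ} (hq : 1 ≤ q) (r : ℕ) {b : ℕ} (hb : b < q) : ∃ i < q, (r + i) % q = b := by
  refine ⟨(b + (q - r % q)) % q, Nat.mod_lt _ hq, ?_⟩
  rw [Nat.add_mod_mod]
  have hm := Nat.mod_add_div r q
  have hl := Nat.mod_lt r hq
  have : r + (b + (q - r % q)) = b + q * (r / q + 1) := by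
    rw [mul_add, mul_one]; omega
  rw [this, Nat.add_mul_mod_self_left, Nat.mod_eq_of_lt hb]

lemma Good.onehole_of_short {x : Seq2} (h : Good x) {q : ℕ} (hq : 1 ≤ q) (hR : RecL x q q) :
    ∃ a, OneHole x q a := by
  obtain ⟨a, ha, P, hP1, hqP, hP⟩ := h.common hq hR
  have hna : ¬ PerCl x q a := by
    rintro ⟨g, hg1, hqg, hg⟩
    obtain ⟨m, hm⟩ := h.nper (g * P) (Nat.mul_pos hg1 hP1)
    apply hm
    by_cases hma : m % q = a
    · exact (per_iter hqg (C := fun r => r = a) hg P m hma).symm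
    · rw [mul_comm]
      exact (per_iter hqP (C := fun r => r ≠ a) hP g m hma).symm
  refine ⟨a, ha, ?_⟩
  by_contra hcon
  push Not at hcon
  obtain ⟨n1, n2, hn12, hn1, hnx⟩ := hcon
  -- starts with prescribed letter in the class
  have start : ∀ r < q, ∀ i < q, (r + i) % q = a → ∀ v, ∃ m, m % q = r ∧ x (m + i) = v := by
    intro r hr i hi hri v
    obtain ⟨n, hnq, hna', hnv⟩ := class_letter h.ur.rec hq hna v q
    refine ⟨n - i, ?_, by rw [Nat.sub_add_cancel (by omega)]; exact hnv⟩
    have : (n - i) + i ≡ r + i [MOD q] := by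
      rw [Nat.sub_add_cancel (by omega)]
      exact hna'.trans hri.symm
    have := Nat.ModEq.add_right_cancel' i this
    exact Eq.trans this (Nat.mod_eq_of_lt hr)
  have two : ∀ r < q, ∃ m m', m % q = r ∧ m' % q = r ∧ ¬ EW x q m m' := by
    intro r hr
    obtain ⟨i, hi, hri⟩ := mod_solve hq r ha
    obtain ⟨m, m1, m2⟩ := start r hr i hi hri 0
    obtain ⟨m', m1', m2'⟩ := start r hr i hi hri 1
    refine ⟨m, m', m1, m1', fun he => ?_⟩
    have := he i (by simpa using hi)
    rw [m2, m2'] at this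
    exact absurd this (by decide)
  have det : ∀ r < q, ∀ i < q, (r + i) % q = a → ∀ m m', m % q = r → m' % q = r →
      x (m + i) = x (m' + i) → EW x q m m' := by
    intro r hr i hi hri m m' hm hm' he
    by_contra hne
    obtain ⟨w, hw⟩ := fin2_other (x (m + i))
    obtain ⟨m3, q1, q2⟩ := start r hr i hi hri w
    refine h.two_pats hq hR two hr hm hm' q1 hne (fun hc => ?_) (fun hc => ?_)
    · have := hc i (by simpa using hi)
      rw [q2] at this
      exact hw this.symm
    · have := hc i (by simpa using hi)
      rw [q2, ← he] at this
      exact hw this.symm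
  obtain ⟨δ, hδ, haδ⟩ := mod_solve hq a (Nat.mod_lt n1 hq)
  have hδ0 : δ ≠ 0 := by
    rintro rfl
    rw [add_zero, Nat.mod_eq_of_lt ha] at haδ
    exact hn1 haδ.symm
  have d0 : ∀ m m', m % q = a → m' % q = a → x (m + 0) = x (m' + 0) → x (m + δ) = x (m' + δ) := by
    intro m m' hm hm' he
    exact det a ha 0 (by omega) (Nat.mod_eq_of_lt ha) m m' hm hm' he δ (by simpa using hδ)
  have dq : ∀ m m', m % q = a → m' % q = a → x (m + q) = x (m' + q) → x (m + δ) = x (m' + δ) := by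
    intro m m' hm hm' he
    have e1 : ∀ m, m % q = a → (m + 1) % q = (a + 1) % q := by
      intro m hm; rw [Nat.add_mod, hm, Nat.add_mod_mod]
    have := det ((a + 1) % q) (Nat.mod_lt _ hq) (q - 1) (by omega) (by
      rw [Nat.mod_add_mod, show a + 1 + (q - 1) = a + q by omega, Nat.add_mod_right,
        Nat.mod_eq_of_lt ha]) (m + 1) (m' + 1) (e1 m hm) (e1 m' hm') (by
      rw [show m + 1 + (q - 1) = m + q by omega, show m' + 1 + (q - 1) = m' + q by omega]
      exact he) (δ - 1) (by simp; omega)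
    rwa [show m + 1 + (δ - 1) = m + δ by omega, show m' + 1 + (δ - 1) = m' + δ by omega] at this
  have nonc : ∀ v, ∃ m, m % q = a ∧ x (m + δ) ≠ v := by
    intro v
    have : ∃ n, n % q = n1 % q ∧ x n ≠ v := by
      by_cases hv : x n1 = v
      · exact ⟨n2, hn12.symm, by rw [← hv]; exact hnx.symm⟩
      · exact ⟨n1, rfl, hv⟩
    obtain ⟨n, hn, hnv⟩ := this
    obtain ⟨t, ht, hd, he⟩ := ret_div h.ur.rec (n + 1) q q hq
    refine ⟨n + t - δ, ?_, ?_⟩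
    · have : (n + t - δ) + δ ≡ a + δ [MOD q] := by
        rw [Nat.sub_add_cancel (by omega)]
        show (n + t) % q = (a + δ) % q
        rw [mod_add_dvd hd, hn, haδ]
      exact Eq.trans (Nat.ModEq.add_right_cancel' δ this) (Nat.mod_eq_of_lt ha)
    · rw [Nat.sub_add_cancel (by omega)]
      have := he n (by simp)
      rw [zero_add, add_comm t n] at this
      rw [← this]; exact hnv
  have conv : ∀ i, (∀ m m', m % q = a → m' % q = a → x (m + i) = x (m' + i) →
      x (m + δ) = x (m' + δ)) → ∀ m m', m % q = a → m' % q = a → x (m + δ) = x (m' + δ) →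
      x (m + i) = x (m' + i) := by
    intro i hi m m' hm hm' he
    by_contra hne
    obtain ⟨n, hn, hnx⟩ := nonc (x (m + δ))
    by_cases hc : x (n + i) = x (m + i)
    · exact hnx (hi n m hn hm hc)
    · have : x (n + i) = x (m' + i) := fin2_ne hc (Ne.symm hne)
      exact hnx ((hi n m' hn hm' this).trans he.symm)
  have s1 : ∀ m m', m % q = a → m' % q = a → (x m = x m' ↔ x (m + q) = x (m' + q)) := by
    intro m m' hm hm'
    exact ⟨fun e => conv q dq m m' hm hm' (d0 m m' hm hm' e),
      fun e => conv 0 d0 m m' hm hm' (dq m m' hm hm' e)⟩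
  apply hna
  refine ⟨q + q, by omega, dvd_add dvd_rfl dvd_rfl, fun m hm => ?_⟩
  have hm2 : (m + q) % q = a := by rw [mod_add_dvd dvd_rfl, hm]
  have := s1 m (m + q) hm hm2
  rw [add_assoc] at this
  by_cases hc : x m = x (m + q)
  · rw [← this.mp hc, ← hc]
  · exact fin2_ne (fun e => hc (this.mpr e.symm)) hc

lemma Good.exists_onehole {x : Seq2} (h : Good x) (N : ℕ) : ∀ (d q : ℕ), 1 ≤ q → N - q ≤ d →
    RecL x q N → ∃ Q a N', q ∣ Q ∧ 1 ≤ Q ∧ RecL x Q N' ∧ OneHole x Q a := by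
  have mono : ∀ {q N N' : ℕ}, N ≤ N' → RecL x q N → RecL x q N' :=
    fun hle hR m m' he => hR m m' (he.mono (Finset.range_mono hle))
  intro d
  induction d with
  | zero =>
    intro q hq hd hR
    have hR' : RecL x q q := mono (by omega) hR
    obtain ⟨a, ha⟩ := h.onehole_of_short hq hR'
    exact ⟨q, a, q, dvd_rfl, hq, hR', ha⟩
  | succ d ih =>
    intro q hq hd hR
    rcases h.refine_rec hq hR with ⟨a, ha⟩ | ⟨q', h1, h2, h3⟩
    · exact ⟨q, a, N, dvd_rfl, hq, hR, ha⟩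
    · by_cases hN : N ≤ q'
      · rw [max_eq_right hN] at h3
        obtain ⟨a, ha⟩ := h.onehole_of_short (by omega) h3
        exact ⟨q', a, q', h1, by omega, h3, ha⟩
      · rw [max_eq_left (by omega)] at h3
        obtain ⟨Q, a, N', g1, g2⟩ := ih q' (by omega) (by omega) h3
        exact ⟨Q, a, N', h1.trans g1, g2⟩

lemma OneHole.good {x : Seq2} (h : Good x) {Q a N : ℕ} (hR : RecL x Q N)
    (hO : OneHole x Q a) : Good (fun j => x (a + Q * j)) := by
  classical
  have hQ : 1 ≤ Q := by have := hO.1; omega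
  refine ⟨?_, ?_, ?_⟩
  · intro L
    obtain ⟨g, hg⟩ := h.ur (max N (a + Q * L + 1))
    refine ⟨g, fun n => ?_⟩
    obtain ⟨M, ⟨hM1, hM2⟩, hM3, hM4⟩ := hg (Q * n)
    have hmod := hR 0 M (fun s hs => by
      rw [zero_add]; exact hM2 s (lt_of_lt_of_le (Finset.mem_range.mp hs) (le_max_left _ _)))
    obtain ⟨M', rfl⟩ : Q ∣ M := Nat.dvd_of_mod_eq_zero (by rw [← hmod, Nat.zero_mod])
    refine ⟨M', ⟨?_, fun i hi => ?_⟩, ?_, ?_⟩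
    · exact Nat.pos_of_ne_zero (by rintro rfl; simp at hM1)
    · have h1 : Q * i ≤ Q * L := Nat.mul_le_mul_left _ hi.le
      have := hM2 (a + Q * i) (lt_of_lt_of_le (by omega) (le_max_right _ _))
      show x (a + Q * i) = x (a + Q * (M' + i))
      rw [this]; congr 1; ring
    · exact Nat.le_of_mul_le_mul_left hM3 hQ
    · have : Q * n + g ≤ Q * (n + g) := by rw [mul_add]; nlinarith
      exact Nat.lt_of_mul_lt_mul_left (lt_of_lt_of_le hM4 this)
  · intro g hg
    obtain ⟨m, hm⟩ := h.nper (Q * g) (Nat.mul_pos hQ hg)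
    have hma : m % Q = a := by
      by_contra hne
      exact hm (hO.2 m (m + Q * g) (by rw [mod_add_dvd (dvd_mul_right _ _)]) hne)
    refine ⟨m / Q, ?_⟩
    show x (a + Q * (m / Q)) ≠ x (a + Q * (m / Q + g))
    have e := Nat.mod_add_div m Q
    rw [hma] at e
    rw [mul_add, ← add_assoc, e]
    exact hm
  · intro V T hV hT
    have i1 : Function.Injective (fun s : ℕ => Q * s) := fun s s' he =>
      Nat.eq_of_mul_eq_mul_left hQ he
    have i2 : Function.Injective (fun s : ℕ => a + Q * s) := fun s s' he =>
      Nat.eq_of_mul_eq_mul_left hQ (Nat.add_left_cancel he)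
    have := h.bd (V.image (fun s => Q * s)) (T.image (fun s => a + Q * s)) (hV.image _) (by
      intro m hm n hn he
      obtain ⟨j, hj, rfl⟩ := Finset.mem_image.mp hm
      obtain ⟨j', hj', rfl⟩ := Finset.mem_image.mp hn
      have : j = j' := by
        apply hT j hj j' hj'
        intro s hs
        have := he (Q * s) (Finset.mem_image_of_mem _ hs)
        show x (a + Q * (j + s)) = x (a + Q * (j' + s))
        rw [mul_add, mul_add, ← add_assoc, ← add_assoc]
        exact this
      rw [this])
    rwa [Finset.card_image_of_injective _ i1, Finset.card_image_of_injective _ i2] at this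

lemma OneHole.lift_rec {x : Seq2} {Q a N q N' : ℕ} (hR : RecL x Q N)
    (hO : OneHole x Q a) (hu : RecL (fun j => x (a + Q * j)) q N') :
    RecL x (Q * q) (max N (Q * (N' + 1))) := by
  have hQ : 1 ≤ Q := by have := hO.1; omega
  intro m m' he
  have h1 := hR m m' (he.mono (Finset.range_mono (le_max_left _ _)))
  obtain ⟨i, hi, hmi⟩ := mod_solve hQ m hO.1
  have hmi' : (m' + i) % Q = a := by rw [← hmi, Nat.add_mod, ← h1, ← Nat.add_mod]
  have e := Nat.mod_add_div (m + i) Q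
  have e' := Nat.mod_add_div (m' + i) Q
  rw [hmi] at e
  rw [hmi'] at e'
  have h2 := hu ((m + i) / Q) ((m' + i) / Q) (by
    intro s hs
    show x (a + Q * ((m + i) / Q + s)) = x (a + Q * ((m' + i) / Q + s))
    rw [mul_add, mul_add, ← add_assoc, ← add_assoc, e, e', add_assoc, add_assoc]
    apply he
    rw [Finset.mem_range]
    refine lt_of_lt_of_le ?_ (le_max_right _ _)
    have : Q * s ≤ Q * N' := Nat.mul_le_mul_left _ (Finset.mem_range.mp hs).le
    rw [mul_add]; omega)
  have h3 : m + i ≡ m' + i [MOD Q * q] := by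
    rw [← e, ← e']
    exact Nat.ModEq.add_left a (Nat.ModEq.mul_left' Q h2)
  exact Nat.ModEq.add_right_cancel' i h3

/-- extend a window with two patterns per element -/
lemma Good.ext2 {x : Seq2} (h : Good x) (hTM : TM x) {W : Finset ℕ} {a b : ℕ} (ha : a ∈ W)
    (hab : a ≠ b)
    (h00 : ∃ m, x (m + a) = 0 ∧ x (m + b) = 0) (h11 : ∃ m, x (m + a) = 1 ∧ x (m + b) = 1)
    {T : Finset ℕ} (hT : SepF x W T) (hc : 2 * W.card ≤ T.card) :
    ∃ V, ∀ t ≥ 1, Ret x V t → ∃ T', SepF x (insert (b + t) W) T' ∧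
      2 * (insert (b + t) W).card ≤ T'.card := by
  obtain ⟨V, hWV, hV⟩ := exists_sat h.bd (insert b W)
  have hbV : b ∈ V := hWV (Finset.mem_insert_self _ _)
  have hWV' : W ⊆ V := (Finset.subset_insert _ _).trans hWV
  refine ⟨V, fun t ht hret => ?_⟩
  obtain ⟨T1, hT1, hsep1, hcomp⟩ := exists_complete x W T hT
  have key : ∀ n, x (n + b) ≠ x (n + b + t) → Spl x W (b + t) n := by
    intro n hn
    obtain ⟨k, hk, hk2⟩ := hret n
    refine ⟨k, (hk.mono hWV').symm, ?_⟩
    rw [← add_assoc, ← add_assoc, hk2 b hbV, hk b hbV]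
    exact hn.symm
  obtain ⟨m, _, m1, m2⟩ := h.flip ht 0 b 0
  obtain ⟨n, _, n1, n2⟩ := h.flip ht 1 b 0
  have mf : x (m + b) ≠ x (m + b + t) := by rw [m1]; exact m2.symm
  have nf : x (n + b) ≠ x (n + b + t) := by rw [n1]; exact n2.symm
  have hne : x (m + a) ≠ x (n + a) := by
    rcases h.lead_or hTM hV ht hret (hWV' ha) hbV hab h00 h11 with hL | hL
    · intro he
      have q1 := (hL m).2 mf
      have q2 := (hL n).2 nf
      rw [m1] at q1
      rw [n1] at q2
      have := fin2_ne q1 (show (1 : Fin 2) ≠ 0 by decide)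
      rw [← he] at q2
      exact q2 this
    · rw [(hL m).1 mf, (hL n).1 nf, m1, n1]
      decide
  have hmn : m ≠ n := by rintro rfl; exact hne rfl
  obtain ⟨T', hT', hcard⟩ := ext_sep (s := b + t) (D := {m, n}) hsep1 hcomp (by
    intro d hd d' hd' he
    simp only [Finset.mem_insert, Finset.mem_singleton] at hd hd'
    rcases hd with rfl | rfl <;> rcases hd' with rfl | rfl
    · rfl
    · exact absurd (he a ha) hne
    · exact absurd (he a ha).symm hne
    · rfl) (by
    intro d hd
    simp only [Finset.mem_insert, Finset.mem_singleton] at hd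
    rcases hd with rfl | rfl
    · exact key _ mf
    · exact key _ nf)
  refine ⟨T', hT', ?_⟩
  rw [hcard, Finset.card_pair hmn]
  have h1 := Finset.card_insert_le (b + t) W
  have h2 := Finset.card_le_card hT1
  omega

lemma Good.dense_window {x : Seq2} (h : Good x) (hTM : TM x) (c : Fin 2) :
    ∃ W T : Finset ℕ, W.Nonempty ∧ SepF x W T ∧ 2 * W.card ≤ T.card ∧
      ∀ m, ∃ s ∈ W, x (m + s) ≠ c := by
  obtain ⟨p, α, η, c1, c2, c3, c4, c5⟩ := h.circle hTM
  have C : Circ x α p η := ⟨c1, c2, c3, c4, c5⟩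
  obtain ⟨v, hv⟩ := fin2_other c
  obtain ⟨r, ε, hε, hball⟩ := C.ball h v
  obtain ⟨κ, hκ, hkap⟩ := h.kappa
  have hmin : 0 < min (ε / 2) (min (κ / p) η) :=
    lt_min (by positivity) (lt_min (div_pos hκ C.hp) C.hη)
  obtain ⟨t0, ht0, k0, _, hpos, hsm⟩ := C.pos_ret h ∅ hmin
  have s1 := lt_of_lt_of_le hsm (min_le_left _ _)
  have s2 := lt_of_lt_of_le hsm ((min_le_right _ _).trans (min_le_left _ _))
  have s3 := lt_of_lt_of_le hsm ((min_le_right _ _).trans (min_le_right _ _))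
  obtain ⟨d, hd⟩ : ∃ d : ℝ, d = t0 * α - k0 := ⟨_, rfl⟩
  rw [← hd] at hpos s1 s2 s3
  have hpair : ∀ a v, ∃ m, x (m + a) = v ∧ x (m + (a + t0)) = v := by
    intro a v
    have hr : rho x a (a + t0) < κ := by
      have e : ((a : ℝ) - (a + t0 : ℕ)) * α - (-k0 : ℤ) = -d := by rw [hd]; push_cast; ring
      rw [C.rho_eq (k := -k0) (by rw [e, abs_neg, abs_of_pos hpos]; exact s3), e, abs_neg,
        abs_of_pos hpos]
      rw [lt_div_iff₀ C.hp] at s2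
      linarith
    obtain ⟨m, q1, q2, _⟩ := hkap a (a + t0) (a + t0) hr hr v
    exact ⟨m, q1, q2⟩
  have build : ∀ K : ℕ, ∃ (W T : Finset ℕ) (s : ℕ) (k : ℤ), s ∈ W ∧ SepF x W T ∧
      2 * W.card ≤ T.card ∧ K * d ≤ s * α - k ∧
      ∀ y : ℝ, 0 ≤ y → y ≤ s * α - k → ∃ s' ∈ W, ∃ k' : ℤ, |(s' : ℝ) * α - k' - y| < 2 * d := by
    intro K
    induction K with
    | zero =>
      obtain ⟨m, _, m1, _⟩ := h.flip (t := 1) le_rfl 0 0 0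
      obtain ⟨n, _, n1, _⟩ := h.flip (t := 1) le_rfl 1 0 0
      have hne : x (m + 0) ≠ x (n + 0) := by rw [m1, n1]; decide
      have hmn : m ≠ n := by rintro rfl; exact hne rfl
      refine ⟨{0}, {m, n}, 0, 0, by simp, ?_, ?_, by simp, ?_⟩
      · intro d hd d' hd' he
        simp only [Finset.mem_insert, Finset.mem_singleton] at hd hd'
        have h0 := he 0 (by simp)
        rcases hd with rfl | rfl <;> rcases hd' with rfl | rfl
        · rfl
        · exact absurd h0 hne
        · exact absurd h0.symm hne
        · rfl
      · rw [Finset.card_pair hmn]; simp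
      · intro y hy0 hy1
        refine ⟨0, by simp, 0, ?_⟩
        simp only [Nat.cast_zero, zero_mul, Int.cast_zero, sub_zero] at hy1
        have : y = 0 := le_antisymm hy1 hy0
        rw [this]
        simpa using hpos
    | succ K ih =>
      obtain ⟨W, T, s, k, hs, hT, hc, hK, hcov⟩ := ih
      obtain ⟨V, hVext⟩ := h.ext2 hTM (b := s + t0) hs (by omega) (hpair s 0) (hpair s 1) hT hc
      obtain ⟨t, ht, kt, hret, ht0', ht1⟩ := C.pos_ret h V hpos
      obtain ⟨T', hT', hc'⟩ := hVext t ht hret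
      have e : ((s + t0 + t : ℕ) : ℝ) * α - ((k + k0 + kt : ℤ) : ℝ) =
          (s * α - k) + d + (t * α - kt) := by rw [hd]; push_cast; ring
      refine ⟨insert (s + t0 + t) W, T', s + t0 + t, k + k0 + kt, Finset.mem_insert_self _ _,
        hT', hc', ?_, ?_⟩
      · rw [e]; push_cast; linarith
      · intro y hy0 hy1
        rw [e] at hy1
        by_cases hy : y ≤ s * α - k
        · obtain ⟨s', hs', q⟩ := hcov y hy0 hy
          exact ⟨s', Finset.mem_insert_of_mem hs', q⟩
        · refine ⟨s, Finset.mem_insert_of_mem hs, k, ?_⟩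
          push Not at hy
          rw [abs_lt]
          constructor <;> linarith
  obtain ⟨K, hK⟩ := exists_nat_ge (1 / d)
  rw [div_le_iff₀ hpos] at hK
  obtain ⟨W, T, s, k, hs, hT, hc, hKs, hcov⟩ := build K
  refine ⟨W, T, ⟨s, hs⟩, hT, hc, fun m => ?_⟩
  have f0 := Int.fract_nonneg (r - m * α)
  have f1 := Int.fract_lt_one (r - m * α)
  obtain ⟨s', hs', k', hk'⟩ := hcov (Int.fract (r - m * α)) f0 (by linarith)
  refine ⟨s', hs', ?_⟩
  have := hball (m + s') (k' - ⌊r - m * α⌋) (by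
    have e : ((m + s' : ℕ) : ℝ) * α - ((k' - ⌊r - m * α⌋ : ℤ) : ℝ) - r =
        s' * α - k' - Int.fract (r - m * α) := by
      rw [Int.fract]; push_cast; ring
    rw [e]
    linarith)
  rw [this]
  exact hv

lemma OneHole.not_tm {x : Seq2} (h : Good x) {Q a N : ℕ} (hQ : 2 ≤ Q) (hR : RecL x Q N)
    (hO : OneHole x Q a) : ¬ TM (fun j => x (a + Q * j)) := by
  classical
  intro hTM
  have hG := hO.good h hR
  -- a constant class
  obtain ⟨b, hb, hba⟩ : ∃ b < Q, b ≠ a := by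
    by_cases h0 : a = 0
    · exact ⟨1, by omega, by omega⟩
    · exact ⟨0, by omega, Ne.symm h0⟩
  obtain ⟨W, T, hW, hT, hc, hn⟩ := hG.dense_window hTM (x b)
  have i1 : Function.Injective (fun s : ℕ => Q * s) := fun s s' he =>
    Nat.eq_of_mul_eq_mul_left (by omega) he
  have i2 : Function.Injective (fun s : ℕ => a + Q * s) := fun s s' he =>
    Nat.eq_of_mul_eq_mul_left (show 0 < Q by omega) (Nat.add_left_cancel he)
  have hbW : ∀ j, ¬ EE x (W.image (fun s => Q * s)) b (a + Q * j) := by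
    intro j he
    obtain ⟨s, hs, hsb⟩ := hn j
    apply hsb
    have h1 := he (Q * s) (Finset.mem_image_of_mem _ hs)
    have h2 := hO.2 b (b + Q * s) (by rw [mod_add_dvd (dvd_mul_right _ _)])
      (by rw [Nat.mod_eq_of_lt hb]; exact hba)
    show x (a + Q * (j + s)) = x b
    rw [h2, h1]
    congr 1; ring
  have hnotin : b ∉ T.image (fun s => a + Q * s) := by
    intro hc
    obtain ⟨j, _, hj⟩ := Finset.mem_image.mp hc
    exact hbW j (by rw [hj]; exact EE.refl _)
  have hcore : ∀ j ∈ T, ∀ j' ∈ T, EE x (W.image (fun s => Q * s)) (a + Q * j) (a + Q * j') →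
      j = j' := by
    intro j hj j' hj' he
    apply hT j hj j' hj'
    intro s hs
    have := he (Q * s) (Finset.mem_image_of_mem _ hs)
    show x (a + Q * (j + s)) = x (a + Q * (j' + s))
    rw [mul_add, mul_add, ← add_assoc, ← add_assoc]
    exact this
  have := h.bd (W.image (fun s => Q * s)) (insert b (T.image (fun s => a + Q * s))) (hW.image _) (by
    intro m hm n hn he
    rcases Finset.mem_insert.mp hm with e1 | hm1 <;> rcases Finset.mem_insert.mp hn with e2 | hn1
    · rw [e1, e2]
    · obtain ⟨j', hj', rfl⟩ := Finset.mem_image.mp hn1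
      rw [e1] at he
      exact absurd he (hbW j')
    · obtain ⟨j', hj', rfl⟩ := Finset.mem_image.mp hm1
      rw [e2] at he
      exact absurd he.symm (hbW j')
    · obtain ⟨j, hj, rfl⟩ := Finset.mem_image.mp hm1
      obtain ⟨j', hj', rfl⟩ := Finset.mem_image.mp hn1
      rw [hcore j hj j' hj' he])
  rw [Finset.card_insert_of_notMem hnotin, Finset.card_image_of_injective _ i1,
    Finset.card_image_of_injective _ i2] at this
  omega

def Lvl (x : Seq2) (Q : ℕ) : Prop := 2 ≤ Q ∧ ∃ a N, RecL x Q N ∧ OneHole x Q a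

lemma Lvl.next {x : Seq2} (h : Good x) {Q : ℕ} (hL : Lvl x Q) :
    ∃ Q', Q ∣ Q' ∧ Q < Q' ∧ Lvl x Q' := by
  obtain ⟨hQ, a, N, hR, hO⟩ := hL
  have hnt := hO.not_tm h hQ hR
  obtain ⟨q, N', hq, hu⟩ := rec_of_not_tm (hO.good h hR).ur.rec hnt
  have hR2 := hO.lift_rec hR hu
  obtain ⟨Q', a', N'', h1, h2, h3, h4⟩ := h.exists_onehole _ _ (Q * q)
    (Nat.mul_pos (by omega) (by omega)) le_rfl hR2
  have hle : Q * q ≤ Q' := Nat.le_of_dvd h2 h1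
  have : Q < Q * q := by nlinarith
  exact ⟨Q', (dvd_mul_right Q q).trans h1, by omega, by omega, a', N'', h3, h4⟩

lemma Good.lvl {x : Seq2} (h : Good x) (hnt : ¬ TM x) : ∃ Q, Lvl x Q := by
  obtain ⟨q, N', hq, hu⟩ := rec_of_not_tm h.ur.rec hnt
  obtain ⟨Q', a', N'', h1, h2, h3, h4⟩ := h.exists_onehole _ _ q (by omega) le_rfl hu
  have hle : q ≤ Q' := Nat.le_of_dvd h2 h1
  exact ⟨Q', by omega, a', N'', h3, h4⟩

lemma Good.toeplitz {x : Seq2} (h : Good x) (hnt : ¬ TM x) :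
    ∃ z : Seq2, MHoleToeplitz 1 z ∧ x ∈ orbitClosure z := by
  obtain ⟨Q0, hQ0⟩ := h.lvl hnt
  have hnext : ∀ Q : {Q // Lvl x Q}, ∃ Q' : {Q // Lvl x Q}, Q.1 ∣ Q'.1 ∧ Q.1 < Q'.1 := by
    intro Q
    obtain ⟨Q', h1, h2, h3⟩ := Q.2.next h
    exact ⟨⟨Q', h3⟩, h1, h2⟩
  choose f hf1 hf2 using hnext
  let nk' : ℕ → {Q // Lvl x Q} := fun k => f^[k] ⟨Q0, hQ0⟩
  have hstep : ∀ k, nk' (k + 1) = f (nk' k) := fun k => Function.iterate_succ_apply' f k _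
  obtain ⟨nk, hnk⟩ : ∃ nk : ℕ → ℕ, nk = fun k => (nk' k).1 := ⟨_, rfl⟩
  have hdvd : ∀ k, nk k ∣ nk (k + 1) := by
    intro k; rw [hnk]; simp only [hstep]; exact hf1 _
  have hlt : ∀ k, nk k < nk (k + 1) := by
    intro k; rw [hnk]; simp only [hstep]; exact hf2 _
  have hlvl : ∀ k, Lvl x (nk k) := by
    intro k; rw [hnk]; exact (nk' k).2
  have hge : ∀ k, k ≤ nk k := (strictMono_nat_of_lt_succ hlt).id_le
  have hone : ∀ k, ∃ a, OneHole x (nk k) a := fun k => by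
    obtain ⟨_, a, _, _, hO⟩ := hlvl k
    exact ⟨a, hO⟩
  choose a ha using hone
  obtain ⟨c, hc⟩ : ∃ c, ∀ n ≥ c, ∃ k, n % nk k ≠ a k := by
    by_cases hex : ∃ n, ∀ k, n % nk k = a k
    · obtain ⟨n, hn⟩ := hex
      refine ⟨n + 1, fun n' hn' => ?_⟩
      by_contra hcon
      push Not at hcon
      have h1 : n ≡ n' [MOD nk (n' + 1)] := (hn _).trans (hcon _).symm
      have h2 := (Nat.modEq_iff_dvd' (by omega)).mp h1
      have h3 := Nat.le_of_dvd (by omega) h2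
      have := hge (n' + 1)
      omega
    · push Not at hex
      exact ⟨0, fun n _ => hex n⟩
  refine ⟨fun n => x (c + n), ⟨nk, ⟨fun k => ⟨?_, hdvd k, hlt k⟩, ?_⟩, ?_⟩, ?_⟩
  · have := (hlvl k).1; omega
  · intro n
    obtain ⟨k, hk⟩ := hc (c + n) (by omega)
    refine ⟨k, fun m hm => ?_⟩
    have e : (c + n) % nk k = (c + m) % nk k := by rw [Nat.add_mod, ← hm, ← Nat.add_mod]
    exact ((ha k).2 _ _ e hk).symm
  · intro k
    have hk1 : 1 ≤ nk k := by have := (hlvl k).1; omega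
    obtain ⟨j0, hj0, hj0a⟩ := mod_solve hk1 c (ha k).1
    rw [Set.ncard_eq_one]
    refine ⟨j0, ?_⟩
    have huniq : ∀ j < nk k, (c + j) % nk k = a k → j = j0 := by
      intro j hj hja
      have : c + j ≡ c + j0 [MOD nk k] := hja.trans hj0a.symm
      have : j % nk k = j0 % nk k := Nat.ModEq.add_left_cancel' c this
      rwa [Nat.mod_eq_of_lt hj, Nat.mod_eq_of_lt hj0] at this
    ext j
    simp only [Set.mem_setOf_eq, Set.mem_singleton_iff]
    constructor
    · rintro ⟨hj, m1, m2, hm1, hm2, hne⟩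
      apply huniq j hj
      by_contra hcon
      apply hne
      apply (ha k).2
      · rw [Nat.add_mod, hm1, ← hm2, ← Nat.add_mod]
      · rwa [← hm1, Nat.add_mod_mod] at hcon
    · intro hj
      rw [hj]
      obtain ⟨m, hm, h1, h2⟩ := h.flip hk1 0 0 c
      rw [add_zero] at h1 h2
      have hma : m % nk k = a k := by
        by_contra hcon
        apply h2
        rw [← (ha k).2 m (m + nk k) (by rw [mod_add_dvd dvd_rfl]) hcon, h1]
      have hmc : (c + (m - c)) % nk k = a k := by
        rw [show c + (m - c) = m by omega]; exact hma
      have hres : (m - c) % nk k = j0 := by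
        apply huniq _ (Nat.mod_lt _ hk1)
        rw [Nat.add_mod_mod]; exact hmc
      refine ⟨hj0, m - c, m - c + nk k, hres, by rw [mod_add_dvd dvd_rfl, hres], ?_⟩
      rw [show c + (m - c) = m by omega, show c + (m - c + nk k) = m + nk k by omega, h1]
      exact h2.symm
  · have : ∀ L, ∃ m, ∀ i < L, x (c + (m + i)) = x i := by
      intro L
      obtain ⟨t, ht, _, he⟩ := ret_div h.ur.rec L c 1 le_rfl
      refine ⟨t - c, fun i hi => ?_⟩
      have := he i (by simpa using hi)
      rw [zero_add] at this
      rw [this]; congr 1; omega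
    choose M hM using this
    refine mem_closure_of_tendsto (f := fun L n => x (c + (M L + n))) (b := Filter.atTop) ?_ ?_
    · rw [tendsto_pi_nhds]
      intro i
      refine tendsto_const_nhds.congr' ?_
      filter_upwards [Filter.eventually_gt_atTop i] with L hL
      exact (hM L i hL).symm
    · exact Filter.Eventually.of_forall (fun L => ⟨M L, rfl⟩)

lemma main_proof (x : Seq2) (hrec : Recurrent x) (hps : PatternSturmian x) :
    UniformlyRecurrent x ∧
      (SimpleCircleCoding x ∨ ∃ z : Seq2, MHoleToeplitz 1 z ∧ x ∈ orbitClosure z) := by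
  have hur := ur_of_ps hrec hps
  have hG : Good x := ⟨hur, fun g hg => by
    obtain ⟨m, _, hm⟩ := nep_of_ps hps g hg 0
    exact ⟨m, hm⟩, Bd_of_ps hps⟩
  refine ⟨hur, ?_⟩
  by_cases hTM : TM x
  · left
    obtain ⟨p, α, η, c1, c2, c3, c4, c5⟩ := hG.circle hTM
    exact Circ.coding (p := p) (α := α) (η := η) ⟨c1, c2, c3, c4, c5⟩ hG
  · exact Or.inr (hG.toeplitz hTM)

/-- Theorem A, with `nearly simple Toeplitz` weakened to `1-hole Toeplitz`:
a recurrent pattern Sturmian sequence is uniformly recurrent and is either a simple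
circle rotation coding sequence or belongs to the orbit closure of a 1-hole Toeplitz
sequence. -/
theorem stmt4 (x : Seq2) (hrec : Recurrent x) (hps : PatternSturmian x) :
    UniformlyRecurrent x ∧
      (SimpleCircleCoding x ∨ ∃ z : Seq2, MHoleToeplitz 1 z ∧ x ∈ orbitClosure z) := by
  exact main_proof x hrec hps
end

section
/- Let x : ℕ → Fin 2 be pattern Sturmian and suppose the orbit closure of x contains a simple Toeplitz sequence y. Then x lies in the orbit closure of y; in particular, x is recurrent (indeed uniformly recurrent). (This is the paper's Theorem 5.1 in the special case where the nearly simple Toeplitz sequence is simple Toeplitz.) -/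
open Set

/-- A simple Toeplitz sequence: there is a period structure `nk` (with `nk 0 = 1`,
`ik 0 = 0` as conventions), a coherent sequence of nonconstant residues `ik`, and
letters `a k` taking both values infinitely often, such that every position in the
residue class `ik k mod nk k` but not in the class `ik (k+1) mod nk (k+1)` carries the
letter `a (k+1)`. -/
def SimpleToeplitz (y : Seq2) : Prop :=
  ∃ (nk ik : ℕ → ℕ) (a : ℕ → Fin 2),
    nk 0 = 1 ∧ ik 0 = 0 ∧
    (∀ k, 1 ≤ nk k ∧ nk k ∣ nk (k + 1)) ∧
    (∀ k, 1 ≤ k → nk k < nk (k + 1)) ∧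
    (∀ k, ik k < nk k) ∧
    (∀ k, ik (k + 1) % nk k = ik k) ∧
    (∀ i : Fin 2, ∀ N : ℕ, ∃ k, N ≤ k ∧ a k = i) ∧
    (∀ k m : ℕ, m % nk k = ik k → m % nk (k + 1) ≠ ik (k + 1) → y m = a (k + 1))

structure TD (y : Seq2) (n i : ℕ → ℕ) (b : ℕ → Fin 2) : Prop where
  n0 : n 0 = 1
  pos : ∀ k, 0 < n k
  dvd : ∀ k, n k ∣ n (k + 1)
  lt : ∀ k, n k < n (k + 1)
  coh : ∀ k, i (k + 1) ≡ i k [MOD n k]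
  inf : ∀ c : Fin 2, ∀ N : ℕ, ∃ k, N ≤ k ∧ b k = c
  val : ∀ k m : ℕ, m ≡ i k [MOD n k] → ¬ m ≡ i (k + 1) [MOD n (k + 1)] → y m = b k

theorem exists_TD {y : Seq2} (hy : SimpleToeplitz y) : ∃ n i b, TD y n i b := by
  obtain ⟨nk, ik, a, h0, hi0, hd, hlt, hik, hcoh, hinf, hval⟩ := hy
  have hval' : ∀ k m : ℕ, m ≡ ik k [MOD nk k] →
      ¬ m ≡ ik (k + 1) [MOD nk (k + 1)] → y m = a (k + 1) := by
    intro k m h1 h2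
    apply hval k m
    · rw [h1, Nat.mod_eq_of_lt (hik k)]
    · intro h
      apply h2
      unfold Nat.ModEq
      rw [h, Nat.mod_eq_of_lt (hik _)]
  have hcoh' : ∀ k, ik (k + 1) ≡ ik k [MOD nk k] := by
    intro k
    unfold Nat.ModEq
    rw [hcoh, Nat.mod_eq_of_lt (hik k)]
  by_cases h1 : nk 1 = 1
  · refine ⟨fun k => nk (k + 1), fun k => ik (k + 1), fun k => a (k + 2), h1,
      fun k => (hd _).1, fun k => (hd _).2, fun k => hlt _ (by omega), fun k => hcoh' _, ?_,
      fun k m => hval' (k + 1) m⟩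
    intro c N
    obtain ⟨k, hk, e⟩ := hinf c (N + 2)
    refine ⟨k - 2, by omega, ?_⟩
    have : k - 2 + 2 = k := by omega
    simpa [this] using e
  · refine ⟨nk, ik, fun k => a (k + 1), h0, fun k => (hd _).1, fun k => (hd _).2, ?_, hcoh', ?_,
      hval'⟩
    · intro k
      rcases Nat.eq_zero_or_pos k with rfl | hk
      · have := (hd 1).1
        simp only [zero_add]
        omega
      · exact hlt k hk
    · intro c N
      obtain ⟨k, hk, e⟩ := hinf c (N + 1)
      refine ⟨k - 1, by omega, ?_⟩
      have : k - 1 + 1 = k := by omega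
      simpa [this] using e

namespace TD

variable {y : Seq2} {n i : ℕ → ℕ} {b : ℕ → Fin 2}

theorem dvd_le (h : TD y n i b) {r l : ℕ} (hrl : r ≤ l) : n r ∣ n l := by
  induction l, hrl using Nat.le_induction with
  | base => exact dvd_rfl
  | succ l _ ih => exact ih.trans (h.dvd l)

theorem coh_le (h : TD y n i b) {r l : ℕ} (hrl : r ≤ l) : i l ≡ i r [MOD n r] := by
  induction l, hrl using Nat.le_induction with
  | base => exact Nat.ModEq.refl _
  | succ l hl ih => exact ((h.coh l).of_dvd (h.dvd_le hl)).trans ih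

theorem hit_le (h : TD y n i b) {r l q : ℕ} (hrl : r ≤ l) (hq : q ≡ i l [MOD n l]) :
    q ≡ i r [MOD n r] :=
  (hq.of_dvd (h.dvd_le hrl)).trans (h.coh_le hrl)

theorem lt_n (h : TD y n i b) (k : ℕ) : k < n k := by
  induction k with
  | zero => rw [h.n0]; omega
  | succ k ih => have := h.lt k; omega

/-- the level at which two positions separate -/
theorem level (h : TD y n i b) {P T K : ℕ} (hPT : ¬ P ≡ T [MOD n K]) :
    ∃ k < K, P ≡ T [MOD n k] ∧ ¬ P ≡ T [MOD n (k + 1)] := by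
  induction K with
  | zero => exact absurd (by rw [h.n0]; exact Nat.modEq_one) hPT
  | succ K ih =>
    by_cases hK : P ≡ T [MOD n K]
    · exact ⟨K, by omega, hK, hPT⟩
    · obtain ⟨k, hk, hh⟩ := ih hK
      exact ⟨k, by omega, hh⟩

theorem level' (h : TD y n i b) {P S j : ℕ} (hPS : P ≠ S) (hj : P ≡ S [MOD n j]) :
    ∃ k, j ≤ k ∧ P ≡ S [MOD n k] ∧ ¬ P ≡ S [MOD n (k + 1)] := by
  have hne : ¬ P ≡ S [MOD n (P + S)] := by
    intro hh
    have h1 := h.lt_n (P + S)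
    exact hPS (Nat.ModEq.eq_of_lt_of_lt hh (by omega) (by omega))
  obtain ⟨k, _, h1, h2⟩ := h.level hne
  refine ⟨k, ?_, h1, h2⟩
  by_contra hlt
  exact h2 (hj.of_dvd (h.dvd_le (by omega)))

theorem aim (h : TD y n i b) (P l : ℕ) :
    ∃ m, m + P ≡ i l [MOD n l] ∧ ¬ m + P ≡ i (l + 1) [MOD n (l + 1)] := by
  have hP : P ≤ n (l + 1) * P := Nat.le_mul_of_pos_left _ (h.pos _)
  refine ⟨i (l + 1) + n l + n (l + 1) * P - P, ?_, ?_⟩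
  · rw [Nat.sub_add_cancel (by omega)]
    have h1 : n l + n (l + 1) * P ≡ 0 [MOD n l] :=
      (Nat.modEq_zero_iff_dvd).2 (dvd_add dvd_rfl (Dvd.dvd.mul_right (h.dvd l) P))
    have := (h.coh l).add h1
    simpa [add_assoc] using this
  · rw [Nat.sub_add_cancel (by omega)]
    intro hh
    rw [add_assoc] at hh
    have h1 : n l + n (l + 1) * P ≡ 0 [MOD n (l + 1)] :=
      Nat.ModEq.add_left_cancel' (i (l + 1)) (by simpa using hh)
    have h2 := (Nat.dvd_add_left (Dvd.intro _ rfl)).1 ((Nat.modEq_zero_iff_dvd).1 h1)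
    exact absurd (Nat.le_of_dvd (h.pos _) h2) (by have := h.lt l; omega)

theorem val_same (h : TD y n i b) {m P Q l : ℕ} (h1 : m + P ≡ i l [MOD n l])
    (h2 : ¬ m + P ≡ i (l + 1) [MOD n (l + 1)]) (hPQ : P ≡ Q [MOD n (l + 1)]) :
    y (m + Q) = b l := by
  apply h.val
  · exact ((hPQ.symm.of_dvd (h.dvd l)).add_left m).trans h1
  · intro hh
    exact h2 ((hPQ.add_left m).trans hh)

theorem val_diff (h : TD y n i b) {m P Q l r : ℕ} (h1 : m + P ≡ i l [MOD n l]) (hr : r < l)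
    (hPQ : P ≡ Q [MOD n r]) (hPQ' : ¬ P ≡ Q [MOD n (r + 1)]) :
    y (m + Q) = b r := by
  apply h.val
  · exact (hPQ.symm.add_left m).trans (h.hit_le hr.le h1)
  · intro hh
    exact hPQ' (Nat.ModEq.add_left_cancel' m ((h.hit_le (by omega) h1).trans hh.symm))

end TD

theorem ncard_le_six {x : Seq2} (hps : PatternSturmian x) (τ : Finset ℕ) (hτ : τ.card = 3) :
    (patLang x τ).ncard ≤ 6 := by
  have h3 := hps 3 (by norm_num)
  have : (patLang x τ).ncard ≤ pstar x 3 := by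
    apply le_csSup
    · refine ⟨8, ?_⟩
      rintro c ⟨σ, hσ, rfl⟩
      calc (patLang x σ).ncard ≤ (Set.univ : Set (σ → Fin 2)).ncard :=
            Set.ncard_le_ncard (Set.subset_univ _)
        _ = 8 := by
          rw [Set.ncard_univ, Nat.card_eq_fintype_card]
          simp [hσ]
    · exact ⟨τ, hτ, rfl⟩
  omega

theorem count7 {x : Seq2} (hps : PatternSturmian x) {P S T : ℕ} (hPS : P ≠ S) (hPT : P ≠ T)
    (hST : S ≠ T) (W : Finset (Fin 2 × Fin 2 × Fin 2))
    (hW : ∀ w ∈ W, ∃ m, x (m + P) = w.1 ∧ x (m + S) = w.2.1 ∧ x (m + T) = w.2.2) :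
    W.card ≤ 6 := by
  classical
  let τ : Finset ℕ := {P, S, T}
  have hτ : τ.card = 3 := by
    rw [Finset.card_eq_three]
    exact ⟨P, S, T, hPS, hPT, hST, rfl⟩
  let g : Fin 2 × Fin 2 × Fin 2 → (τ → Fin 2) := fun w s =>
    if (s : ℕ) = P then w.1 else if (s : ℕ) = S then w.2.1 else w.2.2
  have hg : Function.Injective g := by
    rintro ⟨p, q, r⟩ ⟨p', q', r'⟩ he
    have e1 := congrFun he ⟨P, by simp [τ]⟩
    have e2 := congrFun he ⟨S, by simp [τ]⟩
    have e3 := congrFun he ⟨T, by simp [τ]⟩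
    simp [g, hPS.symm, hPT.symm, hST.symm] at e1 e2 e3
    simp [e1, e2, e3]
  have hsub : g '' (W : Set _) ⊆ patLang x τ := by
    rintro _ ⟨w, hw, rfl⟩
    obtain ⟨m, h1, h2, h3⟩ := hW w hw
    refine ⟨m, ?_⟩
    rintro ⟨s, hs⟩
    have hs' : s = P ∨ s = S ∨ s = T := by simpa [τ] using hs
    rcases hs' with rfl | rfl | rfl
    · simp [g, h1]
    · simp [g, h2, hPS.symm]
    · simp [g, h3, hPT.symm, hST.symm]
  have h1 := Set.ncard_le_ncard hsub (Set.toFinite _)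
  rw [Set.ncard_image_of_injective _ hg, Set.ncard_coe_finset] at h1
  exact h1.trans (ncard_le_six hps τ hτ)

theorem mem_orbitClosure_iff {x y : Seq2} :
    y ∈ orbitClosure x ↔ ∀ R, ∃ M, ∀ i < R, x (M + i) = y i := by
  unfold orbitClosure
  constructor
  · intro h R
    rw [mem_closure_iff] at h
    have ho : IsOpen {z : Seq2 | ∀ i ∈ Finset.range R, z i = y i} := by
      have : {z : Seq2 | ∀ i ∈ Finset.range R, z i = y i}
          = ⋂ i ∈ Finset.range R, {z : Seq2 | z i = y i} := by
        ext z; simp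
      rw [this]
      apply isOpen_biInter_finset
      intro i _
      have hc : Continuous (fun z : Seq2 => z i) := continuous_apply i
      exact (isOpen_discrete ({y i} : Set (Fin 2))).preimage hc
    obtain ⟨z, hz, M, rfl⟩ := h _ ho (by simp)
    exact ⟨M, fun i hi => hz i (Finset.mem_range.2 hi)⟩
  · intro h
    choose M hM using h
    apply mem_closure_of_tendsto (f := fun (R : ℕ) (k : ℕ) => x (M R + k)) (b := Filter.atTop)
    · rw [tendsto_pi_nhds]
      intro k
      apply tendsto_const_nhds.congr'
      filter_upwards [Filter.eventually_gt_atTop k] with R hR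
      exact (hM R k hR).symm
    · exact Filter.Eventually.of_forall fun R => ⟨M R, rfl⟩

theorem fin2_of_ne : ∀ {a c d : Fin 2}, a ≠ d → c ≠ d → a = c := by decide

theorem key {x y : Seq2} {n i : ℕ → ℕ} {b : ℕ → Fin 2} (hps : PatternSturmian x)
    (h : TD y n i b) (hmem : ∀ R, ∃ M, ∀ i < R, x (M + i) = y i)
    {P S T k j : ℕ} (hPT : P ≡ T [MOD n k]) (hPT' : ¬ P ≡ T [MOD n (k + 1)])
    (hj : ∀ c, ∃ l, k < l ∧ l < j ∧ b l = c) (hPS : P ≡ S [MOD n j])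
    (hk : ∃ l < k, b l ≠ b k) : x P = x S ∨ x T = b k := by
  by_contra hcon
  push Not at hcon
  obtain ⟨hx1, hx2⟩ := hcon
  have hkj : k + 1 ≤ j := by
    obtain ⟨l, h1, h2, _⟩ := hj 0
    omega
  have nPS : P ≠ S := by rintro rfl; exact hx1 rfl
  have nPT : P ≠ T := by rintro rfl; exact hPT' (Nat.ModEq.refl _)
  have hPSk : P ≡ S [MOD n (k + 1)] := hPS.of_dvd (h.dvd_le hkj)
  have nST : S ≠ T := by rintro rfl; exact hPT' hPSk
  have trans : ∀ w : Fin 2 × Fin 2 × Fin 2,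
      (∃ m, y (m + P) = w.1 ∧ y (m + S) = w.2.1 ∧ y (m + T) = w.2.2) →
      (∃ m, x (m + P) = w.1 ∧ x (m + S) = w.2.1 ∧ x (m + T) = w.2.2) := by
    rintro w ⟨m, h1, h2, h3⟩
    obtain ⟨M, hM⟩ := hmem (m + P + S + T + 1)
    refine ⟨M + m, ?_, ?_, ?_⟩
    · rw [add_assoc, hM _ (by omega), h1]
    · rw [add_assoc, hM _ (by omega), h2]
    · rw [add_assoc, hM _ (by omega), h3]
  obtain ⟨j', hjj', hs1, hs2⟩ := h.level' nPS hPS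
  -- the six words
  have w1 : ∀ c, ∃ m, y (m + P) = c ∧ y (m + S) = c ∧ y (m + T) = b k := by
    intro c
    obtain ⟨l, hl1, hl2, rfl⟩ := hj c
    obtain ⟨m, hm1, hm2⟩ := h.aim P l
    exact ⟨m, h.val_same hm1 hm2 (Nat.ModEq.refl _),
      h.val_same hm1 hm2 (hPS.of_dvd (h.dvd_le (by omega))), h.val_diff hm1 hl1 hPT hPT'⟩
  have w2 : ∀ c, ∃ m, y (m + P) = c ∧ y (m + S) = b j' ∧ y (m + T) = b k := by
    intro c
    obtain ⟨l, hl1, rfl⟩ := h.inf c (j' + 1)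
    obtain ⟨m, hm1, hm2⟩ := h.aim P l
    exact ⟨m, h.val_same hm1 hm2 (Nat.ModEq.refl _),
      h.val_diff hm1 (by omega) hs1 hs2, h.val_diff hm1 (by omega) hPT hPT'⟩
  have w3 : ∀ c, ∃ m, y (m + P) = b j' ∧ y (m + S) = c ∧ y (m + T) = b k := by
    intro c
    obtain ⟨l, hl1, rfl⟩ := h.inf c (j' + 1)
    obtain ⟨m, hm1, hm2⟩ := h.aim S l
    refine ⟨m, h.val_diff hm1 (by omega) hs1.symm (fun hh => hs2 hh.symm),
      h.val_same hm1 hm2 (Nat.ModEq.refl _), h.val_diff hm1 (r := k) (by omega) ?_ ?_⟩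
    · exact (hPSk.symm.of_dvd (h.dvd k)).trans hPT
    · intro hh
      exact hPT' (hPSk.trans hh)
  have w4 : ∀ c, ∃ m, y (m + P) = b k ∧ y (m + S) = b k ∧ y (m + T) = c := by
    intro c
    obtain ⟨l, hl1, rfl⟩ := h.inf c (k + 1)
    obtain ⟨m, hm1, hm2⟩ := h.aim T l
    refine ⟨m, h.val_diff hm1 (by omega) hPT.symm (fun hh => hPT' hh.symm),
      h.val_diff hm1 (r := k) (by omega) ?_ ?_, h.val_same hm1 hm2 (Nat.ModEq.refl _)⟩
    · exact hPT.symm.trans (hPSk.of_dvd (h.dvd k))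
    · intro hh
      exact hPT' (hPSk.trans hh.symm)
  have w5 : ∃ c, c ≠ b k ∧ ∃ m, y (m + P) = c ∧ y (m + S) = c ∧ y (m + T) = c := by
    obtain ⟨l, hl1, hl2⟩ := hk
    obtain ⟨m, hm1, hm2⟩ := h.aim P l
    exact ⟨b l, hl2, m, h.val_same hm1 hm2 (Nat.ModEq.refl _),
      h.val_same hm1 hm2 (hPSk.of_dvd (h.dvd_le (by omega))),
      h.val_same hm1 hm2 (hPT.of_dvd (h.dvd_le (by omega)))⟩
  obtain ⟨c, hc, w5⟩ := w5
  have hxT : x T = c := fin2_of_ne hx2 hc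
  have hw23 : ∀ p q : Fin 2, p ≠ q → ∃ m, y (m + P) = p ∧ y (m + S) = q ∧ y (m + T) = b k := by
    intro p q hpq
    by_cases hq : q = b j'
    · rw [hq]; exact w2 p
    · have : p = b j' := fin2_of_ne hpq (Ne.symm hq)
      rw [this]; exact w3 q
  have hcount := count7 hps nPS nPT nST
    ({(0, 0, b k), (1, 1, b k), (0, 1, b k), (1, 0, b k), (b k, b k, c), (c, c, c),
      (x P, x S, x T)} : Finset (Fin 2 × Fin 2 × Fin 2)) (by
      intro w hw
      simp only [Finset.mem_insert, Finset.mem_singleton] at hw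
      rcases hw with rfl | rfl | rfl | rfl | rfl | rfl | rfl
      · exact trans _ (w1 0)
      · exact trans _ (w1 1)
      · exact trans _ (hw23 0 1 (by decide))
      · exact trans _ (hw23 1 0 (by decide))
      · exact trans _ (w4 c)
      · exact trans _ w5
      · exact ⟨0, by simp⟩)
  rw [hxT] at hcount
  have hdec : ∀ a c p q : Fin 2, c ≠ a → p ≠ q → ¬ (({(0, 0, a), (1, 1, a), (0, 1, a), (1, 0, a),
      (a, a, c), (c, c, c), (p, q, c)} : Finset (Fin 2 × Fin 2 × Fin 2)).card ≤ 6) := by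
    decide
  exact hdec _ _ _ _ hc hx1 hcount

theorem TD.both {y : Seq2} {n i : ℕ → ℕ} {b : ℕ → Fin 2} (h : TD y n i b) (k : ℕ) : ∃ j, k < j ∧ ∀ c, ∃ l, k < l ∧ l < j ∧ b l = c := by
  obtain ⟨l0, h0, e0⟩ := h.inf 0 (k + 1)
  obtain ⟨l1, h1, e1⟩ := h.inf 1 (k + 1)
  refine ⟨l0 + l1 + 1, by omega, ?_⟩
  intro c
  fin_cases c
  · exact ⟨l0, by omega, by omega, e0⟩
  · exact ⟨l1, by omega, by omega, e1⟩

/-- every prefix of x is Toeplitz around some hole P -/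
theorem structured {x y : Seq2} {n i : ℕ → ℕ} {b : ℕ → Fin 2} (hps : PatternSturmian x)
    (h : TD y n i b) (hmem : ∀ R, ∃ M, ∀ i < R, x (M + i) = y i) (K : ℕ) :
    ∃ P, ∀ k < K, ∀ T, P ≡ T [MOD n k] → ¬ P ≡ T [MOD n (k + 1)] → x T = b k := by
  classical
  have hex : ∃ k, b k ≠ b 0 := by
    obtain ⟨k, _, hk⟩ := h.inf (b 0 + 1) 0
    refine ⟨k, ?_⟩
    rw [hk]
    generalize b 0 = a
    revert a
    decide
  let k1 := Nat.find hex
  have hk1 : b k1 ≠ b 0 := Nat.find_spec hex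
  have hk1' : ∀ k < k1, b k = b 0 := fun k hk => not_not.1 (Nat.find_min hex hk)
  have hk1pos : 0 < k1 := by
    rcases Nat.eq_zero_or_pos k1 with h0 | h0
    · rw [h0] at hk1; exact absurd rfl hk1
    · exact h0
  obtain ⟨j0, hj0, hj0'⟩ := h.both k1
  obtain ⟨j, hj, hj'⟩ := h.both (K + k1)
  -- two positions in the hole of level j with distinct letters
  have hu : ∀ c, ∃ u, u ≡ i j [MOD n j] ∧ y u = c := by
    intro c
    obtain ⟨l, hl, rfl⟩ := h.inf c j
    obtain ⟨m, h1, h2⟩ := h.aim 0 l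
    exact ⟨m, h.hit_le hl h1, h.val l m h1 h2⟩
  obtain ⟨u, hu1, hu2⟩ := hu 0
  obtain ⟨v, hv1, hv2⟩ := hu 1
  obtain ⟨M, hM⟩ := hmem (u + v + n j0 + 1)
  have hne : x (M + u) ≠ x (M + v) := by
    rw [hM _ (by omega), hM _ (by omega), hu2, hv2]
    decide
  have huv : M + u ≡ M + v [MOD n j] := (hu1.trans hv1.symm).add_left M
  refine ⟨M + u, ?_⟩
  intro k hk T hT hT'
  by_cases hkk : k1 ≤ k
  · -- good levels
    refine (key hps h hmem hT hT' (j := j) ?_ huv ?_).resolve_left hne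
    · intro c
      obtain ⟨l, h1, h2, h3⟩ := hj' c
      exact ⟨l, by omega, h2, h3⟩
    · by_cases hb : b k = b 0
      · refine ⟨k1, ?_, by rw [hb]; exact hk1⟩
        rcases Nat.lt_or_ge k1 k with h1 | h1
        · exact h1
        · have : k = k1 := by omega
          rw [this] at hb
          exact absurd hb hk1
      · exact ⟨0, by omega, Ne.symm hb⟩
  · -- bad levels
    push Not at hkk
    rw [hk1' k hkk]
    by_contra hxT
    have hxT' : x T = b k1 := fin2_of_ne hxT hk1
    have hkey : ∀ S' T', T ≡ S' [MOD n j0] → T ≡ T' [MOD n k1] → ¬ T ≡ T' [MOD n (k1 + 1)] →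
        x T = x S' ∨ x T' = b k1 := fun S' T' h1 h2 h3 =>
      key hps h hmem h2 h3 hj0' h1 ⟨0, hk1pos, Ne.symm hk1⟩
    have hclass : ∃ c, T ≡ c [MOD n k1] ∧ ∀ T', c ≡ T' [MOD n j0] → x T' = b k1 := by
      by_cases hall : ∀ S', T ≡ S' [MOD n j0] → x S' = b k1
      · exact ⟨T, Nat.ModEq.refl _, hall⟩
      · push Not at hall
        obtain ⟨S', hS, hS'⟩ := hall
        have hTc : T ≡ T + n k1 [MOD n k1] := by simp [Nat.ModEq]
        refine ⟨T + n k1, hTc, ?_⟩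
        intro T' hT'
        refine (hkey S' T' hS ?_ ?_).resolve_left (by rw [hxT']; exact Ne.symm hS')
        · exact hTc.trans (hT'.of_dvd (h.dvd_le (by omega)))
        · intro hh
          have h1 : T + 0 ≡ T + n k1 [MOD n (k1 + 1)] :=
            hh.trans (hT'.of_dvd (h.dvd_le (by omega))).symm
          have h2 := Nat.ModEq.add_left_cancel' T h1
          have h3 := (Nat.modEq_zero_iff_dvd).1 h2.symm
          exact absurd (Nat.le_of_dvd (h.pos _) h3) (by have := h.lt k1; omega)
    obtain ⟨c, hTc, hc⟩ := hclass
    -- an element of the class in the window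
    obtain ⟨r, hr, hr'⟩ : ∃ r < n j0, c ≡ M + r [MOD n j0] := by
      refine ⟨(c + n j0 * M - M) % n j0, Nat.mod_lt _ (h.pos _), ?_⟩
      have hM' : M ≤ n j0 * M := Nat.le_mul_of_pos_left _ (h.pos _)
      have h1 : M + (c + n j0 * M - M) % n j0 ≡ M + (c + n j0 * M - M) [MOD n j0] :=
        (Nat.mod_modEq _ _).add_left M
      have h2 : M + (c + n j0 * M - M) = c + n j0 * M := by omega
      rw [h2] at h1
      have h3 : c + n j0 * M ≡ c [MOD n j0] := by simp [Nat.ModEq]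
      exact (h1.trans h3).symm
    have hyr : y r = b k1 := by
      rw [← hM r (by omega)]
      exact hc _ hr'
    have hur : ¬ u ≡ r [MOD n k1] := by
      intro hh
      have h1 : M + u ≡ T [MOD n k1] :=
        (hh.add_left M).trans ((hTc.trans (hr'.of_dvd (h.dvd_le (by omega)))).symm)
      exact hT' (h1.of_dvd (h.dvd_le (by omega)))
    obtain ⟨q, hq, hq1, hq2⟩ := h.level hur
    have := h.val_diff (m := 0) (P := u) (Q := r) (l := j) (by simpa using hu1) (by omega) hq1 hq2
    rw [zero_add, hyr, hk1' q hq] at this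
    exact hk1 this

/-- every prefix of x occurs in y along a full residue class -/
theorem periodic_occ {x y : Seq2} {n i : ℕ → ℕ} {b : ℕ → Fin 2} (hps : PatternSturmian x)
    (h : TD y n i b) (hmem : ∀ R, ∃ M, ∀ i < R, x (M + i) = y i) (N : ℕ) :
    ∃ w g, 0 < g ∧ ∀ z, z ≡ w [MOD g] → ∀ t < N, y (z + t) = x t := by
  obtain ⟨P, hP⟩ := structured hps h hmem N
  have hN := h.lt_n N
  obtain ⟨T0, hT0, huniq⟩ : ∃ T0, P ≡ T0 [MOD n N] ∧ ∀ t < N, P ≡ t [MOD n N] → t = T0 := by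
    by_cases hex : ∃ t < N, P ≡ t [MOD n N]
    · obtain ⟨t, ht, hPt⟩ := hex
      refine ⟨t, hPt, fun s hs hPs => ?_⟩
      exact Nat.ModEq.eq_of_lt_of_lt (hPs.symm.trans hPt) (by omega) (by omega)
    · push Not at hex
      exact ⟨P, Nat.ModEq.refl _, fun s hs hPs => absurd hPs (hex s hs)⟩
  obtain ⟨l, hl, hbl⟩ := h.inf (x T0) N
  obtain ⟨w, hw1, hw2⟩ := h.aim T0 l
  refine ⟨w, n (l + 1), h.pos _, ?_⟩
  intro z hz t ht
  have hz1 : z + T0 ≡ i l [MOD n l] := ((hz.of_dvd (h.dvd l)).add_right T0).trans hw1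
  have hz2 : ¬ z + T0 ≡ i (l + 1) [MOD n (l + 1)] := fun hh =>
    hw2 ((hz.symm.add_right T0).trans hh)
  by_cases hPt : P ≡ t [MOD n N]
  · rw [huniq t ht hPt, ← hbl]
    exact h.val_same hz1 hz2 (Nat.ModEq.refl _)
  · obtain ⟨k, hk, h1, h2⟩ := h.level hPt
    rw [hP k hk t h1 h2]
    apply h.val_diff hz1 (by omega)
    · exact (hT0.symm.of_dvd (h.dvd_le (by omega))).trans h1
    · intro hh
      exact h2 ((hT0.of_dvd (h.dvd_le (by omega))).trans hh)

/-- a pattern Sturmian sequence whose orbit closure contains a simple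
Toeplitz sequence lies in the orbit closure of that sequence; in particular it is
recurrent, indeed uniformly recurrent. -/
theorem stmt12 (x y : Seq2) (hps : PatternSturmian x)
    (hy : SimpleToeplitz y) (hmem : y ∈ orbitClosure x) :
    x ∈ orbitClosure y ∧ Recurrent x ∧ UniformlyRecurrent x := by
  obtain ⟨n, i, b, h⟩ := exists_TD hy
  have hmem' := mem_orbitClosure_iff.1 hmem
  have hocc := periodic_occ hps h hmem'
  have hUR : UniformlyRecurrent x := by
    intro L
    obtain ⟨w, g, hg, hw⟩ := hocc L
    refine ⟨g + 1, ?_⟩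
    intro N
    obtain ⟨w', g', _, hw'⟩ := hocc (N + 1 + g + L)
    have hw'' := hw' w' (Nat.ModEq.refl _)
    obtain ⟨r, hr, hr'⟩ : ∃ r < g, w' + (N + 1) + r ≡ w [MOD g] := by
      set A := w' + (N + 1) with hA
      have hle : A ≤ g * A := Nat.le_mul_of_pos_left _ hg
      refine ⟨(w + g * A - A) % g, Nat.mod_lt _ hg, ?_⟩
      have h1 : A + (w + g * A - A) % g ≡ A + (w + g * A - A) [MOD g] :=
        (Nat.mod_modEq _ _).add_left A
      have h2 : A + (w + g * A - A) = w + g * A := by omega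
      rw [h2] at h1
      exact h1.trans (by simp [Nat.ModEq])
    refine ⟨N + 1 + r, ⟨by omega, ?_⟩, by omega, by omega⟩
    intro t ht
    rw [← hw _ hr' t ht, ← hw'' (N + 1 + r + t) (by omega)]
    congr 1
    omega
  refine ⟨?_, ?_, hUR⟩
  · rw [mem_orbitClosure_iff]
    intro R
    obtain ⟨w, g, _, hw⟩ := hocc R
    exact ⟨w, hw w (Nat.ModEq.refl _)⟩
  · intro L
    obtain ⟨g, hg⟩ := hUR L
    obtain ⟨m, hm, _⟩ := hg 0
    exact ⟨m, hm⟩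
end
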